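/- For every quasi-isometry φ : Sol → Sol there exist bilipschitz homeomorphisms f, g : ℝ → ℝ and a constant D ≥ 0 such that either d_Sol(φ(x,y,z), (f(x), g(y), z)) ≤ D for all (x,y,z) ∈ ℝ³, or d_Sol(φ(x,y,z), (f(y), g(x), −z)) ≤ D for all (x,y,z) ∈ ℝ³. -/

import Mathlib

open Set

noncomputable section

/-- A path `γ : ℝ → E` is piecewise `C¹` on `[0,1]`. -/
def PiecewiseC1 {E : Type*} [NormedAddCommGroup E] [NormedSpace ℝ E] (γ : ℝ → E) : Prop :=
  ∃ (n : ℕ) (τ : ℕ → ℝ), τ 0 = 0 ∧ τ n = 1 ∧ (∀ i < n, τ i ≤ τ (i + 1)) ∧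
    ∀ i < n, ContDiffOn ℝ 1 γ (Set.Icc (τ i) (τ (i + 1)))

/-- The `Sol` length of a path `γ(t) = (x(t), y(t), z(t))`, for the metric
`ds² = e^{-z} dx² + e^{z} dy² + dz²`. -/
def solLength (γ : ℝ → ℝ × ℝ × ℝ) : ℝ :=
  ∫ t in (0:ℝ)..1,
    Real.sqrt (Real.exp (-(γ t).2.2) * (deriv (fun s => (γ s).1) t) ^ 2 +
      Real.exp ((γ t).2.2) * (deriv (fun s => (γ s).2.1) t) ^ 2 +
      (deriv (fun s => (γ s).2.2) t) ^ 2)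

/-- The left-invariant distance on `Sol = ℝ³`. -/
def dSol (p q : ℝ × ℝ × ℝ) : ℝ :=
  sInf {ℓ : ℝ | ∃ γ : ℝ → ℝ × ℝ × ℝ,
    γ 0 = p ∧ γ 1 = q ∧ PiecewiseC1 γ ∧ solLength γ = ℓ}

/-- Height function on `Sol`. -/
def solHeight (p : ℝ × ℝ × ℝ) : ℝ := p.2.2

/-- `f` is a `(K, C)`-quasi-isometric embedding with respect to the given distances. -/
def IsQIE {X Y : Type*} (dX : X → X → ℝ) (dY : Y → Y → ℝ) (K C : ℝ) (f : X → Y) : Prop :=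
  ∀ a b : X, (1 / K) * dX a b - C ≤ dY (f a) (f b) ∧ dY (f a) (f b) ≤ K * dX a b + C

/-- `f` is a `(K, C)`-quasi-isometry with respect to the given distances. -/
def IsQI {X Y : Type*} (dX : X → X → ℝ) (dY : Y → Y → ℝ) (K C : ℝ) (f : X → Y) : Prop :=
  IsQIE dX dY K C f ∧ ∀ y : Y, ∃ x : X, dY (f x) y ≤ C

/-- Two "metric spaces", given by distance functions, are quasi-isometric. -/
def QuasiIsometric {X Y : Type*} (dX : X → X → ℝ) (dY : Y → Y → ℝ) : Prop :=
  ∃ (K C : ℝ) (f : X → Y), 1 ≤ K ∧ 0 ≤ C ∧ IsQI dX dY K C f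

/-- `f : ℝ → ℝ` is a bilipschitz homeomorphism. -/
def IsBilip (f : ℝ → ℝ) : Prop :=
  Function.Surjective f ∧ ∃ M : ℝ, 1 ≤ M ∧
    ∀ s t : ℝ, (1 / M) * |s - t| ≤ |f s - f t| ∧ |f s - f t| ≤ M * |s - t|

/-!
Up to a multiplicative and an additive constant, the distance of two points of `Sol` is determined
by their heights and by the heights `upJoin` and `downJoin` at which their horizontal coordinates
merge; this gives a combinatorial model of `Sol`.

Let `φ` be a quasi-isometry of the model. The heights along the three remaining sides of a
quadrilateral over a vertical segment satisfy a few inequalities, which are stable under `φ` as soon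
as `φ` stretches no vertical segment more than this one. These inequalities are rigid, so such a
quadrilateral is mapped close to a quadrilateral. By subadditivity vertical segments are stretched
at most by an asymptotically optimal factor `L`. If `L > 1`, a quadrilateral that is stretched by
`L` would force the image of a horizontal chain of `N` bounded steps to climb by `L * log N`,
although `N` such steps can climb by `log N` only. Applied to `φ` and its coarse inverse, this shows
that `φ` is, on large scales, an isometry up to a small relative error. Quadrilaterals then exclude
that the image of a vertical line turns around, so after composition with the flip `(y, x, -z)` the
images of all vertical lines ascend.

An ascending image of the vertical line over `(x, y)` stays close to the vertical line over some
`(f x, g y)`. Two vertical lines diverge at the height given by the logarithm of their displacement,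
whence `|f (x + exp t) - f x|` equals `exp (q t)` up to a bounded factor, where `q t` is the height
to which `φ` maps height `t`. Cutting an interval into `n` equal pieces shows that `q` is a
translation up to a bounded error. Hence `f` and `g` are bilipschitz, and `φ` preserves heights up
to a bounded error.
-/

local notation "ℝ³" => ℝ × ℝ × ℝ

/-! ### Height profiles of quadrilaterals -/

theorem monotoneOn_Icc_of_eventually_le {G : ℝ → ℝ} {a b : ℝ} (hG : ContinuousOn G (Icc a b))
    (h : ∀ s ∈ Ioo a b, ∀ᶠ t in nhdsWithin s (Ioi s), G s ≤ G t) : MonotoneOn G (Icc a b) := by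
  have of_lt : ∀ s t, a < s → s ≤ t → t ≤ b → G s ≤ G t := by
    intro s t hs hst ht
    have hsub : Icc s t ⊆ {w | G s ≤ G w} := by
      refine IsClosed.Icc_subset_of_forall_mem_nhdsWithin ?_ (le_refl (G s)) ?_
      · rw [inter_comm]
        exact (hG.mono (Icc_subset_Icc hs.le ht)).preimage_isClosed_of_isClosed isClosed_Icc
          isClosed_Ici
      · rintro x ⟨hx, hsx, hxt⟩
        filter_upwards [h x ⟨hs.trans_le hsx, hxt.trans_le ht⟩] with w hw
        exact le_trans hx hw
    exact hsub ⟨hst, le_rfl⟩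
  intro s hs t ht hst
  rcases hs.1.lt_or_eq with has | rfl
  · exact of_lt s t has hst ht.2
  rcases hst.eq_or_lt with rfl | hlt
  · rfl
  have hlim : Filter.Tendsto G (nhdsWithin a (Ioc a b)) (nhds (G a)) :=
    (hG a hs).mono_left (nhdsWithin_mono a Ioc_subset_Icc_self)
  rw [nhdsWithin_Ioc_eq_nhdsGT (hlt.trans_le ht.2)] at hlim
  refine le_of_tendsto hlim ?_
  filter_upwards [Ioc_mem_nhdsGT hlt] with w hw
  exact of_lt w t hw.1 hw.2 ht.2

theorem eq_of_forall_eventually_eq {J : ℝ → ℝ} {a b : ℝ} (hab : a ≤ b)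
    (hJ : ContinuousOn J (Icc a b))
    (h : ∀ s ∈ Ioo a b, ∀ᶠ t in nhdsWithin s (Ioi s), J s = J t) : J a = J b := by
  have ha : a ∈ Icc a b := left_mem_Icc.2 hab
  have hb : b ∈ Icc a b := right_mem_Icc.2 hab
  refine le_antisymm ?_ (neg_le_neg_iff.1 ?_)
  · exact monotoneOn_Icc_of_eventually_le hJ (fun s hs => (h s hs).mono fun _ => le_of_eq) ha hb hab
  · exact monotoneOn_Icc_of_eventually_le hJ.neg
      (fun s hs => (h s hs).mono fun t ht => (congrArg Neg.neg ht).le) ha hb hab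

theorem isCompact_setOf_eq_Icc {f g : ℝ → ℝ} {a b : ℝ} (hf : ContinuousOn f (Icc a b))
    (hg : ContinuousOn g (Icc a b)) : IsCompact {t ∈ Icc a b | f t = g t} := by
  have : {t ∈ Icc a b | f t = g t} = Icc a b ∩ (fun t => f t - g t) ⁻¹' {0} := by
    ext t
    simp [sub_eq_zero]
  rw [this]
  exact isCompact_Icc.of_isClosed_subset
    ((hf.sub hg).preimage_isClosed_of_isClosed isClosed_Icc isClosed_singleton) inter_subset_left

theorem continuousOn_of_abs_sub_le {f : ℝ → ℝ} {S : Set ℝ}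
    (hf : ∀ s ∈ S, ∀ t ∈ S, |f s - f t| ≤ |s - t|) : ContinuousOn f S :=
  (LipschitzOnWith.of_dist_le_mul (K := 1) fun s hs t ht => by
    simpa [Real.dist_eq] using hf s hs t ht).continuousOn

theorem exists_tendsto_of_abs_le {ι : Type*} (F : Ultrafilter ι) {v : ι → ℝ} {B : ℝ}
    (hv : ∀ n, |v n| ≤ B) : ∃ l, Filter.Tendsto v F (nhds l) := by
  have hmem : (F.map v : Filter ℝ) ≤ Filter.principal (Icc (-B) B) := by
    rw [Filter.le_principal_iff]
    exact Filter.mem_map.2 (Filter.Eventually.of_forall fun n => abs_le.1 (hv n))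
  obtain ⟨l, -, hl⟩ := isCompact_Icc.ultrafilter_le_nhds _ hmem
  exact ⟨l, hl⟩

/-- The height profile, up to an error `ε`, of a path of length `3` that starts at height `1`, ends
at height `0` and follows three sides of a geodesic quadrilateral with unit sides: `u` is the height
along the path, while `J` and `j` are the heights at which the `x`- and the `y`-coordinate of the
current point merge with those of the fourth side. As long as the path stays well below `J` (well
above `j`) this merging height cannot change, and `gap` says that the path runs far away from the
fourth side. -/
structure QuadrilateralProfile (c ε : ℝ) (u J j : ℝ → ℝ) : Prop where
  lower_le : ∀ t ∈ Icc (0 : ℝ) 3, j t ≤ u t + ε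
  le_upper : ∀ t ∈ Icc (0 : ℝ) 3, u t ≤ J t + ε
  height_lipschitz : ∀ s ∈ Icc (0 : ℝ) 3, ∀ t ∈ Icc (0 : ℝ) 3, |u s - u t| ≤ |s - t| + ε
  upper_lipschitz : ∀ s ∈ Icc (0 : ℝ) 3, ∀ t ∈ Icc (0 : ℝ) 3,
    |(2 * J s - u s) - (2 * J t - u t)| ≤ |s - t| + ε
  lower_lipschitz : ∀ s ∈ Icc (0 : ℝ) 3, ∀ t ∈ Icc (0 : ℝ) 3,
    |(2 * j s - u s) - (2 * j t - u t)| ≤ |s - t| + ε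
  upper_const : ∀ s ∈ Icc (0 : ℝ) 3, ∀ t ∈ Icc (0 : ℝ) 3,
    4 * |s - t| + ε < J s - u s → |J s - J t| ≤ ε
  lower_const : ∀ s ∈ Icc (0 : ℝ) 3, ∀ t ∈ Icc (0 : ℝ) 3,
    4 * |s - t| + ε < u s - j s → |j s - j t| ≤ ε
  gap : ∀ t ∈ Icc (0 : ℝ) 3, c * min t (3 - t) ≤ J t - j t + ε
  initial : |J 0 - 1| ≤ ε ∧ |u 0 - 1| ≤ ε ∧ |j 0 - 1| ≤ ε
  final : |J 3| ≤ ε ∧ |u 3| ≤ ε ∧ |j 3| ≤ ε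

namespace QuadrilateralProfile

variable {c ε : ℝ} {u J j : ℝ → ℝ}

theorem reverse (h : QuadrilateralProfile c ε u J j) :
    QuadrilateralProfile c ε (fun t => 1 - u (3 - t)) (fun t => 1 - j (3 - t))
      (fun t => 1 - J (3 - t)) := by
  have mem : ∀ t ∈ Icc (0 : ℝ) 3, 3 - t ∈ Icc (0 : ℝ) 3 := fun t ht =>
    ⟨by linarith [ht.2], by linarith [ht.1]⟩
  have flip : ∀ s t : ℝ, |(3 - s) - (3 - t)| = |s - t| := fun s t => by
    rw [sub_sub_sub_cancel_left, abs_sub_comm]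
  have lipschitz_flip : ∀ v : ℝ → ℝ, ∀ s t : ℝ,
      |(2 * (1 - v (3 - s)) - (1 - u (3 - s))) - (2 * (1 - v (3 - t)) - (1 - u (3 - t)))|
        = |(2 * v (3 - s) - u (3 - s)) - (2 * v (3 - t) - u (3 - t))| := fun v s t => by
    rw [← abs_neg]
    ring_nf
  have h0 := h.initial
  have h3 := h.final
  constructor
  · intro t ht
    linarith [h.le_upper _ (mem t ht)]
  · intro t ht
    linarith [h.lower_le _ (mem t ht)]
  · intro s hs t ht
    rw [sub_sub_sub_cancel_left, abs_sub_comm, ← flip s t]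
    exact h.height_lipschitz _ (mem s hs) _ (mem t ht)
  · intro s hs t ht
    rw [lipschitz_flip, ← flip s t]
    exact h.lower_lipschitz _ (mem s hs) _ (mem t ht)
  · intro s hs t ht
    rw [lipschitz_flip, ← flip s t]
    exact h.upper_lipschitz _ (mem s hs) _ (mem t ht)
  · intro s hs t ht hst
    rw [sub_sub_sub_cancel_left, abs_sub_comm]
    exact h.lower_const _ (mem s hs) _ (mem t ht) (by rw [flip]; linarith)
  · intro s hs t ht hst
    rw [sub_sub_sub_cancel_left, abs_sub_comm]
    exact h.upper_const _ (mem s hs) _ (mem t ht) (by rw [flip]; linarith)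
  · intro t ht
    have := h.gap _ (mem t ht)
    rw [min_comm, sub_sub_cancel] at this
    linarith
  · simpa using ⟨h3.2.2, h3.2.1, h3.1⟩
  · simpa [abs_sub_comm] using ⟨h0.2.2, h0.2.1, h0.1⟩

section Exact

theorem continuousOn_height (h : QuadrilateralProfile c 0 u J j) : ContinuousOn u (Icc 0 3) :=
  continuousOn_of_abs_sub_le fun s hs t ht => by simpa using h.height_lipschitz s hs t ht

theorem continuousOn_upper (h : QuadrilateralProfile c 0 u J j) : ContinuousOn J (Icc 0 3) := by
  have h2 : ContinuousOn (fun t => 2 * J t - u t) (Icc 0 3) :=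
    continuousOn_of_abs_sub_le fun s hs t ht => by simpa using h.upper_lipschitz s hs t ht
  refine ((h2.add h.continuousOn_height).div_const 2).congr fun t _ => ?_
  simp only [Pi.add_apply]
  ring

theorem continuousOn_lower (h : QuadrilateralProfile c 0 u J j) : ContinuousOn j (Icc 0 3) := by
  have h2 : ContinuousOn (fun t => 2 * j t - u t) (Icc 0 3) :=
    continuousOn_of_abs_sub_le fun s hs t ht => by simpa using h.lower_lipschitz s hs t ht
  refine ((h2.add h.continuousOn_height).div_const 2).congr fun t _ => ?_
  simp only [Pi.add_apply]
  ring

theorem lower_lt_upper (h : QuadrilateralProfile c 0 u J j) (hc : 0 < c) {t : ℝ}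
    (ht : t ∈ Ioo (0 : ℝ) 3) : j t < J t := by
  have hmin : 0 < min t (3 - t) := lt_min ht.1 (by linarith [ht.2])
  linarith [h.gap t (Ioo_subset_Icc_self ht), mul_pos hc hmin]

theorem eventually_upper_eq (h : QuadrilateralProfile c 0 u J j) {s : ℝ}
    (hs : s ∈ Ioo (0 : ℝ) 3) (hlt : u s < J s) :
    ∀ᶠ t in nhdsWithin s (Ioi s), J s = J t := by
  have hpos : s < s + (J s - u s) / 4 := by linarith
  filter_upwards [Ioo_mem_nhdsGT hpos, Ioo_mem_nhdsGT hs.2] with t ht ht3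
  have hst : 4 * |s - t| + 0 < J s - u s := by
    rw [abs_sub_comm, abs_of_pos (by linarith [ht.1])]
    linarith [ht.2]
  exact sub_eq_zero.1 (abs_nonpos_iff.1 (h.upper_const s (Ioo_subset_Icc_self hs) t
    ⟨hs.1.le.trans ht.1.le, ht3.2.le⟩ hst))

theorem eventually_lower_eq (h : QuadrilateralProfile c 0 u J j) {s : ℝ}
    (hs : s ∈ Ioo (0 : ℝ) 3) (hlt : j s < u s) :
    ∀ᶠ t in nhdsWithin s (Ioi s), j s = j t := by
  have hpos : s < s + (u s - j s) / 4 := by linarith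
  filter_upwards [Ioo_mem_nhdsGT hpos, Ioo_mem_nhdsGT hs.2] with t ht ht3
  have hst : 4 * |s - t| + 0 < u s - j s := by
    rw [abs_sub_comm, abs_of_pos (by linarith [ht.1])]
    linarith [ht.2]
  exact sub_eq_zero.1 (abs_nonpos_iff.1 (h.lower_const s (Ioo_subset_Icc_self hs) t
    ⟨hs.1.le.trans ht.1.le, ht3.2.le⟩ hst))

theorem upper_eq_of_forall_ne (h : QuadrilateralProfile c 0 u J j) {a b : ℝ} (ha : 0 ≤ a)
    (hab : a ≤ b) (hb : b ≤ 3) (hne : ∀ t ∈ Ioo a b, J t ≠ u t) : J a = J b :=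
  eq_of_forall_eventually_eq hab (h.continuousOn_upper.mono (Icc_subset_Icc ha hb)) fun t ht =>
    have ht' := Ioo_subset_Ioo ha hb ht
    h.eventually_upper_eq ht' (lt_of_le_of_ne
      (by simpa using h.le_upper t (Ioo_subset_Icc_self ht')) (hne t ht).symm)

theorem lower_eq_of_forall_ne (h : QuadrilateralProfile c 0 u J j) {a b : ℝ} (ha : 0 ≤ a)
    (hab : a ≤ b) (hb : b ≤ 3) (hne : ∀ t ∈ Ioo a b, j t ≠ u t) : j a = j b :=
  eq_of_forall_eventually_eq hab (h.continuousOn_lower.mono (Icc_subset_Icc ha hb)) fun t ht =>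
    have ht' := Ioo_subset_Ioo ha hb ht
    h.eventually_lower_eq ht' (lt_of_le_of_ne
      (by simpa using h.lower_le t (Ioo_subset_Icc_self ht')) (hne t ht))

/-- At every interior time one of `J`, `j` is locally constant to the right, since `j < J`; twice
the other one then changes at most as fast as `u` and time together. -/
theorem monotoneOn_potential (h : QuadrilateralProfile c 0 u J j) (hc : 0 < c) :
    MonotoneOn (fun t => 2 * J t + 2 * j t - u t + t) (Icc 0 3) := by
  refine monotoneOn_Icc_of_eventually_le ((((continuousOn_const.mul h.continuousOn_upper).add
    (continuousOn_const.mul h.continuousOn_lower)).sub h.continuousOn_height).add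
    continuousOn_id) fun s hs => ?_
  have near : ∀ᶠ t in nhdsWithin s (Ioi s), t ∈ Icc (0 : ℝ) 3 ∧ |s - t| = t - s := by
    filter_upwards [Ioo_mem_nhdsGT hs.2] with t ht
    exact ⟨⟨(hs.1.trans ht.1).le, ht.2.le⟩, by rw [abs_sub_comm, abs_of_pos (sub_pos.2 ht.1)]⟩
  rcases lt_or_ge (u s) (J s) with hlt | hle
  · filter_upwards [near, h.eventually_upper_eq hs hlt] with t ⟨ht, habs⟩ hJ
    have := (abs_le.1 (h.lower_lipschitz s (Ioo_subset_Icc_self hs) t ht)).2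
    linarith
  · filter_upwards [near, h.eventually_lower_eq hs ((h.lower_lt_upper hc hs).trans_le hle)]
      with t ⟨ht, habs⟩ hj
    have := (abs_le.1 (h.upper_lipschitz s (Ioo_subset_Icc_self hs) t ht)).2
    linarith

theorem endpoints (h : QuadrilateralProfile c 0 u J j) :
    (J 0 = 1 ∧ u 0 = 1 ∧ j 0 = 1) ∧ (J 3 = 0 ∧ u 3 = 0 ∧ j 3 = 0) := by
  simpa only [abs_nonpos_iff, sub_eq_zero] using And.intro h.initial h.final

/-- On a descent from the last contact `w₁` with `J` to the next contact `w₂` with `j`, both merging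
heights are constant, so the potential, which lies between its equal values `3` at the two
endpoints, forces `J ≤ j` there. -/
theorem not_upper_contact_before_lower (h : QuadrilateralProfile c 0 u J j) (hc : 0 < c) {w w' : ℝ}
    (hw : 0 < w) (hww' : w ≤ w') (hw' : w' < 3) (hJ : J w = u w) : j w' ≠ u w' := by
  intro hj
  obtain ⟨w₁, ⟨⟨hww₁, hw₁w'⟩, hJ₁⟩, hmax⟩ := (isCompact_setOf_eq_Icc
    (h.continuousOn_upper.mono (Icc_subset_Icc hw.le hw'.le))
    (h.continuousOn_height.mono (Icc_subset_Icc hw.le hw'.le))).exists_isGreatest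
    ⟨w, ⟨le_rfl, hww'⟩, hJ⟩
  have hw₁ : 0 < w₁ := hw.trans_le hww₁
  obtain ⟨w₂, ⟨⟨hw₁₂, hw₂w'⟩, hj₂⟩, hmin⟩ := (isCompact_setOf_eq_Icc
    (h.continuousOn_lower.mono (Icc_subset_Icc hw₁.le hw'.le))
    (h.continuousOn_height.mono (Icc_subset_Icc hw₁.le hw'.le))).exists_isLeast
    ⟨w', ⟨hw₁w', le_rfl⟩, hj⟩
  have hw₂ : w₂ < 3 := hw₂w'.trans_lt hw'
  have hJ₁₂ : J w₁ = J w₂ := h.upper_eq_of_forall_ne hw₁.le hw₁₂ hw₂.le fun t ht he =>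
    ht.1.not_ge (hmax ⟨⟨hww₁.trans ht.1.le, ht.2.le.trans hw₂w'⟩, he⟩)
  have hj₁₂ : j w₁ = j w₂ := h.lower_eq_of_forall_ne hw₁.le hw₁₂ hw₂.le fun t ht he =>
    ht.2.not_ge (hmin ⟨⟨ht.1.le, ht.2.le.trans hw₂w'⟩, he⟩)
  have mem₁ : w₁ ∈ Ioo (0 : ℝ) 3 := ⟨hw₁, hw₁₂.trans_lt hw₂⟩
  have mem₂ : w₂ ∈ Icc (0 : ℝ) 3 := ⟨hw₁.le.trans hw₁₂, hw₂.le⟩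
  have start_le := h.monotoneOn_potential hc ⟨le_rfl, by norm_num⟩ (Ioo_subset_Icc_self mem₁) hw₁.le
  have le_end := h.monotoneOn_potential hc mem₂ ⟨by norm_num, le_rfl⟩ hw₂.le
  obtain ⟨⟨J0, u0, j0⟩, J3, u3, j3⟩ := h.endpoints
  simp only [J0, u0, j0, J3, u3, j3] at start_le le_end
  linarith [h.lower_lt_upper hc mem₁]

theorem exists_upper_contact (h : QuadrilateralProfile c 0 u J j) :
    ∃ t ∈ Ioo (0 : ℝ) 3, J t = u t := by
  by_contra! hne
  obtain ⟨⟨J0, -⟩, J3, -⟩ := h.endpoints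
  linarith [h.upper_eq_of_forall_ne le_rfl (by norm_num) le_rfl hne]

theorem exists_lower_contact_eq_zero (h : QuadrilateralProfile c 0 u J j) (hc : 0 < c) :
    ∃ b ∈ Ioo (0 : ℝ) 3, j b = u b ∧ j b = 0 := by
  obtain ⟨⟨-, u0, j0⟩, -, -, j3⟩ := h.endpoints
  obtain ⟨a, ha, hJa⟩ := h.exists_upper_contact
  have hsub : Icc 0 a ⊆ Icc (0 : ℝ) 3 := Icc_subset_Icc le_rfl ha.2.le
  obtain ⟨b, ⟨⟨hb0, hba⟩, hjb⟩, hmax⟩ := (isCompact_setOf_eq_Icc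
    (h.continuousOn_lower.mono hsub) (h.continuousOn_height.mono hsub)).exists_isGreatest
    ⟨0, ⟨le_rfl, ha.1.le⟩, j0.trans u0.symm⟩
  have hb3 : b < 3 := hba.trans_lt ha.2
  have hjb3 : j b = j 3 := h.lower_eq_of_forall_ne hb0 hb3.le le_rfl fun t ht he => by
    rcases le_total t a with hta | hat
    · exact ht.1.not_ge (hmax ⟨⟨hb0.trans ht.1.le, hta⟩, he⟩)
    · exact h.not_upper_contact_before_lower hc ha.1 hat ht.2 hJa he
  refine ⟨b, ⟨lt_of_le_of_ne hb0 ?_, hb3⟩, hjb, hjb3.trans j3⟩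
  rintro rfl
  linarith

theorem exists_upper_contact_eq_one (h : QuadrilateralProfile c 0 u J j) (hc : 0 < c) :
    ∃ a ∈ Ioo (0 : ℝ) 3, J a = u a ∧ J a = 1 := by
  obtain ⟨b, hb, hJu, hJ1⟩ := h.reverse.exists_lower_contact_eq_zero hc
  exact ⟨3 - b, ⟨by linarith [hb.2], by linarith [hb.1]⟩, by linarith, by linarith⟩

/-- The height visits `0` before it visits `1` on its way from `1` to `0`, which leaves no slack in
the total time `3`. -/
theorem rigid (h : QuadrilateralProfile c 0 u J j) (hc : 0 < c) :
    u 1 = 0 ∧ J 1 = 1 ∧ u 2 = 1 ∧ j 2 = 0 := by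
  obtain ⟨⟨J0, u0, -⟩, -, u3, j3⟩ := h.endpoints
  obtain ⟨b, hb, hjb, hjb0⟩ := h.exists_lower_contact_eq_zero hc
  obtain ⟨a, ha, hJa, hJa1⟩ := h.exists_upper_contact_eq_one hc
  have hba : b < a := lt_of_not_ge fun hab =>
    h.not_upper_contact_before_lower hc ha.1 hab hb.2 hJa hjb
  have drop := (abs_le.1 (h.height_lipschitz 0 (by simp) b (Ioo_subset_Icc_self hb))).2
  have climb := (abs_le.1 (h.height_lipschitz a (Ioo_subset_Icc_self ha) b
    (Ioo_subset_Icc_self hb))).2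
  have drop' := (abs_le.1 (h.height_lipschitz a (Ioo_subset_Icc_self ha) 3 (by simp))).2
  rw [zero_sub, abs_neg, abs_of_pos hb.1] at drop
  rw [abs_of_pos (sub_pos.2 hba)] at climb
  rw [abs_sub_comm, abs_of_pos (sub_pos.2 ha.2)] at drop'
  obtain rfl : b = 1 := by linarith
  obtain rfl : a = 2 := by linarith
  refine ⟨by linarith, ?_, by linarith, ?_⟩
  · refine Eq.trans (Eq.symm ?_) J0
    exact h.upper_eq_of_forall_ne le_rfl hb.1.le hb.2.le fun t ht he =>
      h.not_upper_contact_before_lower hc ht.1 ht.2.le hb.2 he hjb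
  · refine Eq.trans ?_ j3
    exact h.lower_eq_of_forall_ne ha.1.le ha.2.le le_rfl fun t ht =>
      h.not_upper_contact_before_lower hc ha.1 ht.1.le ht.2 hJa

end Exact

section Limits

variable {ι : Type*} {F : Filter ι} [F.NeBot] {e : ι → ℝ} {un Jn jn : ι → ℝ → ℝ}

theorem of_tendsto (h : ∀ n, QuadrilateralProfile c (e n) (un n) (Jn n) (jn n))
    (he : Filter.Tendsto e F (nhds ε))
    (hu : ∀ t ∈ Icc (0 : ℝ) 3, Filter.Tendsto (fun n => un n t) F (nhds (u t)))
    (hJ : ∀ t ∈ Icc (0 : ℝ) 3, Filter.Tendsto (fun n => Jn n t) F (nhds (J t)))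
    (hj : ∀ t ∈ Icc (0 : ℝ) 3, Filter.Tendsto (fun n => jn n t) F (nhds (j t))) :
    QuadrilateralProfile c ε u J j where
  lower_le t ht := le_of_tendsto_of_tendsto' (hj t ht) ((hu t ht).add he)
    fun n => (h n).lower_le t ht
  le_upper t ht := le_of_tendsto_of_tendsto' (hu t ht) ((hJ t ht).add he)
    fun n => (h n).le_upper t ht
  height_lipschitz s hs t ht := le_of_tendsto_of_tendsto' ((hu s hs).sub (hu t ht)).abs
    (he.const_add _) fun n => (h n).height_lipschitz s hs t ht
  upper_lipschitz s hs t ht := le_of_tendsto_of_tendsto'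
    ((((hJ s hs).const_mul 2).sub (hu s hs)).sub (((hJ t ht).const_mul 2).sub (hu t ht))).abs
    (he.const_add _) fun n => (h n).upper_lipschitz s hs t ht
  lower_lipschitz s hs t ht := le_of_tendsto_of_tendsto'
    ((((hj s hs).const_mul 2).sub (hu s hs)).sub (((hj t ht).const_mul 2).sub (hu t ht))).abs
    (he.const_add _) fun n => (h n).lower_lipschitz s hs t ht
  upper_const s hs t ht hst := by
    refine le_of_tendsto_of_tendsto ((hJ s hs).sub (hJ t ht)).abs he ?_
    filter_upwards [(he.const_add _).eventually_lt ((hJ s hs).sub (hu s hs)) hst] with n hn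
    exact (h n).upper_const s hs t ht hn
  lower_const s hs t ht hst := by
    refine le_of_tendsto_of_tendsto ((hj s hs).sub (hj t ht)).abs he ?_
    filter_upwards [(he.const_add _).eventually_lt ((hu s hs).sub (hj s hs)) hst] with n hn
    exact (h n).lower_const s hs t ht hn
  gap t ht := ge_of_tendsto' (((hJ t ht).sub (hj t ht)).add he) fun n => (h n).gap t ht
  initial := by
    have h0 : (0 : ℝ) ∈ Icc (0 : ℝ) 3 := by simp
    exact ⟨le_of_tendsto_of_tendsto' ((hJ 0 h0).sub_const 1).abs he fun n => (h n).initial.1,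
      le_of_tendsto_of_tendsto' ((hu 0 h0).sub_const 1).abs he fun n => (h n).initial.2.1,
      le_of_tendsto_of_tendsto' ((hj 0 h0).sub_const 1).abs he fun n => (h n).initial.2.2⟩
  final := by
    have h3 : (3 : ℝ) ∈ Icc (0 : ℝ) 3 := by simp
    exact ⟨le_of_tendsto_of_tendsto' (hJ 3 h3).abs he fun n => (h n).final.1,
      le_of_tendsto_of_tendsto' (hu 3 h3).abs he fun n => (h n).final.2.1,
      le_of_tendsto_of_tendsto' (hj 3 h3).abs he fun n => (h n).final.2.2⟩

end Limits

theorem abs_le (h : QuadrilateralProfile c ε u J j) (hε : ε ≤ 1) {t : ℝ} (ht : t ∈ Icc (0 : ℝ) 3) :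
    |u t| ≤ 8 ∧ |J t| ≤ 8 ∧ |j t| ≤ 8 := by
  have h0 : (0 : ℝ) ∈ Icc (0 : ℝ) 3 := by simp
  obtain ⟨J0, u0, j0⟩ := h.initial
  have bu := h.height_lipschitz t ht 0 h0
  have bJ := h.upper_lipschitz t ht 0 h0
  have bj := h.lower_lipschitz t ht 0 h0
  rw [sub_zero, abs_of_nonneg ht.1] at bu bJ bj
  have ht3 : t ≤ 3 := ht.2
  simp only [_root_.abs_le] at *
  refine ⟨⟨?_, ?_⟩, ⟨?_, ?_⟩, ?_, ?_⟩ <;> linarith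

/-- Stability of `rigid`, by compactness: otherwise profiles with errors `ε → 0` violating the
conclusion would have a limit along an ultrafilter, which contradicts `rigid`. -/
theorem exists_stable {δ : ℝ} (hc : 0 < c) (hδ : 0 < δ) :
    ∃ ε > 0, ∀ u J j : ℝ → ℝ, QuadrilateralProfile c ε u J j →
      |u 1| ≤ δ ∧ |J 1 - 1| ≤ δ ∧ |u 2 - 1| ≤ δ ∧ |j 2| ≤ δ := by
  by_contra! hne
  choose u J j hprofile hbad using fun n : ℕ => hne (1 / ((n : ℝ) + 1)) Nat.one_div_pos_of_nat
  have hε : ∀ n : ℕ, 1 / ((n : ℝ) + 1) ≤ 1 := fun n =>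
    div_le_one_of_le₀ (by linarith [n.cast_nonneg (α := ℝ)]) (by positivity)
  let F : Ultrafilter ℕ := Filter.hyperfilter ℕ
  have hlim : Filter.Tendsto (fun n : ℕ => 1 / ((n : ℝ) + 1)) F (nhds 0) :=
    tendsto_one_div_add_atTop_nhds_zero_nat.mono_left Nat.hyperfilter_le_atTop
  choose! U hU using fun t (ht : t ∈ Icc (0 : ℝ) 3) =>
    exists_tendsto_of_abs_le F fun n => ((hprofile n).abs_le (hε n) ht).1
  choose! V hV using fun t (ht : t ∈ Icc (0 : ℝ) 3) =>
    exists_tendsto_of_abs_le F fun n => ((hprofile n).abs_le (hε n) ht).2.1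
  choose! W hW using fun t (ht : t ∈ Icc (0 : ℝ) 3) =>
    exists_tendsto_of_abs_le F fun n => ((hprofile n).abs_le (hε n) ht).2.2
  obtain ⟨hu1, hJ1, hu2, hj2⟩ := (of_tendsto hprofile hlim hU hV hW).rigid hc
  have h1 : (1 : ℝ) ∈ Icc (0 : ℝ) 3 := by constructor <;> norm_num
  have h2 : (2 : ℝ) ∈ Icc (0 : ℝ) 3 := by constructor <;> norm_num
  have near : ∀ {v : ℕ → ℝ} {l m : ℝ}, Filter.Tendsto v F (nhds l) → l = m →
      ∀ᶠ n in F, |v n - m| ≤ δ := by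
    rintro v l m hv rfl
    filter_upwards [hv.eventually (Metric.ball_mem_nhds l hδ)] with n hn
    exact le_of_lt hn
  obtain ⟨n, n1, n2, n3, n4⟩ := ((near (hU 1 h1) hu1).and ((near (hV 1 h1) hJ1).and
    ((near (hU 2 h2) hu2).and (near (hW 2 h2) hj2)))).exists
  rw [sub_zero] at n1 n4
  exact n4.not_gt (hbad n n1 n2 n3)

end QuadrilateralProfile

/-! ### The combinatorial model of `Sol` -/

section Model

variable (a b x y s t : ℝ) (p q r : ℝ³)

/-- The height function of the combinatorial model of `Sol`: half of the `z`-coordinate, so that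
horizontal displacements at height `h` in the `x`- and the `y`-direction are measured at the scales
`exp h` and `exp (-h)`. -/
def level : ℝ := p.2.2 / 2

/-- The height at which the `x`-coordinates of `p` and `q` merge: up to a bounded error, the lowest
height above both points at which the horizontal scale exceeds their difference. -/
def upJoin : ℝ :=
  Real.log (|p.1 - q.1| + (Real.exp (level p) + Real.exp (level q)))

/-- The height at which the `y`-coordinates of `p` and `q` merge, going down. -/
def downJoin : ℝ :=
  -Real.log (|p.2.1 - q.2.1| + (Real.exp (-level p) + Real.exp (-level q)))

/-- A combinatorial model of half the distance of `Sol`: the length of the path which descends from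
the lower of the two points to `downJoin p q`, climbs to `upJoin p q` and descends to the other
point. -/
def modelDist : ℝ :=
  2 * (upJoin p q - downJoin p q) - |level p - level q|

/-- The height at which the `x`-coordinate of `p` merges with `a`, as in `upJoin`. -/
def xJoin : ℝ := Real.log (|p.1 - a| + Real.exp (level p))

/-- The height at which the `y`-coordinate of `p` merges with `b`, as in `downJoin`. -/
def yJoin : ℝ := -Real.log (|p.2.1 - b| + Real.exp (-level p))

/-- The point of height `t` on the vertical line through `(x, y)`. -/
def atLevel : ℝ³ := (x, y, 2 * t)

/-- The isometry of `Sol` exchanging the two horizontal coordinates. -/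
def solFlip : ℝ³ := (p.2.1, p.1, -p.2.2)

@[simp] theorem atLevel_fst : (atLevel x y t).1 = x := rfl

@[simp] theorem atLevel_snd : (atLevel x y t).2.1 = y := rfl

@[simp] theorem level_atLevel : level (atLevel x y t) = t := mul_div_cancel_left₀ t two_ne_zero

theorem atLevel_level : atLevel p.1 p.2.1 (level p) = p := by
  simp only [atLevel, level, mul_div_cancel₀ p.2.2 (two_ne_zero' ℝ)]

@[simp] theorem level_solFlip : level (solFlip p) = -level p := neg_div 2 p.2.2

@[simp] theorem solFlip_fst : (solFlip p).1 = p.2.1 := rfl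

@[simp] theorem solFlip_snd : (solFlip p).2.1 = p.1 := rfl

@[simp] theorem solFlip_atLevel : solFlip (atLevel x y t) = atLevel y x (-t) := by
  simp [solFlip, atLevel]

@[simp] theorem upJoin_solFlip : upJoin (solFlip p) (solFlip q) = -downJoin p q := by
  simp [upJoin, downJoin]

@[simp] theorem downJoin_solFlip : downJoin (solFlip p) (solFlip q) = -upJoin p q := by
  simp [upJoin, downJoin]

@[simp] theorem xJoin_solFlip : xJoin a (solFlip p) = -yJoin a p := by
  simp [xJoin, yJoin]

@[simp] theorem modelDist_solFlip : modelDist (solFlip p) (solFlip q) = modelDist p q := by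
  simp only [modelDist, upJoin_solFlip, downJoin_solFlip, level_solFlip,
    ← abs_neg (level p - level q)]
  ring_nf

theorem upJoin_comm : upJoin p q = upJoin q p := by
  simp only [upJoin, abs_sub_comm p.1, add_comm (Real.exp (level p))]

theorem downJoin_comm : downJoin p q = downJoin q p := by
  simp only [downJoin, abs_sub_comm p.2.1, add_comm (Real.exp (-level p))]

theorem modelDist_comm : modelDist p q = modelDist q p := by
  simp only [modelDist, upJoin_comm p, downJoin_comm p, abs_sub_comm (level p)]

theorem exp_upJoin :
    Real.exp (upJoin p q) = |p.1 - q.1| + (Real.exp (level p) + Real.exp (level q)) :=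
  Real.exp_log (by positivity)

theorem exp_xJoin : Real.exp (xJoin a p) = |p.1 - a| + Real.exp (level p) :=
  Real.exp_log (by positivity)

theorem exp_neg_downJoin :
    Real.exp (-downJoin p q) =
      |p.2.1 - q.2.1| + (Real.exp (-level p) + Real.exp (-level q)) := by
  rw [downJoin, neg_neg, Real.exp_log (by positivity)]

theorem level_le_upJoin_left : level p ≤ upJoin p q := by
  rw [← Real.exp_le_exp, exp_upJoin]
  linarith [abs_nonneg (p.1 - q.1), Real.exp_pos (level q)]

theorem level_le_upJoin_right : level q ≤ upJoin p q :=
  upJoin_comm q p ▸ level_le_upJoin_left q p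

theorem downJoin_le_level_left : downJoin p q ≤ level p := by
  simpa using level_le_upJoin_left (solFlip p) (solFlip q)

theorem downJoin_le_level_right : downJoin p q ≤ level q :=
  downJoin_comm q p ▸ downJoin_le_level_left q p

theorem level_le_xJoin : level p ≤ xJoin a p := by
  rw [← Real.exp_le_exp, exp_xJoin]
  linarith [abs_nonneg (p.1 - a)]

theorem yJoin_le_level : yJoin b p ≤ level p := by
  simpa using level_le_xJoin b (solFlip p)

theorem xJoin_le_upJoin : xJoin q.1 p ≤ upJoin p q := by
  rw [← Real.exp_le_exp, exp_upJoin, exp_xJoin]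
  linarith [Real.exp_pos (level q)]

theorem downJoin_le_yJoin : downJoin p q ≤ yJoin q.2.1 p := by
  simpa using xJoin_le_upJoin (solFlip p) (solFlip q)

theorem two_le_exp_one : 2 ≤ Real.exp 1 := by
  linarith [Real.add_one_le_exp (1 : ℝ)]

theorem le_max_add_one_of_exp_le_add {a b c : ℝ} (h : Real.exp a ≤ Real.exp b + Real.exp c) :
    a ≤ max b c + 1 := by
  rw [← Real.exp_le_exp, Real.exp_add]
  have hb := Real.exp_le_exp.2 (le_max_left b c)
  have hc := Real.exp_le_exp.2 (le_max_right b c)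
  nlinarith [two_le_exp_one, Real.exp_pos (max b c)]

theorem upJoin_le_max : upJoin p r ≤ max (upJoin p q) (upJoin q r) + 1 := by
  apply le_max_add_one_of_exp_le_add
  simp only [exp_upJoin]
  linarith [abs_sub_le p.1 q.1 r.1, Real.exp_pos (level q)]

theorem xJoin_le_max : xJoin a p ≤ max (upJoin p q) (xJoin a q) + 1 := by
  apply le_max_add_one_of_exp_le_add
  simp only [exp_upJoin, exp_xJoin]
  linarith [abs_sub_le p.1 q.1 a, Real.exp_pos (level q)]

theorem upJoin_le_max_xJoin : upJoin p q ≤ max (xJoin a p) (xJoin a q) + 1 := by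
  apply le_max_add_one_of_exp_le_add
  simp only [exp_upJoin, exp_xJoin, abs_sub_comm q.1]
  linarith [abs_sub_le p.1 a q.1]

theorem min_le_downJoin : min (downJoin p q) (downJoin q r) - 1 ≤ downJoin p r := by
  have := upJoin_le_max (solFlip p) (solFlip q) (solFlip r)
  simp only [upJoin_solFlip, max_neg_neg] at this
  linarith

theorem min_le_downJoin_yJoin : min (yJoin b p) (yJoin b q) - 1 ≤ downJoin p q := by
  have := upJoin_le_max_xJoin b (solFlip p) (solFlip q)
  simp only [upJoin_solFlip, xJoin_solFlip, max_neg_neg] at this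
  linarith

variable {p q}

theorem upJoin_le_of_abs_le {h : ℝ} (hp : level p ≤ h) (hq : level q ≤ h)
    (hx : |p.1 - q.1| ≤ Real.exp h) : upJoin p q ≤ h + 2 := by
  rw [← Real.exp_le_exp, exp_upJoin, Real.exp_add]
  nlinarith [Real.exp_le_exp.2 hp, Real.exp_le_exp.2 hq, Real.add_one_le_exp (2 : ℝ),
    Real.exp_pos h]

theorem le_downJoin_of_abs_le {h : ℝ} (hp : h ≤ level p) (hq : h ≤ level q)
    (hy : |p.2.1 - q.2.1| ≤ Real.exp (-h)) : h - 2 ≤ downJoin p q := by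
  have := upJoin_le_of_abs_le (p := solFlip p) (q := solFlip q) (h := -h)
    (by simpa using hp) (by simpa using hq) hy
  rw [upJoin_solFlip] at this
  linarith

theorem le_upJoin_of_le_abs {h : ℝ} (hx : Real.exp h ≤ |p.1 - q.1|) : h ≤ upJoin p q := by
  rw [← Real.exp_le_exp, exp_upJoin]
  linarith [Real.exp_pos (level p), Real.exp_pos (level q)]

theorem downJoin_le_of_le_abs {h : ℝ} (hy : Real.exp (-h) ≤ |p.2.1 - q.2.1|) :
    downJoin p q ≤ h := by
  simpa using le_upJoin_of_le_abs (p := solFlip p) (q := solFlip q) hy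

variable (p q)

theorem abs_level_sub_le_modelDist : |level p - level q| ≤ modelDist p q := by
  have h1 := level_le_upJoin_left p q
  have h2 := level_le_upJoin_right p q
  have h3 := downJoin_le_level_left p q
  have h4 := downJoin_le_level_right p q
  rw [modelDist]
  rcases abs_cases (level p - level q) with ⟨h, _⟩ | ⟨h, _⟩ <;> rw [h] <;> linarith

theorem modelDist_nonneg : 0 ≤ modelDist p q :=
  (abs_nonneg _).trans (abs_level_sub_le_modelDist p q)

theorem two_upJoin_le : 2 * upJoin p q ≤ modelDist p q + level p + level q := by
  have h1 := downJoin_le_level_left p q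
  have h2 := downJoin_le_level_right p q
  rw [modelDist]
  rcases abs_cases (level p - level q) with ⟨h, _⟩ | ⟨h, _⟩ <;> rw [h] <;> linarith

theorem le_two_downJoin : level p + level q - modelDist p q ≤ 2 * downJoin p q := by
  have := two_upJoin_le (solFlip p) (solFlip q)
  simp only [upJoin_solFlip, modelDist_solFlip, level_solFlip] at this
  linarith

theorem upJoin_sub_level_le_modelDist : upJoin p q - level p ≤ modelDist p q := by
  linarith [two_upJoin_le p q, abs_level_sub_le_modelDist p q, neg_le_abs (level p - level q)]

theorem level_sub_downJoin_le_modelDist : level p - downJoin p q ≤ modelDist p q := by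
  linarith [le_two_downJoin p q, abs_level_sub_le_modelDist p q, le_abs_self (level p - level q)]

theorem upJoin_sub_downJoin_le_modelDist : upJoin p q - downJoin p q ≤ modelDist p q := by
  have := abs_level_sub_le_modelDist p q
  rw [modelDist] at *
  linarith

theorem modelDist_triangle : modelDist p r ≤ modelDist p q + modelDist q r + 4 := by
  have up₁ := two_upJoin_le p q
  have up₂ := two_upJoin_le q r
  have down₁ := le_two_downJoin p q
  have down₂ := le_two_downJoin q r
  have abs₁ := abs_sub_le (level p) (level r) (level q)
  have abs₂ := abs_sub_le (level q) (level p) (level r)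
  rw [abs_sub_comm (level r)] at abs₁
  rw [abs_sub_comm (level q) (level p)] at abs₂
  have le_abs := le_abs_self (level p - level r)
  have neg_le := neg_le_abs (level p - level r)
  have hu := upJoin_le_max p q r
  have hd := min_le_downJoin p q r
  simp only [modelDist] at *
  rcases max_cases (upJoin p q) (upJoin q r) with ⟨hmax, _⟩ | ⟨hmax, _⟩ <;>
  rcases min_cases (downJoin p q) (downJoin q r) with ⟨hmin, _⟩ | ⟨hmin, _⟩ <;>
  rw [hmax] at hu <;> rw [hmin] at hd <;> linarith

theorem abs_two_xJoin_sub_level_sub_le :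
    |(2 * xJoin a p - level p) - (2 * xJoin a q - level q)| ≤ modelDist p q + 2 := by
  have key : ∀ p q, (2 * xJoin a p - level p) - (2 * xJoin a q - level q) ≤
      modelDist p q + 2 := by
    intro p q
    have hx := xJoin_le_max a p q
    have hu := two_upJoin_le p q
    have hq := level_le_xJoin a q
    have hd := abs_level_sub_le_modelDist p q
    have habs := neg_le_abs (level p - level q)
    rcases max_cases (upJoin p q) (xJoin a q) with ⟨h, _⟩ | ⟨h, _⟩ <;> rw [h] at hx <;> linarith
  have hqp := key q p
  rw [modelDist_comm] at hqp
  exact abs_le.2 ⟨by linarith, key p q⟩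

theorem abs_two_yJoin_sub_level_sub_le :
    |(2 * yJoin b p - level p) - (2 * yJoin b q - level q)| ≤ modelDist p q + 2 := by
  have := abs_two_xJoin_sub_level_sub_le b (solFlip p) (solFlip q)
  simp only [xJoin_solFlip, level_solFlip, modelDist_solFlip] at this
  rw [← abs_neg]
  convert this using 2
  ring

variable {a b p q}

theorem abs_xJoin_sub_le_one (h : modelDist p q + 1 < xJoin a p - level p) :
    |xJoin a p - xJoin a q| ≤ 1 := by
  have hp := xJoin_le_max a p q
  have hq := xJoin_le_max a q p
  have hu := upJoin_sub_level_le_modelDist p q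
  rw [upJoin_comm, max_eq_right (by linarith)] at hq
  rcases max_cases (upJoin p q) (xJoin a q) with ⟨hmax, _⟩ | ⟨hmax, _⟩ <;> rw [hmax] at hp
  · linarith
  · exact abs_le.2 ⟨by linarith, by linarith⟩

theorem abs_yJoin_sub_le_one (h : modelDist p q + 1 < level p - yJoin b p) :
    |yJoin b p - yJoin b q| ≤ 1 := by
  have := abs_xJoin_sub_le_one (a := b) (p := solFlip p) (q := solFlip q)
    (by simp only [xJoin_solFlip, level_solFlip, modelDist_solFlip]; linarith)
  simp only [xJoin_solFlip] at this
  rw [← abs_neg]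
  convert this using 2
  ring

theorem modelDist_le_of_near {h : ℝ} (hp : level p = h) (hq : level q = h)
    (hx : |p.1 - q.1| ≤ Real.exp h) (hy : |p.2.1 - q.2.1| ≤ Real.exp (-h)) :
    modelDist p q ≤ 8 := by
  have hu := upJoin_le_of_abs_le hp.le hq.le hx
  have hd := le_downJoin_of_abs_le hp.ge hq.ge hy
  rw [modelDist]
  linarith [abs_nonneg (level p - level q)]

theorem modelDist_atLevel_le : modelDist (atLevel x y s) (atLevel x y t) ≤ |s - t| + 8 := by
  have hu := upJoin_le_of_abs_le (p := atLevel x y s) (q := atLevel x y t) (h := max s t)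
    (by simp) (by simp) (by simpa using (Real.exp_pos _).le)
  have hd := le_downJoin_of_abs_le (p := atLevel x y s) (q := atLevel x y t) (h := min s t)
    (by simp) (by simp) (by simpa using (Real.exp_pos _).le)
  rw [modelDist, level_atLevel, level_atLevel]
  linarith [max_sub_min_eq_abs' s t]

end Model

/-- Quasi-isometric embeddings for the model distance, with the denominator of the lower bound
cleared. -/
def ModelQIE (K C : ℝ) (φ : ℝ³ → ℝ³) : Prop :=
  ∀ p q, modelDist (φ p) (φ q) ≤ K * modelDist p q + C ∧
    modelDist p q ≤ K * modelDist (φ p) (φ q) + C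

namespace ModelQIE

variable {K C : ℝ} {φ : ℝ³ → ℝ³}

theorem flip_comp (h : ModelQIE K C φ) : ModelQIE K C (solFlip ∘ φ) :=
  fun p q => by simpa using h p q

theorem comp_flip (h : ModelQIE K C φ) : ModelQIE K C (φ ∘ solFlip) :=
  fun p q => by simpa using h (solFlip p) (solFlip q)

end ModelQIE

/-! ### Images of quadrilaterals over vertical segments -/

theorem QuadrilateralProfile.of_rescale {c ε N E B : ℝ} {u J j : ℝ → ℝ} (hN : 0 < N)
    (hE : E ≤ N * ε) (lower_le : ∀ t ∈ Icc (0 : ℝ) 3, j t ≤ u t)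
    (le_upper : ∀ t ∈ Icc (0 : ℝ) 3, u t ≤ J t)
    (height_lipschitz : ∀ s ∈ Icc (0 : ℝ) 3, ∀ t ∈ Icc (0 : ℝ) 3, |u s - u t| ≤ N * |s - t| + E)
    (upper_lipschitz : ∀ s ∈ Icc (0 : ℝ) 3, ∀ t ∈ Icc (0 : ℝ) 3,
      |(2 * J s - u s) - (2 * J t - u t)| ≤ N * |s - t| + E)
    (lower_lipschitz : ∀ s ∈ Icc (0 : ℝ) 3, ∀ t ∈ Icc (0 : ℝ) 3,
      |(2 * j s - u s) - (2 * j t - u t)| ≤ N * |s - t| + E)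
    (upper_const : ∀ s ∈ Icc (0 : ℝ) 3, ∀ t ∈ Icc (0 : ℝ) 3,
      N * |s - t| + E < J s - u s → |J s - J t| ≤ E)
    (lower_const : ∀ s ∈ Icc (0 : ℝ) 3, ∀ t ∈ Icc (0 : ℝ) 3,
      N * |s - t| + E < u s - j s → |j s - j t| ≤ E)
    (gap : ∀ t ∈ Icc (0 : ℝ) 3, N * (c * min t (3 - t)) ≤ J t - j t + E)
    (initial : |J 0 - B - N| ≤ E ∧ |u 0 - B - N| ≤ E ∧ |j 0 - B - N| ≤ E)
    (final : |J 3 - B| ≤ E ∧ |u 3 - B| ≤ E ∧ |j 3 - B| ≤ E) :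
    QuadrilateralProfile c ε (fun t => (u t - B) / N) (fun t => (J t - B) / N)
      (fun t => (j t - B) / N) := by
  have hE0 : 0 ≤ E := (abs_nonneg _).trans final.1
  have hε : 0 ≤ ε := nonneg_of_mul_nonneg_right (hE0.trans hE) hN
  have abs_le_add : ∀ {a b r : ℝ}, N * a = b → |b| ≤ N * r + E → |a| ≤ r + ε := by
    intro a b r h hb
    rw [← h, abs_mul, abs_of_pos hN] at hb
    exact le_of_mul_le_mul_left (by linarith) hN
  have abs_le_error : ∀ {a b : ℝ}, N * a = b → |b| ≤ E → |a| ≤ ε := fun h hb => by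
    simpa using abs_le_add (r := 0) h (by simpa using hb)
  have div_le : ∀ {a b : ℝ}, a ≤ b → (a - B) / N ≤ (b - B) / N + ε := fun h => by
    have := div_le_div_of_nonneg_right (sub_le_sub_right h B) hN.le
    linarith
  have lt_of_scaled : ∀ {a b r : ℝ}, 0 ≤ r → 4 * r + ε < (a - B) / N - (b - B) / N →
      N * r + E < a - b := by
    intro a b r hr h
    rw [← sub_div, sub_sub_sub_cancel_right, lt_div_iff₀ hN] at h
    nlinarith
  refine ⟨fun t ht => div_le (lower_le t ht), fun t ht => div_le (le_upper t ht),
    fun s hs t ht => abs_le_add ?_ (height_lipschitz s hs t ht),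
    fun s hs t ht => abs_le_add ?_ (upper_lipschitz s hs t ht),
    fun s hs t ht => abs_le_add ?_ (lower_lipschitz s hs t ht),
    fun s hs t ht h => abs_le_error ?_ (upper_const s hs t ht (lt_of_scaled (abs_nonneg _) h)),
    fun s hs t ht h => abs_le_error ?_ (lower_const s hs t ht (lt_of_scaled (abs_nonneg _) h)),
    fun t ht => ?_, ⟨abs_le_error ?_ initial.1, abs_le_error ?_ initial.2.1,
      abs_le_error ?_ initial.2.2⟩, ⟨abs_le_error ?_ final.1, abs_le_error ?_ final.2.1,
      abs_le_error ?_ final.2.2⟩⟩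
  case refine_6 =>
    refine le_of_mul_le_mul_left ?_ hN
    rw [← sub_div, sub_sub_sub_cancel_right, mul_add, mul_div_cancel₀ _ hN.ne']
    linarith [gap t ht]
  all_goals field_simp <;> ring1

section BoxPath

variable {x y z σ τ : ℝ}

/-- Three sides of a quadrilateral whose fourth side is the vertical segment over `(x, y)` between
the heights `z` and `z + σ`: down, up and down again, with a horizontal step of bounded length at
the times `1` and `2`. -/
def boxPath (x y z σ τ : ℝ) : ℝ³ :=
  if τ ≤ 1 then atLevel (x + Real.exp (z + σ)) y (z + σ * (1 - τ))
  else if τ < 2 then atLevel (x + Real.exp (z + σ)) (y + Real.exp (-z)) (z + σ * (τ - 1))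
  else atLevel x (y + Real.exp (-z)) (z + σ * (3 - τ))

theorem boxPath_one : boxPath x y z σ 1 = atLevel (x + Real.exp (z + σ)) y z := by
  simp [boxPath]

theorem boxPath_two : boxPath x y z σ 2 = atLevel x (y + Real.exp (-z)) (z + σ) := by
  norm_num [boxPath]

theorem modelDist_boxPath_zero_le :
    modelDist (boxPath x y z σ 0) (atLevel x y (z + σ)) ≤ 8 := by
  have h0 : boxPath x y z σ 0 = atLevel (x + Real.exp (z + σ)) y (z + σ) := by simp [boxPath]
  rw [h0]
  exact modelDist_le_of_near (level_atLevel ..) (level_atLevel ..) (by simp)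
    (by simpa using (Real.exp_pos _).le)

theorem modelDist_boxPath_three_le : modelDist (boxPath x y z σ 3) (atLevel x y z) ≤ 8 := by
  have h3 : boxPath x y z σ 3 = atLevel x (y + Real.exp (-z)) z := by norm_num [boxPath]
  rw [h3]
  exact modelDist_le_of_near (level_atLevel ..) (level_atLevel ..)
    (by simpa using (Real.exp_pos _).le) (by simp)

theorem le_modelDist_boxPath_atLevel (hσ : 0 < σ) (hτ : τ ∈ Icc (0 : ℝ) 3) (t : ℝ) :
    2 / 3 * σ * min τ (3 - τ) ≤ modelDist (boxPath x y z σ τ) (atLevel x y t) := by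
  have hmin : 0 ≤ σ * min τ (3 - τ) := mul_nonneg hσ.le (le_min hτ.1 (by linarith [hτ.2]))
  have hleft := mul_le_mul_of_nonneg_left (min_le_left τ (3 - τ)) hσ.le
  have hright := mul_le_mul_of_nonneg_left (min_le_right τ (3 - τ)) hσ.le
  unfold boxPath
  split_ifs
  · set p := atLevel (x + Real.exp (z + σ)) y (z + σ * (1 - τ)) with hp
    have hup : z + σ ≤ upJoin p (atLevel x y t) := le_upJoin_of_le_abs (by simp [hp])
    have := upJoin_sub_level_le_modelDist p (atLevel x y t)
    rw [hp, level_atLevel, ← hp] at this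
    linarith
  · set p := atLevel (x + Real.exp (z + σ)) (y + Real.exp (-z)) (z + σ * (τ - 1)) with hp
    have hup : z + σ ≤ upJoin p (atLevel x y t) := le_upJoin_of_le_abs (by simp [hp])
    have hdown : downJoin p (atLevel x y t) ≤ z := downJoin_le_of_le_abs (by simp [hp])
    linarith [upJoin_sub_downJoin_le_modelDist p (atLevel x y t)]
  · set p := atLevel x (y + Real.exp (-z)) (z + σ * (3 - τ)) with hp
    have hdown : downJoin p (atLevel x y t) ≤ z := downJoin_le_of_le_abs (by simp [hp])
    have := level_sub_downJoin_le_modelDist p (atLevel x y t)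
    rw [hp, level_atLevel, ← hp] at this
    linarith

end BoxPath

theorem modelDist_le_of_glue {f γ γ' : ℝ → ℝ³} {a b c A e e' r : ℝ} (hab : a ≤ b) (hbc : b ≤ c)
    (hf : ∀ s, s ≤ b ∧ f s = γ s ∨ b ≤ s ∧ f s = γ' s)
    (hγ : ∀ s ∈ Icc a b, ∀ t ∈ Icc a b, modelDist (γ s) (γ t) ≤ A * |s - t| + e)
    (hγ' : ∀ s ∈ Icc b c, ∀ t ∈ Icc b c, modelDist (γ' s) (γ' t) ≤ A * |s - t| + e')
    (hb : modelDist (γ b) (γ' b) ≤ r) :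
    ∀ s ∈ Icc a c, ∀ t ∈ Icc a c, modelDist (f s) (f t) ≤ A * |s - t| + (e + r + e' + 8) := by
  intro s hs t ht
  have cross : ∀ s ∈ Icc a b, ∀ t ∈ Icc b c,
      modelDist (γ s) (γ' t) ≤ A * |s - t| + (e + r + e' + 8) := by
    intro s hs t ht
    have hst : |s - t| = |s - b| + |b - t| := by
      rw [abs_of_nonpos, abs_of_nonpos, abs_of_nonpos] <;> linarith [hs.2, ht.1]
    have left := hγ s hs b ⟨hs.1.trans hs.2, le_rfl⟩
    have right := hγ' b ⟨le_rfl, ht.1.trans ht.2⟩ t ht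
    rw [hst, mul_add]
    linarith [modelDist_triangle (γ s) (γ b) (γ' t), modelDist_triangle (γ b) (γ' b) (γ' t)]
  have hr := (modelDist_nonneg _ _).trans hb
  have he : 0 ≤ e := by
    simpa using (modelDist_nonneg _ _).trans (hγ b ⟨hab, le_rfl⟩ b ⟨hab, le_rfl⟩)
  have he' : 0 ≤ e' := by
    simpa using (modelDist_nonneg _ _).trans (hγ' b ⟨le_rfl, hbc⟩ b ⟨le_rfl, hbc⟩)
  rcases hf s with ⟨hsb, hfs⟩ | ⟨hsb, hfs⟩ <;> rcases hf t with ⟨htb, hft⟩ | ⟨htb, hft⟩ <;>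
    rw [hfs, hft]
  · linarith [hγ s ⟨hs.1, hsb⟩ t ⟨ht.1, htb⟩]
  · exact cross s ⟨hs.1, hsb⟩ t ⟨htb, ht.2⟩
  · rw [modelDist_comm, abs_sub_comm]
    exact cross t ⟨ht.1, htb⟩ s ⟨hsb, hs.2⟩
  · linarith [hγ' s ⟨hsb, hs.2⟩ t ⟨htb, ht.2⟩]

/-- The vertical segment of length `16 * σ` centred at height `z` over `(x, y)` is stretched by `φ`,
up to an error `e`, by the largest factor `L` by which vertical segments of that length are
stretched. -/
structure MaximallyStretched (K L e σ : ℝ) (φ : ℝ³ → ℝ³) (x y z : ℝ) : Prop where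
  modelQIE : ModelQIE K e φ
  error : 100 * K ≤ e
  one_le : 1 ≤ L
  le : L ≤ K
  scale_pos : 0 < σ
  vertical : ∀ x y s t : ℝ, |s - t| ≤ 16 * σ →
    modelDist (φ (atLevel x y s)) (φ (atLevel x y t)) ≤ L * |s - t| + e
  stretch : 16 * (L * σ) - e ≤
    level (φ (atLevel x y (z + 8 * σ))) - level (φ (atLevel x y (z - 8 * σ)))

namespace MaximallyStretched

variable {K L e σ x y z : ℝ} {φ : ℝ³ → ℝ³}

theorem factor_pos (h : MaximallyStretched K L e σ φ x y z) : 0 < L := one_pos.trans_le h.one_le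

theorem error_ge (h : MaximallyStretched K L e σ φ x y z) : 100 ≤ e := by
  linarith [h.error, h.one_le, h.le]

theorem modelDist_le_of_near (h : MaximallyStretched K L e σ φ x y z) {p q : ℝ³}
    (hpq : modelDist p q ≤ 8) : modelDist (φ p) (φ q) ≤ 2 * e := by
  nlinarith [(h.modelQIE p q).1, h.error, h.one_le, h.le]

theorem abs_level_sub_le (h : MaximallyStretched K L e σ φ x y z) (x y : ℝ) {s t : ℝ}
    (hst : |s - t| ≤ 16 * σ) :
    |level (φ (atLevel x y s)) - level (φ (atLevel x y t))| ≤ L * |s - t| + e :=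
  (abs_level_sub_le_modelDist _ _).trans (h.vertical x y s t hst)

theorem leg (h : MaximallyStretched K L e σ φ x y z) (x y : ℝ) {s t a b : ℝ}
    (hst : |s - t| ≤ 16) (hab : |a - b| = |s - t|) :
    modelDist (φ (atLevel x y (z + σ * a))) (φ (atLevel x y (z + σ * b))) ≤
      L * σ * |s - t| + e := by
  have hdiff : |z + σ * a - (z + σ * b)| = σ * |s - t| := by
    rw [add_sub_add_left_eq_sub, ← mul_sub, abs_mul, abs_of_pos h.scale_pos, hab]
  have := h.vertical x y (z + σ * a) (z + σ * b) (by rw [hdiff]; nlinarith [h.scale_pos])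
  rwa [hdiff, ← mul_assoc] at this

theorem boxPath_lipschitz (h : MaximallyStretched K L e σ φ x y z) :
    ∀ s ∈ Icc (0 : ℝ) 3, ∀ t ∈ Icc (0 : ℝ) 3,
      modelDist (φ (boxPath x y z σ s)) (φ (boxPath x y z σ t)) ≤
        L * σ * |s - t| + 8 * e := by
  have short : ∀ {a b : ℝ}, 0 ≤ a → b ≤ 3 → ∀ s ∈ Icc a b, ∀ t ∈ Icc a b, |s - t| ≤ 16 :=
    fun ha hb s hs t ht => abs_le.2 ⟨by linarith [hs.1, ht.2], by linarith [hs.2, ht.1]⟩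
  have flip : ∀ c s t : ℝ, |(c - s) - (c - t)| = |s - t| := fun c s t => by
    rw [sub_sub_sub_cancel_left, abs_sub_comm]
  set x₁ := x + Real.exp (z + σ) with hx₁
  set y₁ := y + Real.exp (-z) with hy₁
  have upper_corner : modelDist (φ (atLevel x₁ y₁ (z + σ * (2 - 1))))
      (φ (atLevel x y₁ (z + σ * (3 - 2)))) ≤ 2 * e := by
    norm_num only [mul_one]
    exact h.modelDist_le_of_near (_root_.modelDist_le_of_near (level_atLevel ..)
      (level_atLevel ..) (by simp [hx₁]) (by simpa using (Real.exp_pos _).le))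
  have lower_corner : modelDist (φ (atLevel x₁ y (z + σ * (1 - 1))))
      (φ (atLevel x₁ y₁ (z + σ * (1 - 1)))) ≤ 2 * e := by
    norm_num only [mul_zero, add_zero]
    exact h.modelDist_le_of_near (_root_.modelDist_le_of_near (level_atLevel ..)
      (level_atLevel ..) (by simpa using (Real.exp_pos _).le) (by simp [hy₁]))
  have last_legs := modelDist_le_of_glue one_le_two (by norm_num)
    (f := fun τ => φ (if τ < 2 then atLevel x₁ y₁ (z + σ * (τ - 1))
      else atLevel x y₁ (z + σ * (3 - τ))))
    (fun τ => (lt_or_ge τ 2).imp (fun hτ => ⟨hτ.le, by rw [if_pos hτ]⟩)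
      fun hτ => ⟨hτ, by rw [if_neg hτ.not_gt]⟩)
    (fun s hs t ht => h.leg x₁ y₁ (short zero_le_one (by norm_num) s hs t ht)
      (congrArg _ (sub_sub_sub_cancel_right ..)))
    (fun s hs t ht => h.leg x y₁ (short zero_le_two le_rfl s hs t ht) (flip 3 s t)) upper_corner
  have all_legs := modelDist_le_of_glue zero_le_one (by norm_num)
    (f := fun τ => φ (boxPath x y z σ τ))
    (fun τ => (le_or_gt τ 1).imp (fun hτ => ⟨hτ, by rw [boxPath, if_pos hτ]⟩)
      fun hτ => ⟨hτ.le, by rw [boxPath, if_neg hτ.not_ge]⟩)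
    (fun s hs t ht => h.leg x₁ y (short le_rfl (by norm_num) s hs t ht) (flip 1 s t)) last_legs
    (by norm_num at lower_corner ⊢; exact lower_corner)
  exact fun s hs t ht => (all_legs s hs t ht).trans (by linarith [h.error_ge])

theorem abs_level_axis_sub_le (h : MaximallyStretched K L e σ φ x y z) {t : ℝ}
    (ht : |t - z| ≤ 8 * σ) :
    |level (φ (atLevel x y t)) - level (φ (atLevel x y z)) - L * (t - z)| ≤ 3 * e := by
  have hσ := h.scale_pos
  obtain ⟨ht₁, ht₂⟩ := abs_le.1 ht
  have top : ∀ {s}, z - 8 * σ ≤ s → s ≤ z + 8 * σ →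
      level (φ (atLevel x y (z + 8 * σ))) - level (φ (atLevel x y s)) ≤
        L * (z + 8 * σ - s) + e := fun {s} h₁ h₂ => by
    have := h.abs_level_sub_le x y (s := z + 8 * σ) (t := s)
    rw [abs_of_nonneg (sub_nonneg.2 h₂)] at this
    exact (le_abs_self _).trans (this (by linarith))
  have bottom : ∀ {s}, z - 8 * σ ≤ s → s ≤ z + 8 * σ →
      level (φ (atLevel x y s)) - level (φ (atLevel x y (z - 8 * σ))) ≤
        L * (s - (z - 8 * σ)) + e := fun {s} h₁ h₂ => by
    have := h.abs_level_sub_le x y (s := s) (t := z - 8 * σ)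
    rw [abs_of_nonneg (sub_nonneg.2 h₁)] at this
    exact (le_abs_self _).trans (this (by linarith))
  have top_z := top (s := z) (by linarith) (by linarith)
  have bottom_z := bottom (s := z) (by linarith) (by linarith)
  have top_t := top (s := t) (by linarith) (by linarith)
  have bottom_t := bottom (s := t) (by linarith) (by linarith)
  have := h.stretch
  exact abs_le.2 ⟨by linarith, by linarith⟩

theorem xJoin_axis_le (h : MaximallyStretched K L e σ φ x y z) {t : ℝ} (ht : |t - z| ≤ 8 * σ) :
    xJoin (φ (atLevel x y (z - 8 * σ))).1 (φ (atLevel x y t)) ≤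
      level (φ (atLevel x y t)) + 2 * e := by
  obtain ⟨ht₁, ht₂⟩ := abs_le.1 ht
  have below := h.vertical x y t (z - 8 * σ)
  have above := h.abs_level_sub_le x y (s := z + 8 * σ) (t := t)
  rw [abs_of_nonneg (by linarith : 0 ≤ t - (z - 8 * σ))] at below
  rw [abs_of_nonneg (by linarith : 0 ≤ z + 8 * σ - t)] at above
  have := (le_abs_self _).trans (above (by linarith))
  linarith [xJoin_le_upJoin (φ (atLevel x y t)) (φ (atLevel x y (z - 8 * σ))),
    two_upJoin_le (φ (atLevel x y t)) (φ (atLevel x y (z - 8 * σ))), below (by linarith),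
    h.stretch, h.error_ge]

theorem le_yJoin_axis (h : MaximallyStretched K L e σ φ x y z) {t : ℝ} (ht : |t - z| ≤ 8 * σ) :
    level (φ (atLevel x y t)) - 2 * e ≤
      yJoin (φ (atLevel x y (z + 8 * σ))).2.1 (φ (atLevel x y t)) := by
  obtain ⟨ht₁, ht₂⟩ := abs_le.1 ht
  have above := h.vertical x y t (z + 8 * σ)
  have below := h.abs_level_sub_le x y (s := t) (t := z - 8 * σ)
  rw [abs_of_nonpos (by linarith : t - (z + 8 * σ) ≤ 0)] at above
  rw [abs_of_nonneg (by linarith : 0 ≤ t - (z - 8 * σ))] at below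
  have := (le_abs_self _).trans (below (by linarith))
  linarith [downJoin_le_yJoin (φ (atLevel x y t)) (φ (atLevel x y (z + 8 * σ))),
    le_two_downJoin (φ (atLevel x y t)) (φ (atLevel x y (z + 8 * σ))), above (by linarith),
    h.stretch, h.error_ge]

theorem near_axis (h : MaximallyStretched K L e σ φ x y z) {p : ℝ³} {t : ℝ}
    (ht : |t - z| ≤ 8 * σ) (hp : modelDist p (atLevel x y t) ≤ 8) :
    |xJoin (φ (atLevel x y (z - 8 * σ))).1 (φ p) - level (φ (atLevel x y z)) - L * (t - z)|
        ≤ 10 * e ∧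
      |level (φ p) - level (φ (atLevel x y z)) - L * (t - z)| ≤ 10 * e ∧
      |yJoin (φ (atLevel x y (z + 8 * σ))).2.1 (φ p) - level (φ (atLevel x y z)) - L * (t - z)|
        ≤ 10 * e := by
  have hd := h.modelDist_le_of_near hp
  obtain ⟨axis₁, axis₂⟩ := abs_le.1 (h.abs_level_axis_sub_le ht)
  have hx := h.xJoin_axis_le ht
  have hy := h.le_yJoin_axis ht
  set X := (φ (atLevel x y (z - 8 * σ))).1
  set Y := (φ (atLevel x y (z + 8 * σ))).2.1
  set q := φ (atLevel x y t)
  have hxq := level_le_xJoin X q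
  have hyq := yJoin_le_level Y q
  obtain ⟨level₁, level₂⟩ := abs_le.1 ((abs_level_sub_le_modelDist _ _).trans hd)
  obtain ⟨xJoin₁, xJoin₂⟩ := abs_le.1 (abs_two_xJoin_sub_level_sub_le X (φ p) q)
  obtain ⟨yJoin₁, yJoin₂⟩ := abs_le.1 (abs_two_yJoin_sub_level_sub_le Y (φ p) q)
  have := h.error_ge
  refine ⟨abs_le.2 ⟨?_, ?_⟩, abs_le.2 ⟨?_, ?_⟩, abs_le.2 ⟨?_, ?_⟩⟩ <;> linarith

theorem boxPath_initial (h : MaximallyStretched K L e σ φ x y z) :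
    |xJoin (φ (atLevel x y (z - 8 * σ))).1 (φ (boxPath x y z σ 0)) - level (φ (atLevel x y z)) -
        L * σ| ≤ 10 * e ∧
      |level (φ (boxPath x y z σ 0)) - level (φ (atLevel x y z)) - L * σ| ≤ 10 * e ∧
      |yJoin (φ (atLevel x y (z + 8 * σ))).2.1 (φ (boxPath x y z σ 0)) -
        level (φ (atLevel x y z)) - L * σ| ≤ 10 * e := by
  have hσ := h.scale_pos
  simpa only [add_sub_cancel_left] using h.near_axis (t := z + σ)
    (by rw [add_sub_cancel_left, abs_of_pos hσ]; linarith) modelDist_boxPath_zero_le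

theorem boxPath_final (h : MaximallyStretched K L e σ φ x y z) :
    |xJoin (φ (atLevel x y (z - 8 * σ))).1 (φ (boxPath x y z σ 3)) - level (φ (atLevel x y z))|
        ≤ 10 * e ∧
      |level (φ (boxPath x y z σ 3)) - level (φ (atLevel x y z))| ≤ 10 * e ∧
      |yJoin (φ (atLevel x y (z + 8 * σ))).2.1 (φ (boxPath x y z σ 3)) -
        level (φ (atLevel x y z))| ≤ 10 * e := by
  have hσ := h.scale_pos
  simpa only [sub_self, mul_zero, sub_zero] using h.near_axis (t := z)
    (by rw [sub_self, abs_zero]; linarith) modelDist_boxPath_three_le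

theorem modelDist_axis_le (h : MaximallyStretched K L e σ φ x y z) {p : ℝ³} {t : ℝ}
    (ht : |t - z| ≤ 8 * σ) (hp : level p = level (φ (atLevel x y z)) + L * (t - z)) :
    modelDist p (φ (atLevel x y t)) ≤
      2 * (xJoin (φ (atLevel x y (z - 8 * σ))).1 p -
        yJoin (φ (atLevel x y (z + 8 * σ))).2.1 p) + 21 * e := by
  obtain ⟨axis₁, axis₂⟩ := abs_le.1 (h.abs_level_axis_sub_le ht)
  have hx := h.xJoin_axis_le ht
  have hy := h.le_yJoin_axis ht
  set X := (φ (atLevel x y (z - 8 * σ))).1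
  set Y := (φ (atLevel x y (z + 8 * σ))).2.1
  set q := φ (atLevel x y t)
  have hxp := level_le_xJoin X p
  have hyp := yJoin_le_level Y p
  have := h.error_ge
  have hup : upJoin p q ≤ xJoin X p + 5 * e + 1 := by
    refine (upJoin_le_max_xJoin X _ _).trans (add_le_add_left (max_le ?_ ?_) 1) <;> linarith
  have hdown : yJoin Y p - 5 * e - 1 ≤ downJoin p q := by
    refine le_trans (sub_le_sub_right (le_min ?_ ?_) 1) (min_le_downJoin_yJoin Y _ _) <;> linarith
  rw [modelDist]
  linarith [abs_nonneg (level p - level q)]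

theorem boxPath_gap (h : MaximallyStretched K L e σ φ x y z) (he : 10 * e ≤ σ) {τ : ℝ}
    (hτ : τ ∈ Icc (0 : ℝ) 3) :
    L * σ * (1 / (3 * K ^ 2) * min τ (3 - τ)) ≤
      xJoin (φ (atLevel x y (z - 8 * σ))).1 (φ (boxPath x y z σ τ)) -
        yJoin (φ (atLevel x y (z + 8 * σ))).2.1 (φ (boxPath x y z σ τ)) + 30 * e := by
  have hL := h.factor_pos
  have hσ := h.scale_pos
  have hK : 0 < K := hL.trans_le h.le
  have he₀ := h.error_ge
  set p := φ (boxPath x y z σ τ)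
  obtain ⟨t, ht⟩ : ∃ t, level p - level (φ (atLevel x y z)) = L * (t - z) :=
    ⟨z + (level p - level (φ (atLevel x y z))) / L, by field_simp; ring⟩
  have htz : |t - z| ≤ 8 * σ := by
    have hlip := abs_le.1 ((abs_level_sub_le_modelDist _ _).trans
      (h.boxPath_lipschitz τ hτ 0 (left_mem_Icc.2 zero_le_three)))
    have hinit := abs_le.1 h.boxPath_initial.2.1
    have hLσ : 10 * e ≤ L * σ := by nlinarith [h.one_le]
    have hτ₃ : L * σ * τ ≤ L * σ * 3 := mul_le_mul_of_nonneg_left hτ.2 (by positivity)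
    rw [sub_zero, abs_of_nonneg hτ.1] at hlip
    refine le_of_mul_le_mul_left ?_ hL
    rw [← abs_of_pos hL, ← abs_mul, abs_of_pos hL, ← ht]
    exact abs_le.2 ⟨by linarith, by linarith⟩
  have hfar := (le_modelDist_boxPath_atLevel (x := x) (y := y) (z := z) hσ hτ t).trans
    (h.modelQIE _ (atLevel x y t)).2
  have hnear := mul_le_mul_of_nonneg_left (h.modelDist_axis_le htz (p := p) (by linarith)) hK.le
  have hmin : 0 ≤ 2 / 3 * σ * min τ (3 - τ) :=
    mul_nonneg (by positivity) (le_min hτ.1 (by linarith [hτ.2]))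
  refine le_of_mul_le_mul_left ?_ (by linarith : 0 < 2 * K)
  calc 2 * K * (L * σ * (1 / (3 * K ^ 2) * min τ (3 - τ)))
      = L / K * (2 / 3 * σ * min τ (3 - τ)) := by field_simp
    _ ≤ 2 / 3 * σ * min τ (3 - τ) := mul_le_of_le_one_left hmin ((div_le_one hK).2 h.le)
    _ ≤ _ := by nlinarith [h.one_le, h.le]

theorem boxPath_profile (h : MaximallyStretched K L e σ φ x y z) (he : 10 * e ≤ σ) {ε : ℝ}
    (hε : 30 * e ≤ ε * σ) :
    QuadrilateralProfile (1 / (3 * K ^ 2)) ε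
      (fun τ => (level (φ (boxPath x y z σ τ)) - level (φ (atLevel x y z))) / (L * σ))
      (fun τ => (xJoin (φ (atLevel x y (z - 8 * σ))).1 (φ (boxPath x y z σ τ)) -
        level (φ (atLevel x y z))) / (L * σ))
      (fun τ => (yJoin (φ (atLevel x y (z + 8 * σ))).2.1 (φ (boxPath x y z σ τ)) -
        level (φ (atLevel x y z))) / (L * σ)) := by
  have hσ := h.scale_pos
  have he₀ := h.error_ge
  have lip := h.boxPath_lipschitz
  obtain ⟨x₀, u₀, y₀⟩ := h.boxPath_initial
  obtain ⟨x₃, u₃, y₃⟩ := h.boxPath_final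
  refine .of_rescale (E := 30 * e) (mul_pos h.factor_pos hσ) ?_ (fun _ _ => yJoin_le_level ..)
    (fun _ _ => level_le_xJoin ..) (fun s hs t ht => ?_) (fun s hs t ht => ?_)
    (fun s hs t ht => ?_) (fun s hs t ht hst => ?_) (fun s hs t ht hst => ?_)
    (fun t ht => h.boxPath_gap he ht) ⟨?_, ?_, ?_⟩ ⟨?_, ?_, ?_⟩
  · linarith [mul_le_mul_of_nonneg_left h.one_le (by linarith : 0 ≤ ε * σ)]
  · linarith [abs_level_sub_le_modelDist (φ (boxPath x y z σ s)) (φ (boxPath x y z σ t)),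
      lip s hs t ht]
  · exact (abs_two_xJoin_sub_level_sub_le ..).trans (by linarith [lip s hs t ht])
  · exact (abs_two_yJoin_sub_level_sub_le ..).trans (by linarith [lip s hs t ht])
  · exact (abs_xJoin_sub_le_one (by linarith [lip s hs t ht])).trans (by linarith)
  · exact (abs_yJoin_sub_le_one (by linarith [lip s hs t ht])).trans (by linarith)
  all_goals linarith

end MaximallyStretched

theorem exists_quadrilateral_image {K δ : ℝ} (hK : 1 ≤ K) (hδ : 0 < δ) :
    ∃ ε > 0, ∀ {φ : ℝ³ → ℝ³} {L e σ x y z : ℝ}, MaximallyStretched K L e σ φ x y z →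
      e ≤ ε * σ →
      |level (φ (atLevel (x + Real.exp (z + σ)) y z)) - level (φ (atLevel x y z))| ≤ δ * σ ∧
      |xJoin (φ (atLevel x y (z - 8 * σ))).1 (φ (atLevel (x + Real.exp (z + σ)) y z)) -
        (level (φ (atLevel x y z)) + L * σ)| ≤ δ * σ ∧
      |level (φ (atLevel x (y + Real.exp (-z)) (z + σ))) -
        (level (φ (atLevel x y z)) + L * σ)| ≤ δ * σ ∧
      |yJoin (φ (atLevel x y (z + 8 * σ))).2.1 (φ (atLevel x (y + Real.exp (-z)) (z + σ))) -
        level (φ (atLevel x y z))| ≤ δ * σ := by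
  have hK₀ : 0 < K := one_pos.trans_le hK
  obtain ⟨ε, hε, stable⟩ := QuadrilateralProfile.exists_stable (c := 1 / (3 * K ^ 2))
    (δ := δ / K) (by positivity) (by positivity)
  refine ⟨min (ε / 30) (1 / 10), by positivity, fun {φ L e σ x y z} h he => ?_⟩
  have hσ := h.scale_pos
  have hN : 0 < L * σ := mul_pos h.factor_pos hσ
  have he₁ := he.trans (mul_le_mul_of_nonneg_right (min_le_left _ _) hσ.le)
  have he₂ := he.trans (mul_le_mul_of_nonneg_right (min_le_right _ _) hσ.le)
  obtain ⟨u₁, J₁, u₂, j₂⟩ :=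
    stable _ _ _ (h.boxPath_profile (by linarith) (by linarith : 30 * e ≤ ε * σ))
  rw [boxPath_one] at u₁ J₁
  rw [boxPath_two] at u₂ j₂
  have unscale : ∀ {a b : ℝ}, L * σ * a = b → |a| ≤ δ / K → |b| ≤ δ * σ := by
    intro a b hab ha
    rw [← hab, abs_mul, abs_of_pos hN]
    refine (mul_le_mul_of_nonneg_left ha hN.le).trans ?_
    rw [mul_div_assoc', div_le_iff₀ hK₀]
    nlinarith [mul_le_mul_of_nonneg_right h.le (mul_pos hσ hδ).le]
  have hL := h.factor_pos
  refine ⟨unscale ?_ u₁, unscale ?_ J₁, unscale ?_ u₂, unscale ?_ j₂⟩ <;> field_simp <;> ring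

/-! ### Coarsely Lipschitz maps on vertical lines -/

theorem upJoin_le_of_chain {P : ℕ → ℝ³} {H : ℝ} (n : ℕ)
    (hP : ∀ i < n, upJoin (P i) (P (i + 1)) ≤ H) (hH : ∀ i ≤ n, level (P i) ≤ H) :
    upJoin (P 0) (P n) ≤ H + Real.log (n + 2) := by
  have displacement : ∀ m ≤ n, |(P 0).1 - (P m).1| ≤ m * Real.exp H := by
    intro m
    induction m with
    | zero => simp
    | succ k ih =>
      intro hk
      have hstep := Real.exp_le_exp.2 (hP k (by omega))
      rw [exp_upJoin] at hstep
      push_cast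
      linarith [ih (by omega), abs_sub_le (P 0).1 (P k).1 (P (k + 1)).1,
        Real.exp_pos (level (P k)), Real.exp_pos (level (P (k + 1)))]
  rw [← Real.exp_le_exp, exp_upJoin, Real.exp_add, Real.exp_log (by positivity)]
  linarith [displacement n le_rfl, Real.exp_le_exp.2 (hH 0 n.zero_le),
    Real.exp_le_exp.2 (hH n le_rfl)]

theorem exists_upJoin_le_of_chain {P : ℕ → ℝ³} {R : ℝ} (n : ℕ) (hR : 0 ≤ R)
    (hP : ∀ i < n, modelDist (P i) (P (i + 1)) ≤ R) :
    ∃ i ≤ n, upJoin (P 0) (P n) ≤ level (P i) + R + Real.log (n + 2) := by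
  obtain ⟨i, hi, hmax⟩ := Finset.exists_max_image (Finset.range (n + 1)) (fun i => level (P i))
    ⟨0, by simp⟩
  have level_le : ∀ k ≤ n, level (P k) ≤ level (P i) := fun k hk =>
    hmax k (Finset.mem_range.2 (by omega))
  refine ⟨i, by have := Finset.mem_range.1 hi; omega, upJoin_le_of_chain n ?_ ?_⟩
  · intro k hk
    linarith [upJoin_sub_level_le_modelDist (P k) (P (k + 1)), hP k hk, level_le k hk.le]
  · intro k hk
    linarith [level_le k hk]

theorem exists_log_add_four_le {η : ℝ} (hη : 0 < η) :
    ∃ M, ∀ x : ℝ, 0 ≤ x → Real.log (x + 4) ≤ η * x + M := by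
  refine ⟨4 * η - 1 - Real.log η, fun x hx => ?_⟩
  have hlog := Real.log_le_sub_one_of_pos (by positivity : 0 < η * (x + 4))
  rw [Real.log_mul hη.ne' (by positivity)] at hlog
  linarith

/-- `φ` is coarsely Lipschitz on vertical lines, with factor `a` and additive error `b`. -/
def VerticallyLipschitz (a b : ℝ) (φ : ℝ³ → ℝ³) : Prop :=
  ∀ x y s t, modelDist (φ (atLevel x y s)) (φ (atLevel x y t)) ≤ a * |s - t| + b

theorem ModelQIE.verticallyLipschitz {K C : ℝ} {φ : ℝ³ → ℝ³} (h : ModelQIE K C φ)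
    (hK : 0 ≤ K) : VerticallyLipschitz K (8 * K + C) φ := fun x y s t => by
  linarith [(h (atLevel x y s) (atLevel x y t)).1,
    mul_le_mul_of_nonneg_left (modelDist_atLevel_le x y s t) hK]

namespace VerticallyLipschitz

variable {a b L η : ℝ} {φ : ℝ³ → ℝ³}

theorem flip_comp (h : VerticallyLipschitz a b φ) : VerticallyLipschitz a b (solFlip ∘ φ) :=
  fun x y s t => by simpa using h x y s t

theorem error_nonneg (h : VerticallyLipschitz a b φ) : 0 ≤ b := by
  simpa using (modelDist_nonneg _ _).trans (h 0 0 0 0)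

theorem factor_nonneg (h : VerticallyLipschitz a b φ) : 0 ≤ a := by
  by_contra! ha
  have := (modelDist_nonneg _ _).trans (h 0 0 ((b + 1) / -a) 0)
  rw [sub_zero, abs_of_nonneg (div_nonneg (by linarith [h.error_nonneg]) (by linarith)),
    div_neg, mul_neg, mul_div_cancel₀ _ ha.ne] at this
  linarith

theorem abs_level_sub_le (h : VerticallyLipschitz a b φ) (x y s t : ℝ) :
    |level (φ (atLevel x y s)) - level (φ (atLevel x y t))| ≤ a * |s - t| + b :=
  (abs_level_sub_le_modelDist _ _).trans (h x y s t)

theorem exists_upJoin_le (h : VerticallyLipschitz a b φ) (x y : ℝ) {s t : ℝ} (hst : s ≤ t) :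
    ∃ w ∈ Icc s t, upJoin (φ (atLevel x y s)) (φ (atLevel x y t)) ≤
      level (φ (atLevel x y w)) + (a + b) + Real.log (t - s + 4) := by
  set n := ⌈t - s⌉₊
  have le_n : t - s ≤ n := Nat.le_ceil _
  have n_lt : (n : ℝ) < t - s + 1 := Nat.ceil_lt_add_one (by linarith)
  obtain ⟨i, -, hle⟩ := exists_upJoin_le_of_chain
    (P := fun i : ℕ => φ (atLevel x y (min (s + i) t))) (R := a + b) n
    (add_nonneg h.factor_nonneg h.error_nonneg) fun i _ => by
      have hstep := abs_min_sub_min_le_max (s + i) t (s + (i + 1 : ℕ)) t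
      rw [sub_self, abs_zero, Nat.cast_add_one, add_sub_add_left_eq_sub, sub_add_cancel_left,
        abs_neg, abs_one, max_eq_left zero_le_one] at hstep
      have := h x y (min (s + i) t) (min (s + (i + 1 : ℕ)) t)
      push_cast at this ⊢
      linarith [mul_le_mul_of_nonneg_left hstep h.factor_nonneg]
  simp only [Nat.cast_zero, add_zero, min_eq_left hst] at hle
  rw [min_eq_right (by linarith : t ≤ s + n)] at hle
  refine ⟨min (s + i) t, ⟨le_min (by linarith [(Nat.cast_nonneg i : (0 : ℝ) ≤ i)]) hst,
    min_le_right _ _⟩, hle.trans ?_⟩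
  have hlog : Real.log (n + 2) ≤ Real.log (t - s + 4) :=
    Real.log_le_log (by positivity) (by linarith)
  linarith

theorem exists_le_downJoin (h : VerticallyLipschitz a b φ) (x y : ℝ) {s t : ℝ} (hst : s ≤ t) :
    ∃ w ∈ Icc s t, level (φ (atLevel x y w)) - (a + b) - Real.log (t - s + 4) ≤
      downJoin (φ (atLevel x y s)) (φ (atLevel x y t)) := by
  obtain ⟨w, hw, hle⟩ := h.flip_comp.exists_upJoin_le x y hst
  simp only [Function.comp, upJoin_solFlip, level_solFlip] at hle
  exact ⟨w, hw, by linarith⟩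

-- The image of the segment reaches the heights `upJoin` and `downJoin` of its endpoints up to a
-- logarithmic error.
theorem exists_modelDist_add_le (h : VerticallyLipschitz a b φ) (hη : 0 < η) :
    ∃ M, ∀ x y s t, s ≤ t → ∃ w₁ ∈ Icc s t, ∃ w₂ ∈ Icc s t,
      modelDist (φ (atLevel x y s)) (φ (atLevel x y t)) +
          |level (φ (atLevel x y s)) - level (φ (atLevel x y t))| ≤
        2 * (level (φ (atLevel x y w₁)) - level (φ (atLevel x y w₂))) + η * (t - s) + M := by
  obtain ⟨M, hlog⟩ := exists_log_add_four_le (η := η / 4) (by positivity)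
  refine ⟨4 * (a + b) + 4 * M, fun x y s t hst => ?_⟩
  obtain ⟨w₁, hw₁, hup⟩ := h.exists_upJoin_le x y hst
  obtain ⟨w₂, hw₂, hdown⟩ := h.exists_le_downJoin x y hst
  refine ⟨w₁, hw₁, w₂, hw₂, ?_⟩
  rw [modelDist]
  linarith [hlog (t - s) (by linarith)]

theorem of_level (h : VerticallyLipschitz a b φ) {a' b' : ℝ}
    (hlevel : ∀ x y s t,
      |level (φ (atLevel x y s)) - level (φ (atLevel x y t))| ≤ a' * |s - t| + b')
    (hη : 0 < η) : ∃ b'', VerticallyLipschitz (a' + η) b'' φ := by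
  obtain ⟨M, turns⟩ := h.exists_modelDist_add_le hη
  have key : ∀ x y s t, s ≤ t → modelDist (φ (atLevel x y s)) (φ (atLevel x y t)) ≤
      (a' + η) * |s - t| + (M + 3 * b') := by
    intro x y s t hst
    have height : ∀ {s t}, s ≤ t →
        |level (φ (atLevel x y s)) - level (φ (atLevel x y t))| ≤ a' * (t - s) + b' :=
      fun {s t} hst => by
        simpa only [abs_sub_comm s, abs_of_nonneg (sub_nonneg.2 hst)] using hlevel x y s t
    obtain ⟨w₁, hw₁, w₂, hw₂, hle⟩ := turns x y s t hst
    rw [abs_sub_comm s t, abs_of_nonneg (sub_nonneg.2 hst)]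
    have hends := le_abs_self (level (φ (atLevel x y s)) - level (φ (atLevel x y t)))
    have hends' := neg_le_abs (level (φ (atLevel x y s)) - level (φ (atLevel x y t)))
    rcases le_total w₁ w₂ with hw | hw
    · linarith [(abs_le.1 (height hw₁.1)).1, (abs_le.1 (height hw)).2, (abs_le.1 (height hw₂.2)).1]
    · linarith [(abs_le.1 (height hw₂.1)).2, (abs_le.1 (height hw)).1, (abs_le.1 (height hw₁.2)).2]
  refine ⟨M + 3 * b', fun x y s t => ?_⟩
  rcases le_total s t with hst | hst
  · exact key x y s t hst
  · rw [modelDist_comm, abs_sub_comm]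
    exact key x y t s hst

theorem modelDist_le {R : ℝ} (h : VerticallyLipschitz a b φ)
    (hR : ∀ p q, modelDist p q ≤ 8 → modelDist (φ p) (φ q) ≤ R) (p q : ℝ³) :
    modelDist (φ p) (φ q) ≤ a * modelDist p q + (3 * b + 2 * R + 16) := by
  have key : ∀ p q : ℝ³, level p ≤ level q →
      modelDist (φ p) (φ q) ≤ a * modelDist p q + (3 * b + 2 * R + 16) := by
    intro p q hpq
    set u := upJoin p q with hu
    set d := downJoin p q with hd
    have legs : modelDist p q = (level p - d) + (u - d) + (u - level q) := by
      rw [modelDist, abs_of_nonpos (by linarith)]; ring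
    have descent := h p.1 p.2.1 (level p) d
    have ascent := h p.1 q.2.1 d u
    have descent' := h q.1 q.2.1 u (level q)
    rw [abs_of_nonneg (sub_nonneg.2 (downJoin_le_level_left p q)), atLevel_level] at descent
    rw [abs_sub_comm, abs_of_nonneg (sub_nonneg.2
      ((downJoin_le_level_left p q).trans (level_le_upJoin_left p q)))] at ascent
    rw [abs_of_nonneg (sub_nonneg.2 (level_le_upJoin_right p q)), atLevel_level] at descent'
    have turn : modelDist (φ (atLevel p.1 p.2.1 d)) (φ (atLevel p.1 q.2.1 d)) ≤ R :=
      hR _ _ (modelDist_le_of_near (level_atLevel ..) (level_atLevel ..)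
        (by simpa using (Real.exp_pos _).le) (by
          simp only [atLevel_snd, hd, exp_neg_downJoin]
          linarith [Real.exp_pos (-level p), Real.exp_pos (-level q)]))
    have turn' : modelDist (φ (atLevel p.1 q.2.1 u)) (φ (atLevel q.1 q.2.1 u)) ≤ R :=
      hR _ _ (modelDist_le_of_near (level_atLevel ..) (level_atLevel ..) (by
          simp only [atLevel_fst, hu, exp_upJoin]
          linarith [Real.exp_pos (level p), Real.exp_pos (level q)])
        (by simpa using (Real.exp_pos _).le))
    rw [legs]
    linarith [modelDist_triangle (φ p) (φ (atLevel p.1 p.2.1 d)) (φ q),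
      modelDist_triangle (φ (atLevel p.1 p.2.1 d)) (φ (atLevel p.1 q.2.1 d)) (φ q),
      modelDist_triangle (φ (atLevel p.1 q.2.1 d)) (φ (atLevel p.1 q.2.1 u)) (φ q),
      modelDist_triangle (φ (atLevel p.1 q.2.1 u)) (φ (atLevel q.1 q.2.1 u)) (φ q)]
  rcases le_total (level p) (level q) with hpq | hpq
  · exact key p q hpq
  · rw [modelDist_comm, modelDist_comm p]
    exact key q p hpq

end VerticallyLipschitz

/-! ### Maximally stretched vertical segments -/

theorem ModelQIE.mono {K K' C C' : ℝ} {φ : ℝ³ → ℝ³} (h : ModelQIE K C φ) (hK : K ≤ K')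
    (hC : C ≤ C') : ModelQIE K' C' φ := fun p q =>
  ⟨by linarith [(h p q).1, mul_le_mul_of_nonneg_right hK (modelDist_nonneg p q)],
    by linarith [(h p q).2, mul_le_mul_of_nonneg_right hK (modelDist_nonneg (φ p) (φ q))]⟩

theorem MaximallyStretched.of_le {K L C b c η σ T x y z : ℝ} {φ : ℝ³ → ℝ³}
    (hφ : ModelQIE K C φ) (h : VerticallyLipschitz (L + η) b φ) (hC : 0 ≤ C)
    (hc : 0 ≤ c) (hL : 1 ≤ L) (hLK : L ≤ K) (hη : 0 ≤ η) (hσ : 0 < σ) (hσT : σ ≤ T)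
    (hlong : 16 * (L * T) - c ≤
      level (φ (atLevel x y (z + 8 * T))) - level (φ (atLevel x y (z - 8 * T)))) :
    MaximallyStretched K L (16 * (η * T) + (2 * b + c + C + 100 * K)) σ φ x y z := by
  have hb := h.error_nonneg
  have hησ := mul_le_mul_of_nonneg_left hσT hη
  have hησ₀ : 0 ≤ η * σ := by positivity
  refine ⟨hφ.mono le_rfl (by linarith), by linarith, hL, hLK, hσ, fun x y s t hst => ?_, ?_⟩
  · linarith [h x y s t, mul_le_mul_of_nonneg_left hst hη]
  · have top := (abs_le.1 (h.abs_level_sub_le x y (z + 8 * T) (z + 8 * σ))).2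
    have bottom := (abs_le.1 (h.abs_level_sub_le x y (z - 8 * σ) (z - 8 * T))).2
    rw [abs_of_nonneg (by linarith)] at top bottom
    linarith

theorem modelDist_horizontal_le {x y z r c : ℝ} (hr : 0 ≤ r) (hc : |c| ≤ Real.exp r) :
    modelDist (atLevel (x + c * Real.exp z) y z) (atLevel x y z) ≤ 2 * r + 8 := by
  have hup := upJoin_le_of_abs_le (p := atLevel (x + c * Real.exp z) y z) (q := atLevel x y z)
    (h := z + r) (by simpa using hr) (by simpa using hr) (by
      rw [atLevel_fst, atLevel_fst, add_sub_cancel_left, abs_mul, Real.abs_exp, add_comm,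
        Real.exp_add]
      exact mul_le_mul_of_nonneg_right hc (Real.exp_pos _).le)
  have hdown := le_downJoin_of_abs_le (p := atLevel (x + c * Real.exp z) y z)
    (q := atLevel x y z) (h := z) (level_atLevel ..).ge (level_atLevel ..).ge
    (by simpa using (Real.exp_pos _).le)
  rw [modelDist, level_atLevel, level_atLevel, sub_self, abs_zero]
  linarith

-- The points `x + i * exp z`, `i ≤ N`, are images of each other under steps of bounded length, and
-- `φ` does not raise any of them by more than `H`.
theorem ModelQIE.upJoin_horizontal_le {K C H r x y z : ℝ} {φ : ℝ³ → ℝ³} (hφ : ModelQIE K C φ)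
    (hK : 0 ≤ K) (hC : 0 ≤ C) (hr : 0 ≤ r) (hH : 0 ≤ H) {N : ℕ} (hN : 0 < N)
    (himage : ∀ σ ∈ Icc r (Real.log N),
      level (φ (atLevel (x + Real.exp (z + σ)) y z)) ≤ level (φ (atLevel x y z)) + H) :
    upJoin (φ (atLevel x y z)) (φ (atLevel (x + Real.exp (z + Real.log N)) y z)) ≤
      level (φ (atLevel x y z)) + H + K * (2 * r + 16) + 2 * C + (Real.log N + 2) := by
  have exp_log : ∀ i : ℕ, 0 < i → x + Real.exp (z + Real.log i) = x + i * Real.exp z :=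
    fun i hi => by rw [Real.exp_add, Real.exp_log (by exact_mod_cast hi), mul_comm]
  have height : ∀ i ≤ N, level (φ (atLevel (x + i * Real.exp z) y z)) ≤
      level (φ (atLevel x y z)) + H + K * (2 * r + 8) + C := by
    intro i hi
    rcases le_or_gt (i : ℝ) (Real.exp r) with near | far
    · have hdist := modelDist_horizontal_le (x := x) (y := y) (z := z) hr
        (by rwa [Nat.abs_cast])
      linarith [(hφ (atLevel (x + i * Real.exp z) y z) (atLevel x y z)).1,
        mul_le_mul_of_nonneg_left hdist hK, (le_abs_self _).trans (abs_level_sub_le_modelDist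
          (φ (atLevel (x + i * Real.exp z) y z)) (φ (atLevel x y z)))]
    · have hi₀ : (0 : ℝ) < i := (Real.exp_pos _).trans far
      have := himage (Real.log i) ⟨(Real.le_log_iff_exp_le hi₀).2 far.le,
        Real.log_le_log hi₀ (by exact_mod_cast hi)⟩
      rw [exp_log i (by exact_mod_cast hi₀)] at this
      linarith [(by positivity : 0 ≤ K * (2 * r + 8))]
  have step : ∀ i < N, modelDist (φ (atLevel (x + i * Real.exp z) y z))
      (φ (atLevel (x + (i + 1 : ℕ) * Real.exp z) y z)) ≤ 8 * K + C := by
    intro i _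
    have hdist := modelDist_horizontal_le (x := x + i * Real.exp z) (y := y) (z := z) (c := 1)
      le_rfl (by simp)
    rw [modelDist_comm, add_assoc, ← add_mul, ← Nat.cast_add_one] at hdist
    linarith [(hφ (atLevel (x + i * Real.exp z) y z)
      (atLevel (x + (i + 1 : ℕ) * Real.exp z) y z)).1, mul_le_mul_of_nonneg_left hdist hK]
  obtain ⟨i, hi, hchain⟩ := exists_upJoin_le_of_chain N (by positivity) step
  have hN₁ : (1 : ℝ) ≤ N := by exact_mod_cast hN
  have hlog : Real.log (N + 2) ≤ Real.log N + 2 := by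
    rw [← Real.exp_le_exp, Real.exp_add, Real.exp_log (by positivity), Real.exp_log (by positivity)]
    nlinarith [Real.add_one_le_exp (2 : ℝ)]
  simp only [Nat.cast_zero, zero_mul, add_zero] at hchain
  rw [exp_log N hN]
  linarith [height i hi]

-- The image of the horizontal segment from `(x, y, z)` to `(x + exp (z + log N), y, z)` has to
-- climb by `L * log N`, but its chain of `N` steps only allows it to climb by `log N`.
theorem MaximallyStretched.factor_mul_log_le {K L C e r H x y z : ℝ} {φ : ℝ³ → ℝ³} {N : ℕ}
    (h : MaximallyStretched K L e (Real.log N) φ x y z) (hφ : ModelQIE K C φ) (hC : 0 ≤ C)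
    (hr : 0 ≤ r) (hH : 0 ≤ H) (hN : 0 < N)
    (hlevel : ∀ σ ∈ Icc r (Real.log N),
      level (φ (atLevel (x + Real.exp (z + σ)) y z)) ≤ level (φ (atLevel x y z)) + H)
    (hxJoin : level (φ (atLevel x y z)) + L * Real.log N - H ≤
      xJoin (φ (atLevel x y (z - 8 * Real.log N))).1
        (φ (atLevel (x + Real.exp (z + Real.log N)) y z))) :
    L * Real.log N ≤
      2 * H + 1 + max (K * (2 * r + 16) + 2 * C + (Real.log N + 2)) (2 * e) := by
  have horizontal := hφ.upJoin_horizontal_le (by linarith [h.one_le, h.le]) hC hr hH hN hlevel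
  have hstart := h.xJoin_axis_le (t := z) (by
    rw [sub_self, abs_zero]; linarith [h.scale_pos])
  have hmax := xJoin_le_max (φ (atLevel x y (z - 8 * Real.log N))).1
    (φ (atLevel (x + Real.exp (z + Real.log N)) y z)) (φ (atLevel x y z))
  rw [upJoin_comm] at hmax
  rcases max_cases (upJoin (φ (atLevel x y z)) (φ (atLevel (x + Real.exp (z + Real.log N)) y z)))
    (xJoin (φ (atLevel x y (z - 8 * Real.log N))).1 (φ (atLevel x y z))) with ⟨h', _⟩ | ⟨h', _⟩
  · linarith [le_max_left (K * (2 * r + 16) + 2 * C + (Real.log N + 2)) (2 * e)]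
  · linarith [le_max_right (K * (2 * r + 16) + 2 * C + (Real.log N + 2)) (2 * e)]

theorem no_overstretched_segment {K L C c : ℝ} {b : ℝ → ℝ} (hL : 1 < L) (hLK : L ≤ K)
    (hC : 0 ≤ C) (hc : 0 ≤ c) :
    ∃ T > 0, ∀ φ : ℝ³ → ℝ³, ModelQIE K C φ → (∀ η > 0, VerticallyLipschitz (L + η) (b η) φ) →
      ∀ x y z, level (φ (atLevel x y (z + 8 * T))) - level (φ (atLevel x y (z - 8 * T))) <
        16 * (L * T) - c := by
  have hK : 1 < K := hL.trans_le hLK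
  have hμ : 0 < L - 1 := sub_pos.2 hL
  obtain ⟨ε, hε, image⟩ := exists_quadrilateral_image (δ := (L - 1) / 16) hK.le (by positivity)
  set θ := (L - 1) / (32 * K)
  set ε' := min ε 1
  set η := ε' * θ / 64 with hη
  set E := 2 * b η + c + C + 100 * K
  have hε' : 0 < ε' := lt_min hε one_pos
  have hθ : 0 < θ := by positivity
  have hKθ : K * θ = (L - 1) / 32 := by simp only [θ]; field_simp
  have hθ_le : θ ≤ 1 / 32 := by nlinarith
  have hη₀ : 0 < η := by positivity
  have hlog : Filter.Tendsto (fun N : ℕ => Real.log N) Filter.atTop Filter.atTop :=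
    Real.tendsto_log_atTop.comp tendsto_natCast_atTop_atTop
  obtain ⟨N, ⟨⟨hN, hT⟩, hET⟩, hCT⟩ := (((Filter.eventually_gt_atTop 0).and
    (hlog.eventually_ge_atTop 4)).and
    ((hlog.const_mul_atTop (mul_pos hε' hθ)).eventually_ge_atTop (2 * E))).and
    ((hlog.const_mul_atTop hμ).eventually_ge_atTop (2 * (16 * K + 2 * C + 4))) |>.exists
  set T := Real.log N
  refine ⟨T, by linarith, fun φ hφ hlip x y z => ?_⟩
  by_contra! hlong
  have stretched : ∀ σ ∈ Icc (θ * T) T, MaximallyStretched K L (16 * (η * T) + E) σ φ x y z :=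
    fun σ hσ => .of_le hφ (hlip η hη₀) hC hc hL.le hLK hη₀.le
      (lt_of_lt_of_le (by positivity) hσ.1) hσ.2 hlong
  have error_le : 16 * (η * T) + E ≤ ε' * (θ * T) := by
    have : 16 * (η * T) = ε' * θ * T / 4 := by rw [hη]; ring
    linarith [(by positivity : 0 ≤ ε' * θ * T)]
  have image' := fun σ (hσ : σ ∈ Icc (θ * T) T) => image (stretched σ hσ)
    (error_le.trans (mul_le_mul (min_le_left _ _) hσ.1 (by positivity) hε.le))
  have hT_mem : T ∈ Icc (θ * T) T := ⟨by nlinarith, le_rfl⟩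
  have climb := (stretched T hT_mem).factor_mul_log_le hφ hC (r := θ * T) (H := (L - 1) / 16 * T)
    (by positivity) (by positivity) hN
    (fun σ hσ => by linarith [(abs_le.1 (image' σ hσ).1).2, mul_le_mul_of_nonneg_left hσ.2 hμ.le])
    (by linarith [(abs_le.1 (image' T hT_mem).2.1).1])
  have hKθT : K * (2 * (θ * T) + 16) = (L - 1) / 16 * T + 16 * K := by
    linear_combination 2 * T * hKθ
  have hθT : ε' * (θ * T) ≤ T / 32 := by
    nlinarith [mul_le_of_le_one_left (by positivity : 0 ≤ θ * T) (min_le_right ε 1)]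
  rw [hKθT] at climb
  rcases le_max_iff.1 (sub_le_iff_le_add'.2 climb) with h | h <;> linarith

/-- The largest height difference between the images of two points of a vertical line whose heights
differ by `n`; the triple `p` consists of the two horizontal coordinates and the lower height. -/
def maxStretch (φ : ℝ³ → ℝ³) (n : ℕ) : ℝ :=
  ⨆ p : ℝ³, |level (φ (atLevel p.1 p.2.1 (p.2.2 + n))) - level (φ (atLevel p.1 p.2.1 p.2.2))|

theorem maxStretch_nonneg (φ : ℝ³ → ℝ³) (n : ℕ) : 0 ≤ maxStretch φ n :=
  Real.iSup_nonneg fun _ => abs_nonneg _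

theorem bddBelow_maxStretch_div (φ : ℝ³ → ℝ³) :
    BddBelow (range fun n : ℕ => maxStretch φ n / n) := by
  refine ⟨0, ?_⟩
  rintro _ ⟨n, rfl⟩
  exact div_nonneg (maxStretch_nonneg φ n) n.cast_nonneg

namespace VerticallyLipschitz

variable {a b L η : ℝ} {φ : ℝ³ → ℝ³}

theorem maxStretch_le (h : VerticallyLipschitz a b φ) (n : ℕ) : maxStretch φ n ≤ a * n + b :=
  ciSup_le fun p => by simpa using h.abs_level_sub_le p.1 p.2.1 (p.2.2 + n) p.2.2

theorem le_maxStretch (h : VerticallyLipschitz a b φ) (x y s : ℝ) (n : ℕ) :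
    |level (φ (atLevel x y (s + n))) - level (φ (atLevel x y s))| ≤ maxStretch φ n := by
  refine le_ciSup (f := fun p : ℝ³ =>
    |level (φ (atLevel p.1 p.2.1 (p.2.2 + n))) - level (φ (atLevel p.1 p.2.1 p.2.2))|)
    ⟨a * n + b, ?_⟩ (x, y, s)
  rintro _ ⟨p, rfl⟩
  simpa using h.abs_level_sub_le p.1 p.2.1 (p.2.2 + n) p.2.2

theorem subadditive_maxStretch (h : VerticallyLipschitz a b φ) : Subadditive (maxStretch φ) :=
  fun m n => ciSup_le fun p => by
    rw [Nat.cast_add, ← add_assoc]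
    linarith [h.le_maxStretch p.1 p.2.1 p.2.2 m, h.le_maxStretch p.1 p.2.1 (p.2.2 + m) n,
      abs_sub_le (level (φ (atLevel p.1 p.2.1 (p.2.2 + m + n))))
        (level (φ (atLevel p.1 p.2.1 (p.2.2 + m)))) (level (φ (atLevel p.1 p.2.1 p.2.2)))]

theorem lim_mul_le_maxStretch (h : VerticallyLipschitz a b φ) (n : ℕ) :
    h.subadditive_maxStretch.lim * n ≤ maxStretch φ n := by
  rcases Nat.eq_zero_or_pos n with rfl | hn
  · simpa using maxStretch_nonneg φ 0
  · exact (le_div_iff₀ (by exact_mod_cast hn)).1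
      (h.subadditive_maxStretch.lim_le_div (bddBelow_maxStretch_div φ) hn.ne')

theorem lim_maxStretch_nonneg (h : VerticallyLipschitz a b φ) :
    0 ≤ h.subadditive_maxStretch.lim := by
  rw [Subadditive.lim]
  refine Real.sInf_nonneg ?_
  rintro _ ⟨n, -, rfl⟩
  exact div_nonneg (maxStretch_nonneg φ n) n.cast_nonneg

theorem exists_maxStretch_le (h : VerticallyLipschitz a b φ)
    (hL : h.subadditive_maxStretch.lim < L) : ∃ B, ∀ n : ℕ, maxStretch φ n ≤ L * n + B := by
  have hL₀ := h.lim_maxStretch_nonneg.trans hL.le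
  have ha := h.factor_nonneg
  have hb := h.error_nonneg
  obtain ⟨m, hm⟩ : ∃ m : ℕ, ∀ n ≥ m, maxStretch φ n / n < L := Filter.eventually_atTop.1
    ((h.subadditive_maxStretch.tendsto_lim (bddBelow_maxStretch_div φ)).eventually_lt_const hL)
  refine ⟨a * m + b, fun n => ?_⟩
  have hLn : 0 ≤ L * n := by positivity
  have ham : 0 ≤ a * m := by positivity
  rcases Nat.eq_zero_or_pos n with rfl | hn
  · linarith [h.maxStretch_le 0, (by simp : a * ((0 : ℕ) : ℝ) = 0)]
  rcases le_or_gt m n with hmn | hmn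
  · linarith [(div_lt_iff₀ (by exact_mod_cast hn)).1 (hm n hmn)]
  · linarith [h.maxStretch_le n,
      mul_le_mul_of_nonneg_left (Nat.cast_le (α := ℝ).2 hmn.le) ha]

theorem exists_level_lipschitz (h : VerticallyLipschitz a b φ)
    (hL : h.subadditive_maxStretch.lim < L) :
    ∃ b', ∀ x y s t,
      |level (φ (atLevel x y s)) - level (φ (atLevel x y t))| ≤ L * |s - t| + b' := by
  obtain ⟨B, hB⟩ := h.exists_maxStretch_le hL
  have hL₀ := h.lim_maxStretch_nonneg.trans hL.le
  have key : ∀ x y s t, s ≤ t → |level (φ (atLevel x y t)) - level (φ (atLevel x y s))| ≤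
      L * |t - s| + (B + a + b) := by
    intro x y s t hst
    set m := ⌊t - s⌋₊
    have hm : (m : ℝ) ≤ t - s := Nat.floor_le (by linarith)
    have hm' : t - s < m + 1 := Nat.lt_floor_add_one _
    have hrest := h.abs_level_sub_le x y t (s + m)
    rw [abs_of_nonneg (by linarith : 0 ≤ t - (s + m))] at hrest
    rw [abs_of_nonneg (by linarith : 0 ≤ t - s)]
    linarith [(h.le_maxStretch x y s m).trans (hB m), mul_le_mul_of_nonneg_left hm hL₀,
      mul_le_mul_of_nonneg_left (by linarith : t - (s + m) ≤ 1) h.factor_nonneg,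
      abs_sub_le (level (φ (atLevel x y t))) (level (φ (atLevel x y (s + m))))
        (level (φ (atLevel x y s)))]
  refine ⟨B + a + b, fun x y s t => ?_⟩
  rcases le_total s t with hst | hst
  · rw [abs_sub_comm, abs_sub_comm s]
    exact key x y s t hst
  · exact key x y t s hst

theorem of_lim_lt (h : VerticallyLipschitz a b φ) (hL : h.subadditive_maxStretch.lim < L) :
    ∃ b', VerticallyLipschitz L b' φ := by
  obtain ⟨L', hL', hL'L⟩ := exists_between hL
  obtain ⟨B, hB⟩ := h.exists_level_lipschitz hL'
  simpa using h.of_level hB (sub_pos.2 hL'L)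

end VerticallyLipschitz

namespace ModelQIE

variable {K C : ℝ} {φ : ℝ³ → ℝ³}

theorem lim_maxStretch_le_one (hφ : ModelQIE K C φ) (hK : 1 ≤ K) (hC : 0 ≤ C) :
    (hφ.verticallyLipschitz (zero_le_one.trans hK)).subadditive_maxStretch.lim ≤ 1 := by
  have hv := hφ.verticallyLipschitz (zero_le_one.trans hK)
  set L := (hφ.verticallyLipschitz (zero_le_one.trans hK)).subadditive_maxStretch.lim
  by_contra! hL
  have hLK : L ≤ 9 * K + C := by
    have := (hv.lim_mul_le_maxStretch 1).trans (hv.maxStretch_le 1)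
    rw [Nat.cast_one, mul_one, mul_one] at this
    linarith
  choose! b hb using fun η (hη : 0 < η) => hv.of_lim_lt (lt_add_of_pos_right L hη)
  obtain ⟨T, hT, hno⟩ := no_overstretched_segment (C := C) (c := 1 + (9 * K + C)) (b := b) hL hLK
    hC (by linarith)
  set n := ⌈16 * T⌉₊
  have le_n : 16 * T ≤ n := Nat.le_ceil _
  have n_lt : (n : ℝ) < 16 * T + 1 := Nat.ceil_lt_add_one (by positivity)
  obtain ⟨⟨x, y, s⟩, hp⟩ := exists_lt_of_lt_ciSup (sub_one_lt (maxStretch φ n))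
  have hend := hv.abs_level_sub_le x y (s + n) (s + 16 * T)
  rw [abs_of_nonneg (by linarith : 0 ≤ s + n - (s + 16 * T))] at hend
  have not_up := hno φ (hφ.mono (by linarith) le_rfl) hb x y (s + 8 * T)
  have not_down := hno (solFlip ∘ φ) (hφ.flip_comp.mono (by linarith) le_rfl)
    (fun η hη => (hb η hη).flip_comp) x y (s + 8 * T)
  rw [show s + 8 * T + 8 * T = s + 16 * T by ring, add_sub_cancel_right] at not_up not_down
  simp only [Function.comp, level_solFlip] at not_down
  linarith [abs_lt.2 ⟨by linarith, not_up⟩, hv.lim_mul_le_maxStretch n,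
    mul_le_mul_of_nonneg_left (by linarith : s + n - (s + 16 * T) ≤ 1) (by linarith : 0 ≤ K),
    mul_le_mul_of_nonneg_left le_n (by linarith : 0 ≤ L),
    abs_sub_le (level (φ (atLevel x y (s + n)))) (level (φ (atLevel x y (s + 16 * T))))
      (level (φ (atLevel x y s)))]

theorem exists_modelDist_le (hφ : ModelQIE K C φ) (hK : 1 ≤ K) (hC : 0 ≤ C) {η : ℝ}
    (hη : 0 < η) :
    ∃ C', 0 ≤ C' ∧ ∀ p q, modelDist (φ p) (φ q) ≤ (1 + η) * modelDist p q + C' := by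
  obtain ⟨b, hb⟩ := (hφ.verticallyLipschitz (zero_le_one.trans hK)).of_lim_lt
    ((hφ.lim_maxStretch_le_one hK hC).trans_lt (lt_add_of_pos_right 1 hη))
  refine ⟨3 * b + 2 * (8 * K + C) + 16, by linarith [hb.error_nonneg],
    hb.modelDist_le fun p q h => ?_⟩
  linarith [(hφ p q).1, mul_le_mul_of_nonneg_left h (by linarith : 0 ≤ K)]

end ModelQIE

/-! ### Orientation of vertical lines -/

/-- The image of the vertical line through `(x, y)` rises to height `s` at unit speed and descends
again, although up to distance `40 * T` the map `φ` is an isometry up to the error `e`. -/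
structure SharpTurn (K e T : ℝ) (φ : ℝ³ → ℝ³) (x y s : ℝ) : Prop where
  modelQIE : ModelQIE K e φ
  one_le : 1 ≤ K
  error : 100 * K ≤ e
  scale_pos : 0 < T
  isometric : ∀ p q, modelDist p q ≤ 40 * T → |modelDist (φ p) (φ q) - modelDist p q| ≤ e
  below : 16 * T - e ≤ level (φ (atLevel x y s)) - level (φ (atLevel x y (s - 16 * T)))
  above : 16 * T - e ≤ level (φ (atLevel x y s)) - level (φ (atLevel x y (s + 16 * T)))

theorem modelDist_atLevel_add_exp_le (x y z : ℝ) {T : ℝ} (hT : 0 ≤ T) :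
    modelDist (atLevel (x + Real.exp (z + T)) y z) (atLevel x y (z + T)) ≤ T + 8 := by
  have hup := upJoin_le_of_abs_le (p := atLevel (x + Real.exp (z + T)) y z)
    (q := atLevel x y (z + T)) (h := z + T) (by simpa using hT) (level_atLevel ..).le (by simp)
  have hdown := le_downJoin_of_abs_le (p := atLevel (x + Real.exp (z + T)) y z)
    (q := atLevel x y (z + T)) (h := z) (level_atLevel ..).ge (by simpa using hT)
    (by simpa using (Real.exp_pos _).le)
  rw [modelDist, level_atLevel, level_atLevel, sub_add_cancel_left, abs_neg, abs_of_nonneg hT]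
  linarith

theorem modelDist_atLevel_add_exp_neg_le (x y z : ℝ) {T : ℝ} (hT : 0 ≤ T) :
    modelDist (atLevel x (y + Real.exp (-z)) (z + T)) (atLevel x y z) ≤ T + 8 := by
  simpa only [← modelDist_solFlip (atLevel x _ _), solFlip_atLevel, neg_add, neg_add_cancel_right]
    using modelDist_atLevel_add_exp_le y x (-z + -T) hT

theorem modelDist_transverse_mem_Icc (x y : ℝ) {z w T : ℝ} (hT : 0 ≤ T) (hzw : z + T ≤ w) :
    modelDist (atLevel x (y + Real.exp (-z)) (z + T)) (atLevel (x + Real.exp (w + T)) y w) ∈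
      Icc (w - z + 3 * T) (w - z + 3 * T + 32) := by
  have P_near := modelDist_atLevel_add_exp_neg_le x y z hT
  have Q_near := modelDist_atLevel_add_exp_le x y w hT
  set P := atLevel x (y + Real.exp (-z)) (z + T) with hP
  set Q := atLevel (x + Real.exp (w + T)) y w with hQ
  constructor
  · have hup := le_upJoin_of_le_abs (p := P) (q := Q) (h := w + T) (by simp [hP, hQ])
    have hdown := downJoin_le_of_le_abs (p := P) (q := Q) (h := z) (by simp [hP, hQ])
    rw [modelDist, hP, hQ, level_atLevel, level_atLevel, ← hP, ← hQ,
      abs_of_nonpos (by linarith : z + T - w ≤ 0)]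
    linarith
  · have axis := modelDist_atLevel_le x y z (w + T)
    rw [abs_of_nonpos (by linarith)] at axis
    rw [modelDist_comm] at Q_near
    linarith [modelDist_triangle P (atLevel x y z) Q,
      modelDist_triangle (atLevel x y z) (atLevel x y (w + T)) Q]

namespace SharpTurn

variable {K e T x y s : ℝ} {φ : ℝ³ → ℝ³}

theorem error_ge (h : SharpTurn K e T φ x y s) : 100 ≤ e := by linarith [h.one_le, h.error]

theorem vertical (h : SharpTurn K e T φ x y s) (x y : ℝ) {t t' : ℝ} (ht : |t - t'| ≤ 16 * T)
    (he : 64 * e ≤ T) :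
    modelDist (φ (atLevel x y t)) (φ (atLevel x y t')) ≤ |t - t'| + 2 * e := by
  have hd := modelDist_atLevel_le x y t t'
  linarith [(abs_le.1 (h.isometric _ _ (by linarith [h.error_ge]))).2, h.error_ge]

theorem abs_level_sub_le (h : SharpTurn K e T φ x y s) {t : ℝ} (ht : |t - s| ≤ 16 * T)
    (he : 64 * e ≤ T) :
    |level (φ (atLevel x y t)) - (level (φ (atLevel x y s)) - |t - s|)| ≤ 3 * e := by
  have lipschitz := fun (t t' : ℝ) (ht : |t - t'| ≤ 16 * T) =>
    abs_le.1 ((abs_level_sub_le_modelDist _ _).trans (h.vertical x y ht he))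
  have lower := (lipschitz t s ht).1
  rcases le_total t s with hts | hts
  · rw [abs_of_nonpos (by linarith : t - s ≤ 0)] at ht lower ⊢
    have := (lipschitz t (s - 16 * T) (by rw [abs_of_nonneg] <;> linarith)).2
    rw [abs_of_nonneg (by linarith)] at this
    exact abs_le.2 ⟨by linarith [h.error_ge], by linarith [h.below]⟩
  · rw [abs_of_nonneg (by linarith : 0 ≤ t - s)] at ht lower ⊢
    have := (lipschitz t (s + 16 * T) (by rw [abs_of_nonpos] <;> linarith)).2
    rw [abs_of_nonpos (by linarith)] at this
    exact abs_le.2 ⟨by linarith [h.error_ge], by linarith [h.above]⟩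

theorem stretched_below (h : SharpTurn K e T φ x y s) (he : 64 * e ≤ T) :
    MaximallyStretched K 1 (2 * e) T φ x y (s - 8 * T) where
  modelQIE := h.modelQIE.mono le_rfl (by linarith [h.error_ge])
  error := by linarith [h.error, h.error_ge]
  one_le := le_rfl
  le := h.one_le
  scale_pos := h.scale_pos
  vertical x y t t' ht := by rw [one_mul]; exact h.vertical x y ht he
  stretch := by
    rw [sub_add_cancel, show s - 8 * T - 8 * T = s - 16 * T by ring]
    linarith [h.below, h.error_ge]

theorem stretched_above (h : SharpTurn K e T φ x y s) (he : 64 * e ≤ T) :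
    MaximallyStretched K 1 (2 * e) T (solFlip ∘ φ) x y (s + 8 * T) where
  modelQIE := h.modelQIE.flip_comp.mono le_rfl (by linarith [h.error_ge])
  error := by linarith [h.error, h.error_ge]
  one_le := le_rfl
  le := h.one_le
  scale_pos := h.scale_pos
  vertical x y t t' ht := by
    simpa only [Function.comp, modelDist_solFlip, one_mul] using h.vertical x y ht he
  stretch := by
    rw [add_sub_cancel_right, show s + 8 * T + 8 * T = s + 16 * T by ring]
    simp only [Function.comp, level_solFlip]
    linarith [h.above, h.error_ge]

theorem upJoin_apex_le (h : SharpTurn K e T φ x y s) (he : 64 * e ≤ T) {p : ℝ³} {t : ℝ}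
    (ht : |t - s| ≤ 9 * T) (hts : 8 * T ≤ |t - s|) (hp : modelDist p (atLevel x y t) ≤ T + 8)
    (hlevel : level (φ p) ≤ level (φ (atLevel x y s)) - 6 * T) :
    upJoin (φ p) (φ (atLevel x y s)) ≤ level (φ (atLevel x y s)) + T / 4 := by
  have he₀ := h.error_ge
  have image := (abs_le.1 (h.isometric _ _ (hp.trans (by linarith)))).2
  have axis := h.vertical x y (ht.trans (by linarith)) he
  have height := (abs_le.1 (h.abs_level_sub_le (ht.trans (by linarith)) he)).2
  refine (upJoin_le_max _ (φ (atLevel x y t)) _).trans (le_sub_iff_add_le.1 (max_le ?_ ?_))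
  · linarith [two_upJoin_le (φ p) (φ (atLevel x y t))]
  · linarith [two_upJoin_le (φ (atLevel x y t)) (φ (atLevel x y s))]

end SharpTurn

-- The points `P` and `Q` lie at distance `T` from the two branches of the line, displaced in the
-- directions transverse to the quadrilaterals on the branches. Their distance is at least `19 * T`,
-- but the images of the branches fellow travel, and so `φ P` and `φ Q` are closer to each other.
theorem not_sharpTurn {K : ℝ} (hK : 1 ≤ K) :
    ∃ ε > 0, ∀ {φ : ℝ³ → ℝ³} {e T x y s : ℝ}, e ≤ ε * T → ¬ SharpTurn K e T φ x y s := by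
  obtain ⟨ε, hε, image⟩ := exists_quadrilateral_image (δ := 1 / 32) hK (by norm_num)
  refine ⟨min (ε / 2) (1 / 64), by positivity, fun {φ e T x y s} he h => ?_⟩
  have hT := h.scale_pos
  have he₀ := h.error_ge
  have heε : 2 * e ≤ ε * T := by
    linarith [mul_le_mul_of_nonneg_right (min_le_left (ε / 2) (1 / 64)) hT.le]
  have heT : 64 * e ≤ T := by
    linarith [mul_le_mul_of_nonneg_right (min_le_right (ε / 2) (1 / 64)) hT.le]
  have below_level := h.abs_level_sub_le (t := s - 8 * T)
  have above_level := h.abs_level_sub_le (t := s + 8 * T)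
  rw [sub_sub_cancel_left, abs_neg, abs_of_nonneg (by positivity)] at below_level
  rw [add_sub_cancel_left, abs_of_nonneg (by positivity)] at above_level
  obtain ⟨below_level, below_level'⟩ := abs_le.1 (below_level (by linarith) heT)
  obtain ⟨above_level, above_level'⟩ := abs_le.1 (above_level (by linarith) heT)
  obtain ⟨-, -, P_level, P_yJoin⟩ := image (h.stretched_below heT) heε
  obtain ⟨Q_level, Q_yJoin, -, -⟩ := image (h.stretched_above heT) heε
  simp only [Function.comp, level_solFlip, xJoin_solFlip, solFlip_fst, add_sub_cancel_right,
    sub_add_cancel] at P_level P_yJoin Q_level Q_yJoin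
  rw [abs_le] at P_level P_yJoin Q_level Q_yJoin
  have P_near := modelDist_atLevel_add_exp_neg_le x y (s - 8 * T) hT.le
  have Q_near := modelDist_atLevel_add_exp_le x y (s + 8 * T) hT.le
  set P := atLevel x (y + Real.exp (-(s - 8 * T))) (s - 8 * T + T)
  set Q := atLevel (x + Real.exp (s + 8 * T + T)) y (s + 8 * T)
  have P_apex := h.upJoin_apex_le heT (t := s - 8 * T) (p := P)
  have Q_apex := h.upJoin_apex_le heT (t := s + 8 * T + T) (p := Q)
  rw [sub_sub_cancel_left, abs_neg, abs_of_nonneg (by positivity)] at P_apex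
  rw [show s + 8 * T + T - s = 9 * T by ring, abs_of_nonneg (by positivity), upJoin_comm] at Q_apex
  have P_apex := P_apex (by linarith) le_rfl P_near (by linarith)
  have Q_apex := Q_apex le_rfl (by linarith) Q_near (by linarith)
  have image_upJoin := upJoin_le_max (φ P) (φ (atLevel x y s)) (φ Q)
  have image_downJoin := min_le_downJoin_yJoin (φ (atLevel x y s)).2.1 (φ P) (φ Q)
  have := max_le P_apex Q_apex
  have : level (φ (atLevel x y s)) - 9 * T - T / 4 ≤
      min (yJoin (φ (atLevel x y s)).2.1 (φ P)) (yJoin (φ (atLevel x y s)).2.1 (φ Q)) :=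
    le_min (by linarith) (by linarith)
  have close : modelDist (φ P) (φ Q) ≤ 18 * T + T / 2 := by
    rw [modelDist]
    linarith [le_abs_self (level (φ P) - level (φ Q))]
  obtain ⟨far, bounded⟩ := modelDist_transverse_mem_Icc x y (z := s - 8 * T) (w := s + 8 * T) hT.le
    (by linarith)
  linarith [(abs_le.1 (h.isometric P Q (by linarith))).1]

namespace ModelQIE

variable {K C D : ℝ} {φ ψ : ℝ³ → ℝ³}

theorem coarse_inverse (hφ : ModelQIE K C φ) (hK : 1 ≤ K)
    (hψ : ∀ q, modelDist (φ (ψ q)) q ≤ D) : ModelQIE K (K * (2 * D + 8) + C + 2 * D + 8) ψ := by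
  intro p q
  have hK₀ : 0 ≤ K := zero_le_one.trans hK
  have hD : 0 ≤ D := (modelDist_nonneg _ _).trans (hψ p)
  have lower : modelDist p q ≤ modelDist (φ (ψ p)) (φ (ψ q)) + (2 * D + 8) := by
    linarith [hψ p, hψ q, modelDist_triangle p (φ (ψ p)) q, modelDist_comm p (φ (ψ p)),
      modelDist_triangle (φ (ψ p)) (φ (ψ q)) q]
  have upper : modelDist (φ (ψ p)) (φ (ψ q)) ≤ modelDist p q + (2 * D + 8) := by
    linarith [hψ p, hψ q, modelDist_triangle (φ (ψ p)) p (φ (ψ q)),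
      modelDist_triangle p q (φ (ψ q)), modelDist_comm q (φ (ψ q))]
  have hKD : 0 ≤ K * (2 * D + 8) := by positivity
  exact ⟨by linarith [(hφ (ψ p) (ψ q)).2, mul_le_mul_of_nonneg_left upper hK₀],
    by linarith [(hφ (ψ p) (ψ q)).1]⟩

theorem exists_near_isometry (hφ : ModelQIE K C φ) (hK : 1 ≤ K) (hC : 0 ≤ C)
    (hψ : ∀ q, modelDist (φ (ψ q)) q ≤ D) {η : ℝ} (hη : 0 < η) :
    ∃ C', 0 ≤ C' ∧ ModelQIE (1 + η) C' φ := by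
  have hK₀ : 0 ≤ K := zero_le_one.trans hK
  have hD : 0 ≤ D := (modelDist_nonneg _ _).trans (hψ 0)
  obtain ⟨A, hA, upper⟩ := hφ.exists_modelDist_le hK hC hη
  obtain ⟨B, hB, lower⟩ :=
    (hφ.coarse_inverse hK hψ).exists_modelDist_le hK (by positivity) hη
  have hKD : 0 ≤ K * D := by positivity
  have left_inverse : ∀ p, modelDist (ψ (φ p)) p ≤ K * D + C := fun p => by
    linarith [(hφ (ψ (φ p)) p).2, mul_le_mul_of_nonneg_left (hψ (φ p)) hK₀]
  refine ⟨A + B + 2 * (K * D + C) + 8, by positivity, fun p q =>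
    ⟨by linarith [upper p q], ?_⟩⟩
  linarith [lower (φ p) (φ q), left_inverse p, left_inverse q, modelDist_comm p (ψ (φ p)),
    modelDist_triangle p (ψ (φ p)) q, modelDist_triangle (ψ (φ p)) (ψ (φ q)) q]

theorem abs_modelDist_sub_le {η r : ℝ} (hφ : ModelQIE (1 + η) C φ) (hη : 0 ≤ η) {p q : ℝ³}
    (hpq : modelDist p q ≤ r) : |modelDist (φ p) (φ q) - modelDist p q| ≤ η * r + C := by
  obtain ⟨upper, lower⟩ := hφ p q
  have hr := mul_le_mul_of_nonneg_left hpq hη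
  refine abs_le.2 ⟨?_, by linarith⟩
  by_contra! h
  have hC : 0 ≤ C := by
    have := (hφ p p).1
    have := (hφ p p).2
    nlinarith [modelDist_nonneg p p, modelDist_nonneg (φ p) (φ p)]
  have hηr : 0 ≤ η * r := mul_nonneg hη ((modelDist_nonneg p q).trans hpq)
  linarith [mul_le_mul_of_nonneg_left (by linarith : modelDist (φ p) (φ q) ≤ r) hη]

end ModelQIE

theorem exists_turn_point {U : ℝ → ℝ} {s t w₁ w₂ F R : ℝ} (hsw : s ≤ w₁) (hw : w₁ ≤ w₂)
    (hwt : w₂ ≤ t) (hF : 0 ≤ F) (hR : 0 ≤ R) (hst : 10 * R + 40 * F ≤ t - s)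
    (hU : ∀ a b, s ≤ a → a ≤ b → b ≤ t → |U a - U b| ≤ b - a + F)
    (hsmall : |U s - U t| < (t - s) / 2)
    (hlong : t - s - F + |U s - U t| ≤ 2 * (U w₁ - U w₂)) :
    ∃ w, (R - 4 * F ≤ U w - U (w - R) ∧ R - 4 * F ≤ U w - U (w + R)) ∨
      (R - 4 * F ≤ U (w - R) - U w ∧ R - 4 * F ≤ U (w + R) - U w) := by
  have first := abs_le.1 (hU s w₁ le_rfl hsw (hw.trans hwt))
  have middle := abs_le.1 (hU w₁ w₂ hsw hw hwt)
  have last := abs_le.1 (hU w₂ t (hsw.trans hw) hwt le_rfl)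
  have hle := le_abs_self (U s - U t)
  have hneg := neg_le_abs (U s - U t)
  have := abs_lt.1 hsmall
  rcases le_total (U t - U w₂) (U w₁ - U s) with h | h
  · refine ⟨w₁, Or.inl ⟨?_, ?_⟩⟩
    · linarith [abs_le.1 (hU s (w₁ - R) le_rfl (by linarith) (by linarith))]
    · linarith [abs_le.1 (hU (w₁ + R) w₂ (by linarith) (by linarith) hwt)]
  · refine ⟨w₂, Or.inr ⟨?_, ?_⟩⟩
    · linarith [abs_le.1 (hU w₁ (w₂ - R) hsw (by linarith) (by linarith))]
    · linarith [abs_le.1 (hU (w₂ + R) t (by linarith) (by linarith) le_rfl)]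

theorem exists_sharpTurn {K F T x y s : ℝ} {φ : ℝ³ → ℝ³} (hφ : ModelQIE K (8 * F) φ)
    (hK : 1 ≤ K) (hKF : 100 * K ≤ 8 * F) (hFT : 8 * F ≤ T)
    (hisometric : ∀ p q, modelDist p q ≤ 200 * T → |modelDist (φ p) (φ q) - modelDist p q| ≤ F)
    {w₁ w₂ : ℝ} (hw₁ : w₁ ∈ Icc s (s + 170 * T)) (hw₂ : w₂ ∈ Icc s (s + 170 * T))
    (hlong : modelDist (φ (atLevel x y s)) (φ (atLevel x y (s + 170 * T))) +
      |level (φ (atLevel x y s)) - level (φ (atLevel x y (s + 170 * T)))| ≤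
        2 * (level (φ (atLevel x y w₁)) - level (φ (atLevel x y w₂))) + F)
    (hsmall : |level (φ (atLevel x y s)) - level (φ (atLevel x y (s + 170 * T)))| < 85 * T) :
    ∃ w, SharpTurn K (8 * F) T φ x y w ∨ SharpTurn K (8 * F) T (solFlip ∘ φ) x y w := by
  have lipschitz : ∀ a b, s ≤ a → a ≤ b → b ≤ s + 170 * T →
      |level (φ (atLevel x y a)) - level (φ (atLevel x y b))| ≤ b - a + 2 * F := by
    intro a b ha hab hb
    have hd := modelDist_atLevel_le x y a b
    rw [abs_of_nonpos (by linarith)] at hd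
    linarith [abs_level_sub_le_modelDist (φ (atLevel x y a)) (φ (atLevel x y b)),
      (abs_le.1 (hisometric (atLevel x y a) (atLevel x y b) (by linarith))).2]
  have hlong : 170 * T - 2 * F + |level (φ (atLevel x y s)) -
      level (φ (atLevel x y (s + 170 * T)))| ≤
        2 * (level (φ (atLevel x y w₁)) - level (φ (atLevel x y w₂))) := by
    have hd := modelDist_atLevel_le x y s (s + 170 * T)
    have hd' := abs_level_sub_le_modelDist (atLevel x y s) (atLevel x y (s + 170 * T))
    rw [level_atLevel, level_atLevel] at hd'
    rw [sub_add_cancel_left, abs_neg, abs_of_nonneg (by linarith)] at hd hd'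
    linarith [(abs_le.1 (hisometric _ _ (hd.trans (by linarith)))).1]
  have turn : ∃ w, (16 * T - 8 * F ≤
        level (φ (atLevel x y w)) - level (φ (atLevel x y (w - 16 * T))) ∧
      16 * T - 8 * F ≤ level (φ (atLevel x y w)) - level (φ (atLevel x y (w + 16 * T)))) ∨
      (16 * T - 8 * F ≤ level (φ (atLevel x y (w - 16 * T))) - level (φ (atLevel x y w)) ∧
      16 * T - 8 * F ≤ level (φ (atLevel x y (w + 16 * T))) - level (φ (atLevel x y w))) := by
    rw [show 8 * F = 4 * (2 * F) by ring]
    rcases le_total w₁ w₂ with hw | hw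
    · exact exists_turn_point (U := fun a => level (φ (atLevel x y a))) hw₁.1 hw hw₂.2
        (by linarith) (by linarith) (by linarith) lipschitz (by linarith) (by linarith)
    · obtain ⟨w, hw⟩ := exists_turn_point (U := fun a => -level (φ (atLevel x y a)))
        (F := 2 * F) (R := 16 * T) hw₂.1 hw hw₁.2 (by linarith) (by linarith) (by linarith)
        (fun a b ha hab hb => by rw [neg_sub_neg, abs_sub_comm]; exact lipschitz a b ha hab hb)
        (by rw [neg_sub_neg, abs_sub_comm]; linarith)
        (by rw [neg_sub_neg, abs_sub_comm]; linarith)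
      simp only [neg_sub_neg] at hw
      exact ⟨w, hw.symm⟩
  have isometric : ∀ p q, modelDist p q ≤ 40 * T →
      |modelDist (φ p) (φ q) - modelDist p q| ≤ 8 * F := fun p q hpq =>
    (hisometric p q (by linarith)).trans (by linarith)
  obtain ⟨w, ⟨below, above⟩ | ⟨below, above⟩⟩ := turn
  · exact ⟨w, Or.inl ⟨hφ, hK, hKF, by linarith, isometric, below, above⟩⟩
  · refine ⟨w, Or.inr ⟨hφ.flip_comp, hK, hKF, by linarith, fun p q hpq => ?_, ?_, ?_⟩⟩
    · simpa only [Function.comp, modelDist_solFlip] using isometric p q hpq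
    all_goals
      simp only [Function.comp, level_solFlip]
      linarith

theorem ModelQIE.exists_half_le_abs_level {K C : ℝ} {φ : ℝ³ → ℝ³} (hφ : ModelQIE K C φ)
    (hK : 1 ≤ K) (hn : ∀ η > 0, ∃ C', 0 ≤ C' ∧ ModelQIE (1 + η) C' φ) :
    ∃ T₀ > 0, ∀ x y s t, s + T₀ ≤ t →
      (t - s) / 2 ≤ |level (φ (atLevel x y s)) - level (φ (atLevel x y t))| := by
  obtain ⟨ε, hε, no_turn⟩ := not_sharpTurn hK
  set ε' := min ε 1
  have hε' : 0 < ε' := by positivity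
  obtain ⟨C', hC', hφ'⟩ := hn (ε' / 3200) (by positivity)
  obtain ⟨M, hM⟩ :=
    (hφ'.verticallyLipschitz (by positivity)).exists_modelDist_add_le (η := ε' / 3200)
      (by positivity)
  set G := 100 * K + |C| + C' + |M|
  have hG : 0 < G := by positivity
  refine ⟨170 * (16 * G / ε'), by positivity, fun x y s t hst => ?_⟩
  by_contra! hsmall
  obtain ⟨T, rfl⟩ : ∃ T, t = s + 170 * T := ⟨(t - s) / 170, by ring⟩
  have hGT : 16 * G ≤ ε' * T := by
    rw [mul_comm ε', ← div_le_iff₀ hε']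
    linarith
  have hT : 0 < T := pos_of_mul_pos_right (by linarith : 0 < ε' * T) hε'.le
  have hεT : ε' * T ≤ T := mul_le_of_le_one_left hT.le (min_le_right _ _)
  have hεT' : ε' * T ≤ ε * T := mul_le_mul_of_nonneg_right (min_le_left _ _) hT.le
  have hG_C : |C| ≤ G := by linarith [abs_nonneg M]
  have hG_M : |M| ≤ G := by linarith [abs_nonneg C]
  have hG_K : 100 * K ≤ G := by linarith [abs_nonneg C, abs_nonneg M]
  have hG_C' : C' ≤ G := by linarith [abs_nonneg C, abs_nonneg M]
  obtain ⟨w₁, hw₁, w₂, hw₂, hlong⟩ := hM x y s (s + 170 * T) (by linarith)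
  obtain ⟨w, h | h⟩ := exists_sharpTurn (F := ε' * T / 8) (T := T) (x := x) (y := y) (s := s)
    (hφ.mono le_rfl (by linarith [le_abs_self C])) hK (by linarith) (by linarith)
    (fun p q hpq => (hφ'.abs_modelDist_sub_le (by positivity) hpq).trans (by linarith))
    hw₁ hw₂ (by linarith [le_abs_self M]) (by linarith)
  all_goals exact no_turn (by linarith) h

/-- `φ` is coarsely increasing along vertical lines, at definite speed: the constant `1 / 2` stands
for any positive speed below `1`. -/
def Ascending (A : ℝ) (φ : ℝ³ → ℝ³) : Prop :=
  ∀ x y s t, s ≤ t → (t - s) / 2 - A ≤ level (φ (atLevel x y t)) - level (φ (atLevel x y s))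

theorem VerticallyLipschitz.ascending {a b T : ℝ} {φ : ℝ³ → ℝ³} (hv : VerticallyLipschitz a b φ)
    (hT : 0 < T)
    (h : ∀ x y s, T / 2 ≤ level (φ (atLevel x y (s + T))) - level (φ (atLevel x y s))) :
    Ascending (a * T + b + T) φ := by
  have steps : ∀ (n : ℕ) x y s,
      n * T / 2 ≤ level (φ (atLevel x y (s + n * T))) - level (φ (atLevel x y s)) := by
    intro n x y s
    induction n with
    | zero => simp
    | succ n ih =>
      have := h x y (s + n * T)
      rw [add_assoc, ← add_one_mul] at this
      push_cast
      linarith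
  intro x y s t hst
  set n := ⌊(t - s) / T⌋₊
  have le_sub : n * T ≤ t - s :=
    (le_div_iff₀ hT).1 (Nat.floor_le (div_nonneg (by linarith) hT.le))
  have sub_lt : t - s < (n + 1) * T := (div_lt_iff₀ hT).1 (Nat.lt_floor_add_one _)
  have rest := (abs_le.1 (hv.abs_level_sub_le x y t (s + n * T))).1
  rw [abs_of_nonneg (by linarith)] at rest
  linarith [steps n x y s,
    mul_le_mul_of_nonneg_left (by linarith : t - (s + n * T) ≤ T) hv.factor_nonneg]

theorem forall_real_of_steps {P : ℝ → Prop} (h : ∀ s t, |s - t| ≤ 1 → P s → P t) {s : ℝ}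
    (hs : P s) (t : ℝ) : P t := by
  have locally_constant : IsLocallyConstant P := (IsLocallyConstant.iff_eventually_eq P).2
    fun a => by
      filter_upwards [Metric.ball_mem_nhds a one_pos] with b hb
      have hba : |b - a| ≤ 1 := (mem_ball_iff_norm.1 hb).le
      exact propext ⟨h b a hba, h a b (abs_sub_comm a b ▸ hba)⟩
  exact locally_constant.apply_eq_of_preconnectedSpace s t ▸ hs

-- Vertical lines come arbitrarily close to each other upwards if they differ in `x` only, and
-- downwards if they differ in `y` only.
theorem forall_atLevel_of_steps {P : ℝ → ℝ → ℝ → Prop} {T : ℝ} (hT : 0 ≤ T)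
    (h : ∀ x y s x' y' s', modelDist (atLevel x y s) (atLevel x' y' s') ≤ 9 →
      modelDist (atLevel x y (s + T)) (atLevel x' y' (s' + T)) ≤ 9 → P x y s → P x' y' s')
    {x y s : ℝ} (hP : P x y s) (x' y' s' : ℝ) : P x' y' s' := by
  have vertical : ∀ {x y s}, P x y s → ∀ t, P x y t := fun {x y s} hP =>
    forall_real_of_steps (fun a b hab => h x y a x y b
      ((modelDist_atLevel_le ..).trans (by linarith))
      ((modelDist_atLevel_le ..).trans (by rw [add_sub_add_right_eq_sub]; linarith))) hP
  have exp_nonneg : ∀ x a : ℝ, |x - x| ≤ Real.exp a := fun x a => by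
    simpa using (Real.exp_pos a).le
  have hx : P x' y s := by
    set u := Real.log (|x - x'| + 1)
    have hu : |x - x'| ≤ Real.exp u := by rw [Real.exp_log (by positivity)]; linarith
    have near : ∀ t ≥ u, modelDist (atLevel x y t) (atLevel x' y t) ≤ 9 := fun t ht =>
      (modelDist_le_of_near (level_atLevel ..) (level_atLevel ..)
        (hu.trans (Real.exp_le_exp.2 ht)) (exp_nonneg y _)).trans (by norm_num)
    exact vertical (h x y u x' y u (near u le_rfl) (near _ (by linarith)) (vertical hP u)) s
  set u := -Real.log (|y - y'| + 1) - T with hu_def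
  have hu : |y - y'| ≤ Real.exp (-(u + T)) := by
    rw [hu_def, sub_add_cancel, neg_neg, Real.exp_log (by positivity)]
    linarith
  have near : ∀ t ≤ u + T, modelDist (atLevel x' y t) (atLevel x' y' t) ≤ 9 := fun t ht =>
    (modelDist_le_of_near (level_atLevel ..) (level_atLevel ..) (exp_nonneg x' _)
      (hu.trans (Real.exp_le_exp.2 (by linarith)))).trans (by norm_num)
  exact vertical (h x' y u x' y' u (near u (by linarith)) (near _ le_rfl) (vertical hx u)) s'

theorem ModelQIE.exists_ascending {K C : ℝ} {φ : ℝ³ → ℝ³} (hφ : ModelQIE K C φ)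
    (hK : 1 ≤ K) (hC : 0 ≤ C) {T₀ : ℝ} (hT₀ : 0 < T₀) (hhalf : ∀ x y s t, s + T₀ ≤ t →
      (t - s) / 2 ≤ |level (φ (atLevel x y s)) - level (φ (atLevel x y t))|) :
    ∃ A, Ascending A φ ∨ Ascending A (solFlip ∘ φ) := by
  have hv := hφ.verticallyLipschitz (zero_le_one.trans hK)
  set T := T₀ + 2 * (9 * K + C)
  have hT : 0 < T := by linarith
  have big : ∀ x y s, T / 2 ≤
      |level (φ (atLevel x y (s + T))) - level (φ (atLevel x y s))| := by
    intro x y s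
    have := hhalf x y s (s + T) (by linarith)
    rwa [add_sub_cancel_left, abs_sub_comm] at this
  have near : ∀ p q, modelDist p q ≤ 9 → |level (φ p) - level (φ q)| ≤ 9 * K + C := by
    intro p q hpq
    linarith [abs_level_sub_le_modelDist (φ p) (φ q), (hφ p q).1,
      mul_le_mul_of_nonneg_left hpq (zero_le_one.trans hK)]
  have step : ∀ x y s x' y' s', modelDist (atLevel x y s) (atLevel x' y' s') ≤ 9 →
      modelDist (atLevel x y (s + T)) (atLevel x' y' (s' + T)) ≤ 9 →
      0 < level (φ (atLevel x y (s + T))) - level (φ (atLevel x y s)) →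
      0 < level (φ (atLevel x' y' (s' + T))) - level (φ (atLevel x' y' s')) := by
    intro x y s x' y' s' h h' hpos
    have := big x y s
    have := big x' y' s'
    rw [abs_of_pos hpos] at *
    by_contra! hneg
    rw [abs_of_nonpos hneg] at *
    linarith [(abs_le.1 (near _ _ h)).1, (abs_le.1 (near _ _ h')).2]
  refine ⟨K * T + (8 * K + C) + T, ?_⟩
  by_cases h₀ : 0 < level (φ (atLevel 0 0 (0 + T))) - level (φ (atLevel 0 0 0))
  · refine Or.inl (hv.ascending hT fun x y s => ?_)
    have := big x y s
    rwa [abs_of_pos (forall_atLevel_of_steps hT.le step h₀ x y s)] at this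
  · refine Or.inr (hv.flip_comp.ascending hT fun x y s => ?_)
    have := big x y s
    rw [abs_of_nonpos
      (not_lt.1 fun hpos => h₀ (forall_atLevel_of_steps hT.le step hpos 0 0 0))] at this
    simp only [Function.comp, level_solFlip]
    linarith

/-! ### Boundary maps -/

theorem exists_limit_atBot {X b : ℝ → ℝ} (hX : ∀ s t, s ≤ t → |X t - X s| ≤ b t)
    (hb : Filter.Tendsto b Filter.atBot (nhds 0)) : ∃ l, ∀ t, |X t - l| ≤ b t := by
  obtain ⟨l, hl⟩ := cauchySeq_tendsto_of_complete
    (cauchySeq_of_le_tendsto_0' (β := ℝᵒᵈ) (s := X) b (fun t s hst => hX s t hst) hb)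
  refine ⟨l, fun t => le_of_tendsto (hl.const_sub (X t)).abs ?_⟩
  filter_upwards [Filter.eventually_ge_atTop (OrderDual.toDual t)] with s hs
  exact hX s t hs

theorem abs_sub_le_two_mul_of_steps {X E : ℝ → ℝ} {r : ℝ} (hr : 0 < r)
    (hX : ∀ s t, s ≤ t → t - s ≤ r → |X t - X s| ≤ E t) (hE : ∀ t, 2 * E (t - r) ≤ E t)
    {s t : ℝ} (hst : s ≤ t) : |X t - X s| ≤ 2 * E t := by
  have E_nonneg : ∀ t, 0 ≤ E t := fun t =>
    (abs_nonneg _).trans (hX t t le_rfl (by rw [sub_self]; exact hr.le))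
  have steps : ∀ (n : ℕ) s t, s ≤ t → t - s ≤ n * r → |X t - X s| ≤ 2 * E t := by
    intro n
    induction n with
    | zero =>
      intro s t hst h
      obtain rfl : s = t := hst.antisymm (by simpa using h)
      simpa using E_nonneg s
    | succ n ih =>
      intro s t hst h
      push_cast at h
      rcases le_total (t - s) r with hshort | hlong
      · linarith [hX s t hst hshort, E_nonneg t]
      · linarith [ih s (t - r) (by linarith) (by linarith), hE t,
          abs_sub_le (X t) (X (t - r)) (X s), hX (t - r) t (by linarith) (by linarith)]
  exact steps ⌈(t - s) / r⌉₊ s t hst ((div_le_iff₀ hr).1 (Nat.le_ceil _))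

/-- `p` lies within bounded distance of the vertical line over `(a, b)`. -/
structure NearVertical (M a b : ℝ) (p : ℝ³) : Prop where
  fst : |p.1 - a| ≤ M * Real.exp (level p)
  snd : |p.2.1 - b| ≤ M * Real.exp (-level p)

namespace NearVertical

variable {M a b : ℝ} {p q : ℝ³}

theorem flip (h : NearVertical M a b p) : NearVertical M b a (solFlip p) :=
  ⟨by simpa using h.snd, by simpa using h.fst⟩

theorem bound_nonneg (h : NearVertical M a b p) : 0 ≤ M :=
  nonneg_of_mul_nonneg_left ((abs_nonneg _).trans h.fst) (Real.exp_pos _)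

theorem of_atLevel {t : ℝ} (hM : 0 ≤ M) : NearVertical M a b (atLevel a b t) :=
  ⟨by simpa using mul_nonneg hM (Real.exp_pos t).le,
    by simpa using mul_nonneg hM (Real.exp_pos (-t)).le⟩

theorem upJoin_le {a' b' c v : ℝ} (hp : NearVertical M a b p) (hq : NearVertical M a' b' q)
    (hpv : level p ≤ v + c) (hqv : level q ≤ v + c) (hc : 0 ≤ c) (ha : |a - a'| ≤ Real.exp v) :
    upJoin p q ≤ v + c + Real.log (2 * M + 1) + 2 := by
  have hM := hp.bound_nonneg
  have hlog : 0 ≤ Real.log (2 * M + 1) := Real.log_nonneg (by linarith)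
  refine upJoin_le_of_abs_le (by linarith) (by linarith) ?_
  rw [Real.exp_add _ (Real.log _), Real.exp_log (by positivity)]
  have hp₁ := hp.fst.trans (mul_le_mul_of_nonneg_left (Real.exp_le_exp.2 hpv) hM)
  have hq₁ := hq.fst.trans (mul_le_mul_of_nonneg_left (Real.exp_le_exp.2 hqv) hM)
  rw [abs_sub_comm] at hq₁
  linarith [abs_sub_le p.1 a q.1, abs_sub_le a a' q.1,
    Real.exp_le_exp.2 (by linarith : v ≤ v + c)]

theorem modelDist_le {a' b' c v : ℝ} (hp : NearVertical M a b p) (hq : NearVertical M a' b' q)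
    (hpv : |level p - v| ≤ c) (hqv : |level q - v| ≤ c) (ha : |a - a'| ≤ Real.exp v)
    (hb : |b - b'| ≤ Real.exp (-v)) :
    modelDist p q ≤ 2 * (2 * c + 2 * Real.log (2 * M + 1) + 4) := by
  have hc := (abs_nonneg _).trans hpv
  have hpv := abs_le.1 hpv
  have hqv := abs_le.1 hqv
  have hu := hp.upJoin_le hq (by linarith) (by linarith) hc ha
  have hd := hp.flip.upJoin_le hq.flip (c := c) (v := -v) (by rw [level_solFlip]; linarith)
    (by rw [level_solFlip]; linarith) hc hb
  rw [upJoin_solFlip] at hd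
  rw [modelDist]
  linarith [abs_nonneg (level p - level q)]

end NearVertical

theorem abs_fst_sub_le_of_modelDist_le {p q : ℝ³} {R : ℝ} (h : modelDist p q ≤ R) :
    |p.1 - q.1| ≤ Real.exp (level p + R) := by
  have hexp := Real.exp_le_exp.2 (by linarith [upJoin_sub_level_le_modelDist p q] :
    upJoin p q ≤ level p + R)
  rw [exp_upJoin] at hexp
  linarith [Real.exp_pos (level p), Real.exp_pos (level q)]

theorem abs_sub_le_of_modelDist_le {p q : ℝ³} {a a' M R : ℝ} (h : modelDist p q ≤ R)
    (ha : |p.1 - a| ≤ M * Real.exp (level p)) (ha' : |q.1 - a'| ≤ M * Real.exp (level q)) :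
    |a - a'| ≤ (2 * M + 1) * Real.exp (level p + R) := by
  have hM : 0 ≤ M := nonneg_of_mul_nonneg_left ((abs_nonneg _).trans ha) (Real.exp_pos _)
  have hlevel := abs_le.1 ((abs_level_sub_le_modelDist p q).trans h)
  have hp := mul_le_mul_of_nonneg_left
    (Real.exp_le_exp.2 (by linarith : level p ≤ level p + R)) hM
  have hq := mul_le_mul_of_nonneg_left
    (Real.exp_le_exp.2 (by linarith : level q ≤ level p + R)) hM
  rw [abs_sub_comm] at ha
  linarith [abs_sub_le a p.1 a', abs_sub_le p.1 q.1 a', abs_fst_sub_le_of_modelDist_le h]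

namespace Ascending

variable {A : ℝ} {φ : ℝ³ → ℝ³}

theorem conj_flip (h : Ascending A φ) : Ascending A (solFlip ∘ φ ∘ solFlip) :=
  fun x y s t hst => by
    have := h y x (-t) (-s) (by linarith)
    simp only [Function.comp, solFlip_atLevel, level_solFlip]
    linarith

theorem tendsto_level_atBot (h : Ascending A φ) (x y : ℝ) :
    Filter.Tendsto (fun t => level (φ (atLevel x y t))) Filter.atBot Filter.atBot := by
  refine Filter.tendsto_atBot_mono' _ ?_ (Filter.tendsto_atBot_add_const_right _
    (level (φ (atLevel x y 0)) + A) (Filter.tendsto_id.atBot_div_const two_pos))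
  filter_upwards [Filter.eventually_le_atBot 0] with t ht
  have := h x y t 0 ht
  simp only [id]
  linarith

theorem tendsto_level_atTop (h : Ascending A φ) (x y : ℝ) :
    Filter.Tendsto (fun t => level (φ (atLevel x y t))) Filter.atTop Filter.atTop := by
  have := Filter.tendsto_neg_atBot_atTop.comp
    ((h.conj_flip.tendsto_level_atBot y x).comp Filter.tendsto_neg_atTop_atBot)
  simpa [Function.comp_def] using this

theorem exists_level_near {a b : ℝ} (h : Ascending A φ) (hv : VerticallyLipschitz a b φ)
    (x y v : ℝ) : ∃ t, |level (φ (atLevel x y t)) - v| ≤ a + b := by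
  set S := {t | level (φ (atLevel x y t)) ≤ v}
  have hne : S.Nonempty := ((h.tendsto_level_atBot x y).eventually_le_atBot v).exists
  have hbdd : BddAbove S := by
    obtain ⟨T, hT⟩ :=
      Filter.eventually_atTop.1 ((h.tendsto_level_atTop x y).eventually_gt_atTop v)
    exact ⟨T, fun t ht => le_of_not_ge fun hTt => (hT t hTt).not_ge ht⟩
  obtain ⟨s, hs : level (φ (atLevel x y s)) ≤ v, hs'⟩ :=
    exists_lt_of_lt_csSup hne (sub_lt_self (sSup S) one_half_pos)
  have above : v < level (φ (atLevel x y (sSup S + 1 / 2))) := by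
    by_contra! hle
    linarith [le_csSup hbdd hle]
  have jump := (abs_le.1 (hv.abs_level_sub_le x y (sSup S + 1 / 2) s)).2
  have hsS : s ≤ sSup S := le_csSup hbdd hs
  rw [abs_of_nonneg (by linarith)] at jump
  have := mul_le_mul_of_nonneg_left (by linarith : sSup S + 1 / 2 - s ≤ 1) hv.factor_nonneg
  exact ⟨s, abs_le.2 ⟨by linarith, by linarith [hv.factor_nonneg, hv.error_nonneg]⟩⟩

theorem error_nonneg (h : Ascending A φ) : 0 ≤ A := by
  simpa using h 0 0 0 0 le_rfl

theorem exists_fst_limit {a b : ℝ} (h : Ascending A φ) (hv : VerticallyLipschitz a b φ) :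
    ∃ M, ∀ x y, ∃ l, ∀ t,
      |(φ (atLevel x y t)).1 - l| ≤ M * Real.exp (level (φ (atLevel x y t))) := by
  set r := 2 * (A + 1)
  have hr : 0 < r := by linarith [h.error_nonneg]
  set M := Real.exp (a * r + b)
  refine ⟨2 * M, fun x y => ?_⟩
  set U := fun t => level (φ (atLevel x y t))
  have short : ∀ s t, s ≤ t → t - s ≤ r →
      |(φ (atLevel x y t)).1 - (φ (atLevel x y s)).1| ≤ M * Real.exp (U t) := by
    intro s t hst hts
    rw [← Real.exp_add, add_comm]
    refine abs_fst_sub_le_of_modelDist_le ((hv x y t s).trans ?_)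
    rw [abs_of_nonneg (sub_nonneg.2 hst)]
    linarith [mul_le_mul_of_nonneg_left hts hv.factor_nonneg]
  have doubling : ∀ t, 2 * (M * Real.exp (U (t - r))) ≤ M * Real.exp (U t) := by
    intro t
    have hU : U (t - r) + 1 ≤ U t := by linarith [h x y (t - r) t (by linarith)]
    calc 2 * (M * Real.exp (U (t - r))) = M * (Real.exp (U (t - r)) * 2) := by ring
      _ ≤ M * (Real.exp (U (t - r)) * Real.exp 1) := by gcongr; exact two_le_exp_one
      _ ≤ M * Real.exp (U t) := by rw [← Real.exp_add]; gcongr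
  refine exists_limit_atBot (fun s t hst =>
    (abs_sub_le_two_mul_of_steps hr short doubling hst).trans_eq (mul_assoc _ _ _).symm) ?_
  simpa using
    (Real.tendsto_exp_atBot.comp (h.tendsto_level_atBot x y)).const_mul (2 * M)

variable {K C : ℝ}

theorem exists_boundary_fst (h : Ascending A φ) (hφ : ModelQIE K C φ) (hK : 0 ≤ K) :
    ∃ M, ∃ f : ℝ → ℝ, ∀ x y t,
      |(φ (atLevel x y t)).1 - f x| ≤ M * Real.exp (level (φ (atLevel x y t))) := by
  obtain ⟨M, hM⟩ := h.exists_fst_limit (hφ.verticallyLipschitz hK)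
  choose F hF using hM
  refine ⟨M, fun x => F x 0, fun x y t => ?_⟩
  suffices F x y = F x 0 by simpa only [this] using hF x y t
  have small : ∀ᶠ s in Filter.atBot, |F x y - F x 0| ≤
      (2 * M + 1) * Real.exp (level (φ (atLevel x y s)) + (K * 8 + C)) := by
    filter_upwards [Filter.eventually_le_atBot (-Real.log (|y| + 1))] with s hs
    refine abs_sub_le_of_modelDist_le ?_ (hF x y s) (hF x 0 s)
    have near : modelDist (atLevel x y s) (atLevel x 0 s) ≤ 8 := by
      refine modelDist_le_of_near (level_atLevel ..) (level_atLevel ..)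
        (by simpa using (Real.exp_pos _).le) ?_
      have : |y| + 1 ≤ Real.exp (-s) := by
        rw [← Real.log_le_iff_le_exp (by positivity)]
        linarith
      simp only [atLevel_snd, sub_zero]
      linarith
    linarith [(hφ (atLevel x y s) (atLevel x 0 s)).1, mul_le_mul_of_nonneg_left near hK]
  have limit := (Real.tendsto_exp_atBot.comp (Filter.tendsto_atBot_add_const_right _ (K * 8 + C)
    (h.tendsto_level_atBot x y))).const_mul (2 * M + 1)
  rw [mul_zero] at limit
  exact sub_eq_zero.1 (abs_nonpos_iff.1 (ge_of_tendsto limit small))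

end Ascending

theorem ModelQIE.conj_flip {K C : ℝ} {φ : ℝ³ → ℝ³} (h : ModelQIE K C φ) :
    ModelQIE K C (solFlip ∘ φ ∘ solFlip) :=
  h.comp_flip.flip_comp

/-- The image under `φ` of each vertical line, over `(x, y)` say, stays close to the vertical
line over `(f x, g y)`. -/
def HasBoundaryMaps (M : ℝ) (φ : ℝ³ → ℝ³) (f g : ℝ → ℝ) : Prop :=
  ∀ x y t, NearVertical M (f x) (g y) (φ (atLevel x y t))

theorem Ascending.exists_hasBoundaryMaps {A K C : ℝ} {φ : ℝ³ → ℝ³} (h : Ascending A φ)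
    (hφ : ModelQIE K C φ) (hK : 0 ≤ K) : ∃ M f g, HasBoundaryMaps M φ f g := by
  obtain ⟨M₁, f, hf⟩ := h.exists_boundary_fst hφ hK
  obtain ⟨M₂, g, hg⟩ := h.conj_flip.exists_boundary_fst hφ.conj_flip hK
  refine ⟨max M₁ M₂, f, g, fun x y t => ⟨(hf x y t).trans ?_, ?_⟩⟩
  · exact mul_le_mul_of_nonneg_right (le_max_left _ _) (Real.exp_pos _).le
  · have := hg y x (-t)
    simp only [Function.comp, solFlip_atLevel, neg_neg, solFlip_fst, level_solFlip] at this
    exact this.trans (mul_le_mul_of_nonneg_right (le_max_right _ _) (Real.exp_pos _).le)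

namespace HasBoundaryMaps

variable {K C A M : ℝ} {φ : ℝ³ → ℝ³} {f g : ℝ → ℝ}

theorem conj_flip (h : HasBoundaryMaps M φ f g) :
    HasBoundaryMaps M (solFlip ∘ φ ∘ solFlip) g f :=
  fun x y t => by simpa using (h y x (-t)).flip

theorem abs_sub_le (h : HasBoundaryMaps M φ f g) (hφ : ModelQIE K C φ) (hK : 0 ≤ K)
    (x y t : ℝ) : |f (x + Real.exp t) - f x| ≤
      (2 * M + 1) * Real.exp (level (φ (atLevel x y t)) + (K * 8 + C)) := by
  rw [abs_sub_comm]
  refine abs_sub_le_of_modelDist_le ?_ (h x y t).fst (h (x + Real.exp t) y t).fst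
  have near : modelDist (atLevel x y t) (atLevel (x + Real.exp t) y t) ≤ 8 :=
    modelDist_le_of_near (level_atLevel ..) (level_atLevel ..) (by simp)
      (by simpa using (Real.exp_pos _).le)
  linarith [(hφ (atLevel x y t) (atLevel (x + Real.exp t) y t)).1,
    mul_le_mul_of_nonneg_left near hK]

-- The images of the two vertical lines over `(x, y)` and `(x + exp t, y)` come close at level `v`,
-- whereas the lines themselves are far apart below level `t`.
theorem exists_level_le (h : HasBoundaryMaps M φ f g) (hφ : ModelQIE K C φ) (hA : Ascending A φ)
    (hK : 0 ≤ K) : ∃ B, ∀ x y t v, |f (x + Real.exp t) - f x| ≤ Real.exp v →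
      level (φ (atLevel x y t)) ≤ v + B := by
  have hv := hφ.verticallyLipschitz hK
  set c := K + (8 * K + C)
  set R := K * (2 * (2 * c + 2 * Real.log (2 * M + 1) + 4)) + C
  refine ⟨K * R + (8 * K + C) + c + A, fun x y t v hfv => ?_⟩
  set x' := x + Real.exp t
  obtain ⟨s, hs⟩ := hA.exists_level_near hv x y v
  obtain ⟨s', hs'⟩ := hA.exists_level_near hv x' y v
  have image_near := (h x y s).modelDist_le (h x' y s') hs hs' (by rwa [abs_sub_comm])
    (by simpa using (Real.exp_pos _).le)
  have near : modelDist (atLevel x y s) (atLevel x' y s') ≤ R :=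
    (hφ _ _).2.trans (add_le_add_left (mul_le_mul_of_nonneg_left image_near hK) C)
  have far : t ≤ upJoin (atLevel x y s) (atLevel x' y s') := le_upJoin_of_le_abs (by simp [x'])
  have ht : t - s ≤ R := by
    have := upJoin_sub_level_le_modelDist (atLevel x y s) (atLevel x' y s')
    rw [level_atLevel] at this
    linarith
  have hR : 0 ≤ R := (modelDist_nonneg _ _).trans near
  have hKR := mul_nonneg hK hR
  have hs := (abs_le.1 hs).2
  rcases le_total t s with hts | hst
  · linarith [hA x y t s hts, hv.error_nonneg]
  · have := (abs_le.1 (hv.abs_level_sub_le x y t s)).2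
    rw [abs_of_nonneg (sub_nonneg.2 hst)] at this
    linarith [mul_le_mul_of_nonneg_left ht hK, hA.error_nonneg]

theorem exists_abs_sub_mem_Icc (h : HasBoundaryMaps M φ f g) (hφ : ModelQIE K C φ)
    (hA : Ascending A φ) (hK : 0 ≤ K) : ∃ B, ∀ x y t, |f (x + Real.exp t) - f x| ∈
      Icc (Real.exp (level (φ (atLevel x y t)) - B))
        (Real.exp (level (φ (atLevel x y t)) + B)) := by
  obtain ⟨B, hB⟩ := h.exists_level_le hφ hA hK
  have hM : 0 < 2 * M + 1 := by linarith [(h 0 0 0).bound_nonneg]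
  set B' := K * 8 + C + Real.log (2 * M + 1)
  refine ⟨max B B', fun x y t => ⟨?_, (h.abs_sub_le hφ hK x y t).trans ?_⟩⟩
  · by_contra! hlt
    obtain ⟨v, hv, hv'⟩ : ∃ v, |f (x + Real.exp t) - f x| ≤ Real.exp v ∧
        v < level (φ (atLevel x y t)) - max B B' := by
      obtain ⟨c, hc, hc'⟩ := exists_between hlt
      have hc₀ := (abs_nonneg _).trans_lt hc
      exact ⟨Real.log c, by rw [Real.exp_log hc₀]; exact hc.le,
        (Real.log_lt_iff_lt_exp hc₀).2 hc'⟩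
    linarith [hB x y t v hv, le_max_left B B']
  · nth_rw 1 [← Real.exp_log hM]
    rw [← Real.exp_add, Real.exp_le_exp]
    linarith [le_max_right B B']

theorem exists_height_map (h : HasBoundaryMaps M φ f g) (hφ : ModelQIE K C φ)
    (hA : Ascending A φ) (hK : 0 ≤ K) :
    ∃ B, ∀ x y t, |level (φ (atLevel x y t)) - level (φ (atLevel 0 0 t))| ≤ B := by
  obtain ⟨B₁, h₁⟩ := h.exists_abs_sub_mem_Icc hφ hA hK
  obtain ⟨B₂, h₂⟩ := h.conj_flip.exists_abs_sub_mem_Icc hφ.conj_flip hA.conj_flip hK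
  refine ⟨2 * B₁ + 2 * B₂, fun x y t => abs_le.2 ?_⟩
  have hxy := h₁ x y t
  have hx₀ := h₁ x 0 t
  have h₀x := h₂ 0 x (-t)
  have h₀₀ := h₂ 0 0 (-t)
  simp only [Function.comp, solFlip_atLevel, level_solFlip, neg_neg] at h₀x h₀₀
  constructor
  · linarith [Real.exp_le_exp.1 (hx₀.1.trans hxy.2), Real.exp_le_exp.1 (h₀x.1.trans h₀₀.2)]
  · linarith [Real.exp_le_exp.1 (hxy.1.trans hx₀.2), Real.exp_le_exp.1 (h₀₀.1.trans h₀x.2)]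

end HasBoundaryMaps

/-! ### Boundary maps that scale are bilipschitz -/

theorem surjective_of_strictMono {f : ℝ → ℝ} {c : ℝ} (hc : 0 < c) (hf : Continuous f)
    (hm : StrictMono f) (h : ∀ s t, c * |s - t| ≤ |f s - f t|) : Function.Surjective f := by
  refine hf.surjective
    (Filter.tendsto_atTop_mono' _ ?_
      (Filter.tendsto_atTop_add_const_left _ (f 0) (Filter.tendsto_id.const_mul_atTop hc)))
    (Filter.tendsto_atBot_mono' _ ?_
      (Filter.tendsto_atBot_add_const_left _ (f 0) (Filter.tendsto_id.const_mul_atBot hc)))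
  · filter_upwards [Filter.eventually_ge_atTop 0] with t ht
    have := h t 0
    rw [sub_zero, abs_of_nonneg ht, abs_of_nonneg (sub_nonneg.2 (hm.monotone ht))] at this
    simp only [id]
    linarith
  · filter_upwards [Filter.eventually_le_atBot 0] with t ht
    have := h t 0
    rw [sub_zero, abs_of_nonpos ht, abs_of_nonpos (sub_nonpos.2 (hm.monotone ht))] at this
    simp only [id]
    linarith

theorem isBilip_of_bounds {f : ℝ → ℝ} {M : ℝ} (hM : 1 ≤ M)
    (h : ∀ s t : ℝ, (1 / M) * |s - t| ≤ |f s - f t| ∧ |f s - f t| ≤ M * |s - t|) :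
    IsBilip f := by
  refine ⟨?_, M, hM, h⟩
  have hM₀ : 0 < 1 / M := by positivity
  have continuous : Continuous f :=
    (LipschitzWith.of_dist_le_mul (K := ⟨M, by linarith⟩) fun s t => (h s t).2).continuous
  have injective : Function.Injective f := fun s t hst => by
    have := (h s t).1
    rw [hst, sub_self, abs_zero] at this
    exact sub_eq_zero.1 (abs_nonpos_iff.1 (nonpos_of_mul_nonpos_right this hM₀))
  rcases continuous.strictMono_of_inj injective with hm | hm
  · exact surjective_of_strictMono hM₀ continuous hm fun s t => (h s t).1
  · have hs := surjective_of_strictMono hM₀ continuous.neg hm.neg fun s t => by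
      rw [Pi.neg_apply, Pi.neg_apply, neg_sub_neg, abs_sub_comm (f t)]
      exact (h s t).1
    exact fun y => (hs (-y)).imp fun _ hx => neg_injective hx

/-- On pairs of points at distance `exp t`, the map `f` has displacement `exp (q t)`, up to the
factor `exp B`. -/
def ScalesBy (B : ℝ) (q f : ℝ → ℝ) : Prop :=
  ∀ x t, |f (x + Real.exp t) - f x| ∈ Icc (Real.exp (q t - B)) (Real.exp (q t + B))

theorem log_natFloor_exp_bounds {r : ℝ} (hr : 0 ≤ r) :
    Real.log ⌊Real.exp r⌋₊ ≤ r ∧ r ≤ Real.log ⌊Real.exp r⌋₊ + 1 := by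
  have one_le : (1 : ℝ) ≤ ⌊Real.exp r⌋₊ :=
    Nat.one_le_cast.2 (Nat.le_floor (by simpa using Real.one_le_exp hr))
  constructor
  · rw [Real.log_le_iff_le_exp (by linarith)]
    exact Nat.floor_le (Real.exp_pos r).le
  · rw [← Real.exp_le_exp, Real.exp_add, Real.exp_log (by linarith)]
    nlinarith [Nat.lt_floor_add_one (Real.exp r), two_le_exp_one]

namespace ScalesBy

variable {B : ℝ} {f q : ℝ → ℝ}

theorem neg (h : ScalesBy B q f) : ScalesBy B q (-f) := fun x t => by
  rw [Pi.neg_apply, Pi.neg_apply, neg_sub_neg, abs_sub_comm]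
  exact h x t

theorem error_nonneg (h : ScalesBy B q f) : 0 ≤ B := by
  linarith [Real.exp_le_exp.1 ((h 0 0).1.trans (h 0 0).2)]

theorem abs_sub_mem (h : ScalesBy B q f) {x y : ℝ} (hxy : x ≠ y) :
    |f x - f y| ∈ Icc (Real.exp (q (Real.log |x - y|) - B))
      (Real.exp (q (Real.log |x - y|) + B)) := by
  wlog hlt : y < x generalizing x y
  · rw [abs_sub_comm (f x), abs_sub_comm x]
    exact this hxy.symm (lt_of_le_of_ne (not_lt.1 hlt) hxy)
  have hpos : 0 < x - y := sub_pos.2 hlt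
  have := h y (Real.log (x - y))
  rwa [Real.exp_log hpos, add_sub_cancel, ← abs_of_pos hpos] at this

theorem continuous (h : ScalesBy B q f) (hq : Filter.Tendsto q Filter.atBot Filter.atBot) :
    Continuous f := by
  refine continuous_iff_continuousAt.2 fun x => continuousAt_iff_punctured_nhds.2 ?_
  have tendsto_abs_sub : Filter.Tendsto (fun y => |y - x|) (nhdsWithin x {x}ᶜ)
      (nhdsWithin 0 {0}ᶜ) := by
    refine tendsto_nhdsWithin_iff.2 ⟨?_, ?_⟩
    · have : Continuous fun y => |y - x| := by fun_prop
      simpa using (this.tendsto x).mono_left nhdsWithin_le_nhds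
    · filter_upwards [self_mem_nhdsWithin] with y hy
      exact abs_ne_zero.2 (sub_ne_zero.2 hy)
  have bound := Real.tendsto_exp_atBot.comp (Filter.tendsto_atBot_add_const_right _ B
    (hq.comp (Real.tendsto_log_nhdsNE_zero.comp tendsto_abs_sub)))
  refine tendsto_iff_dist_tendsto_zero.2 (squeeze_zero' (Filter.Eventually.of_forall
    fun y => dist_nonneg) ?_ bound)
  filter_upwards [self_mem_nhdsWithin] with y hy
  exact (h.abs_sub_mem hy).2

theorem injective (h : ScalesBy B q f) : Function.Injective f := by
  intro x y hxy
  by_contra hne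
  have := (h.abs_sub_mem hne).1
  rw [hxy, sub_self, abs_zero] at this
  exact this.not_gt (Real.exp_pos _)

theorem sum_mem_Icc (h : ScalesBy B q f) (hm : StrictMono f) (t : ℝ) (n : ℕ) :
    f (n * Real.exp t) - f 0 ∈ Icc (n * Real.exp (q t - B)) (n * Real.exp (q t + B)) := by
  induction n with
  | zero => simp
  | succ n ih =>
    have step := h (n * Real.exp t) t
    rw [abs_of_pos (sub_pos.2 (hm (lt_add_of_pos_right _ (Real.exp_pos t))))] at step
    push_cast
    simp only [add_one_mul]
    exact ⟨by linarith [step.1, ih.1], by linarith [step.2, ih.2]⟩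

theorem abs_sub_log_le_of_strictMono (h : ScalesBy B q f) (hm : StrictMono f) (t : ℝ) {n : ℕ}
    (hn : n ≠ 0) : |q (t + Real.log n) - q t - Real.log n| ≤ 2 * B := by
  have hn' : (0 : ℝ) < n := by positivity
  have whole := h 0 (t + Real.log n)
  have sum := h.sum_mem_Icc hm t n
  rw [abs_of_pos (sub_pos.2 (hm (lt_add_of_pos_right _ (Real.exp_pos _)))), zero_add,
    Real.exp_add t, Real.exp_log hn', mul_comm] at whole
  have mul_exp : ∀ a, (n : ℝ) * Real.exp a = Real.exp (Real.log n + a) := fun a => by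
    rw [Real.exp_add, Real.exp_log hn']
  rw [mul_exp (q t - B), mul_exp (q t + B)] at sum
  exact abs_le.2 ⟨by linarith [Real.exp_le_exp.1 (sum.1.trans whole.2)],
    by linarith [Real.exp_le_exp.1 (whole.1.trans sum.2)]⟩

-- Subdividing an interval of length `n * exp t` into `n` equal pieces shows that `q` has slope one.
theorem abs_sub_log_le (h : ScalesBy B q f) (hq : Filter.Tendsto q Filter.atBot Filter.atBot)
    (t : ℝ) {n : ℕ} (hn : n ≠ 0) : |q (t + Real.log n) - q t - Real.log n| ≤ 2 * B := by
  rcases (h.continuous hq).strictMono_of_inj h.injective with hm | hm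
  · exact h.abs_sub_log_le_of_strictMono hm t hn
  · exact h.neg.abs_sub_log_le_of_strictMono hm.neg t hn

theorem exists_abs_sub_self_le {c : ℝ} (h : ScalesBy B q f)
    (hq : Filter.Tendsto q Filter.atBot Filter.atBot)
    (hc : ∀ s t, |s - t| ≤ 1 → |q s - q t| ≤ c) : ∃ B', ∀ t, |q t - t| ≤ B' := by
  have increment : ∀ t r, 0 ≤ r → |q (t + r) - q t - r| ≤ 2 * B + 1 + c := by
    intro t r hr
    obtain ⟨log_le, le_log⟩ := log_natFloor_exp_bounds hr
    have scale := abs_le.1 (h.abs_sub_log_le hq t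
      (Nat.floor_pos.2 (Real.one_le_exp hr)).ne')
    have rest := abs_le.1 (hc (t + r) (t + Real.log ⌊Real.exp r⌋₊)
      (abs_le.2 ⟨by linarith, by linarith⟩))
    exact abs_le.2 ⟨by linarith, by linarith⟩
  refine ⟨2 * B + 1 + c + |q 0|, fun t => abs_le.2 ?_⟩
  have hle := le_abs_self (q 0)
  have hneg := neg_abs_le (q 0)
  rcases le_total 0 t with ht | ht
  · have := abs_le.1 (increment 0 t ht)
    rw [zero_add] at this
    exact ⟨by linarith, by linarith⟩
  · have := abs_le.1 (increment t (-t) (by linarith))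
    rw [add_neg_cancel] at this
    exact ⟨by linarith, by linarith⟩

theorem isBilip {B' : ℝ} (h : ScalesBy B q f) (hq : ∀ t, |q t - t| ≤ B') : IsBilip f := by
  have hB' : 0 ≤ B' := (abs_nonneg _).trans (hq 0)
  refine isBilip_of_bounds (M := Real.exp (B + B'))
    (Real.one_le_exp (add_nonneg h.error_nonneg hB')) fun s t => ?_
  rcases eq_or_ne s t with rfl | hne
  · simp
  have hpos : 0 < |s - t| := abs_pos.2 (sub_ne_zero.2 hne)
  obtain ⟨lower, upper⟩ := h.abs_sub_mem hne
  have hlog := abs_le.1 (hq (Real.log |s - t|))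
  have exp_mul : ∀ a, Real.exp a * |s - t| = Real.exp (a + Real.log |s - t|) := fun a => by
    rw [Real.exp_add, Real.exp_log hpos]
  rw [one_div, ← Real.exp_neg, exp_mul, exp_mul]
  exact ⟨(Real.exp_le_exp.2 (by linarith)).trans lower,
    upper.trans (Real.exp_le_exp.2 (by linarith))⟩

end ScalesBy

section StandardForm

variable {K C A M : ℝ} {φ : ℝ³ → ℝ³} {f g : ℝ → ℝ}

theorem HasBoundaryMaps.exists_isBilip (h : HasBoundaryMaps M φ f g) (hφ : ModelQIE K C φ)
    (hA : Ascending A φ) (hK : 0 ≤ K) :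
    IsBilip f ∧ ∃ B, ∀ x y t, |level (φ (atLevel x y t)) - t| ≤ B := by
  obtain ⟨B₁, h₁⟩ := h.exists_abs_sub_mem_Icc hφ hA hK
  obtain ⟨B₂, h₂⟩ := h.exists_height_map hφ hA hK
  set q := fun t => level (φ (atLevel 0 0 t))
  have scales : ScalesBy (B₁ + B₂) q f := by
    intro x t
    have hx := h₁ x 0 t
    have hq := abs_le.1 (h₂ x 0 t)
    exact ⟨(Real.exp_le_exp.2 (by linarith)).trans hx.1,
      hx.2.trans (Real.exp_le_exp.2 (by linarith))⟩
  obtain ⟨B₃, h₃⟩ := scales.exists_abs_sub_self_le (hA.tendsto_level_atBot 0 0)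
    (c := K * 1 + (8 * K + C)) fun s t hst =>
      ((hφ.verticallyLipschitz hK).abs_level_sub_le 0 0 s t).trans
        (add_le_add_left (mul_le_mul_of_nonneg_left hst hK) _)
  exact ⟨scales.isBilip h₃, B₂ + B₃, fun x y t =>
    (_root_.abs_sub_le _ _ _).trans (add_le_add (h₂ x y t) (h₃ t))⟩

theorem Ascending.exists_standard_form (hA : Ascending A φ) (hφ : ModelQIE K C φ) (hK : 0 ≤ K) :
    ∃ f g : ℝ → ℝ, IsBilip f ∧ IsBilip g ∧
      ∃ D, ∀ x y t, modelDist (φ (atLevel x y t)) (atLevel (f x) (g y) t) ≤ D := by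
  obtain ⟨M, f, g, h⟩ := hA.exists_hasBoundaryMaps hφ hK
  obtain ⟨hf, B, hB⟩ := h.exists_isBilip hφ hA hK
  obtain ⟨hg, -⟩ := h.conj_flip.exists_isBilip hφ.conj_flip hA.conj_flip hK
  refine ⟨f, g, hf, hg, 2 * (2 * B + 2 * Real.log (2 * M + 1) + 4), fun x y t => ?_⟩
  have hB₀ : 0 ≤ B := (abs_nonneg _).trans (hB x y t)
  exact (h x y t).modelDist_le (.of_atLevel (h x y t).bound_nonneg) (hB x y t) (by simpa using hB₀)
    (by simpa using (Real.exp_pos _).le) (by simpa using (Real.exp_pos _).le)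

theorem ModelQIE.exists_standard_form {D : ℝ} (hφ : ModelQIE K C φ) (hK : 1 ≤ K) (hC : 0 ≤ C)
    (hD : ∀ q, ∃ p, modelDist (φ p) q ≤ D) :
    ∃ f g : ℝ → ℝ, IsBilip f ∧ IsBilip g ∧ ∃ D',
      ((∀ x y z : ℝ, modelDist (φ (x, y, z)) (f x, g y, z) ≤ D') ∨
       (∀ x y z : ℝ, modelDist (φ (x, y, z)) (f y, g x, -z) ≤ D')) := by
  have hK₀ : 0 ≤ K := zero_le_one.trans hK
  choose ψ hψ using hD
  obtain ⟨T₀, hT₀, hT⟩ := hφ.exists_half_le_abs_level hK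
    fun η hη => hφ.exists_near_isometry hK hC hψ hη
  have atLevel_half : ∀ x y z : ℝ, atLevel x y (z / 2) = (x, y, z) := fun x y z => by
    simp [atLevel, mul_div_cancel₀]
  obtain ⟨A, hA | hA⟩ := hφ.exists_ascending hK hC hT₀ hT
  · obtain ⟨f, g, hf, hg, D', hD'⟩ := hA.exists_standard_form hφ hK₀
    exact ⟨f, g, hf, hg, D', Or.inl fun x y z => by
      simpa only [atLevel_half] using hD' x y (z / 2)⟩
  · obtain ⟨f, g, hf, hg, D', hD'⟩ := hA.exists_standard_form hφ.flip_comp hK₀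
    refine ⟨g, f, hg, hf, D', Or.inr fun x y z => ?_⟩
    have := hD' x y (z / 2)
    rw [atLevel_half, atLevel_half, Function.comp, ← modelDist_solFlip] at this
    simpa [solFlip] using this

end StandardForm

/-! ### Comparison of the two distances -/

section Length

open MeasureTheory

variable {γ : ℝ → ℝ³}

/-- The speed of a path in `Sol`, that is, the integrand of `solLength`. -/
def solSpeed (γ : ℝ → ℝ³) (t : ℝ) : ℝ :=
  Real.sqrt (Real.exp (-(γ t).2.2) * (deriv (fun s => (γ s).1) t) ^ 2 +
    Real.exp ((γ t).2.2) * (deriv (fun s => (γ s).2.1) t) ^ 2 +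
    (deriv (fun s => (γ s).2.2) t) ^ 2)

theorem solLength_eq (γ : ℝ → ℝ³) : solLength γ = ∫ t in (0 : ℝ)..1, solSpeed γ t := rfl

theorem solSpeed_nonneg (γ : ℝ → ℝ³) (t : ℝ) : 0 ≤ solSpeed γ t := Real.sqrt_nonneg _

theorem solLength_nonneg (γ : ℝ → ℝ³) : 0 ≤ solLength γ :=
  intervalIntegral.integral_nonneg zero_le_one fun t _ => solSpeed_nonneg γ t

theorem solSpeed_sq (γ : ℝ → ℝ³) (t : ℝ) :
    solSpeed γ t ^ 2 = Real.exp (-(γ t).2.2) * (deriv (fun s => (γ s).1) t) ^ 2 +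
      Real.exp ((γ t).2.2) * (deriv (fun s => (γ s).2.1) t) ^ 2 +
      (deriv (fun s => (γ s).2.2) t) ^ 2 :=
  Real.sq_sqrt (by positivity)

theorem exp_neg_mul_sq_le_sq_iff {d h s : ℝ} (hs : 0 ≤ s) :
    Real.exp (-h) * d ^ 2 ≤ s ^ 2 ↔ |d| ≤ Real.exp (h / 2) * s := by
  rw [← abs_of_nonneg (mul_nonneg (Real.exp_pos (h / 2)).le hs), ← sq_le_sq, mul_pow,
    ← Real.exp_nat_mul, Nat.cast_two, mul_div_cancel₀ h two_ne_zero, Real.exp_neg,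
    inv_mul_le_iff₀ (Real.exp_pos h)]

theorem abs_deriv_height_le_solSpeed (γ : ℝ → ℝ³) (t : ℝ) :
    |deriv (fun s => (γ s).2.2) t| ≤ solSpeed γ t :=
  Real.abs_le_sqrt (le_add_of_nonneg_left (by positivity))

theorem abs_deriv_fst_le_solSpeed (γ : ℝ → ℝ³) (t : ℝ) :
    |deriv (fun s => (γ s).1) t| ≤ Real.exp (level (γ t)) * solSpeed γ t := by
  refine (exp_neg_mul_sq_le_sq_iff (solSpeed_nonneg γ t)).1 ?_
  rw [solSpeed_sq, add_assoc]
  exact le_add_of_nonneg_right (by positivity)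

theorem abs_deriv_snd_le_solSpeed (γ : ℝ → ℝ³) (t : ℝ) :
    |deriv (fun s => (γ s).2.1) t| ≤ Real.exp (-level (γ t)) * solSpeed γ t := by
  rw [level, ← neg_div]
  refine (exp_neg_mul_sq_le_sq_iff (solSpeed_nonneg γ t)).1 ?_
  rw [solSpeed_sq, neg_neg, add_right_comm]
  exact le_add_of_nonneg_left (by positivity)

theorem intervalIntegrable_solSpeed {a b : ℝ} (hab : a ≤ b) (h : ContDiffOn ℝ 1 γ (Icc a b)) :
    IntervalIntegrable (solSpeed γ) volume a b := by
  rcases hab.eq_or_lt with rfl | hlt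
  · exact IntervalIntegrable.refl
  have hU := uniqueDiffOn_Icc hlt
  have x_deriv := h.fst.continuousOn_derivWithin hU le_rfl
  have y_deriv := h.snd.fst.continuousOn_derivWithin hU le_rfl
  have z_deriv := h.snd.snd.continuousOn_derivWithin hU le_rfl
  have z_cont := h.snd.snd.continuousOn
  have hc : ContinuousOn (fun t => Real.sqrt (
      Real.exp (-(γ t).2.2) * (derivWithin (fun s => (γ s).1) (Icc a b) t) ^ 2 +
      Real.exp ((γ t).2.2) * (derivWithin (fun s => (γ s).2.1) (Icc a b) t) ^ 2 +
      (derivWithin (fun s => (γ s).2.2) (Icc a b) t) ^ 2)) (Icc a b) := by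
    fun_prop
  refine (hc.intervalIntegrable_of_Icc hab).congr_uIoo fun t ht => ?_
  rw [uIoo_of_le hab] at ht
  simp only [solSpeed, derivWithin_of_mem_nhds (Icc_mem_nhds ht.1 ht.2)]

theorem abs_sub_le_integral_of_pieces {u w : ℝ → ℝ} {τ : ℕ → ℝ} {n : ℕ}
    (hτ : MonotoneOn τ (Iic n)) (hu : ∀ i < n, ContDiffOn ℝ 1 u (Icc (τ i) (τ (i + 1))))
    (hw : IntervalIntegrable w volume (τ 0) (τ n))
    (hle : ∀ t ∈ Icc (τ 0) (τ n), |deriv u t| ≤ w t) {t : ℝ} (ht : t ∈ Icc (τ 0) (τ n)) :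
    |u t - u (τ 0)| ≤ ∫ s in (τ 0)..t, w s := by
  induction n generalizing t with
  | zero =>
    obtain rfl : t = τ 0 := le_antisymm ht.2 ht.1
    simp
  | succ n ih =>
    have first_le : τ 0 ≤ τ n := hτ (Nat.zero_le _) n.le_succ (Nat.zero_le _)
    have last_le : τ n ≤ τ (n + 1) := hτ n.le_succ self_mem_Iic n.le_succ
    have integrable_of_mem : ∀ {a b}, a ∈ Icc (τ 0) (τ (n + 1)) → b ∈ Icc (τ 0) (τ (n + 1)) →
        IntervalIntegrable w volume a b := fun ha hb => hw.mono_set (by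
      rw [uIcc_of_le (first_le.trans last_le)]
      exact uIcc_subset_Icc ha hb)
    have zero_mem : τ 0 ∈ Icc (τ 0) (τ (n + 1)) := ⟨le_rfl, first_le.trans last_le⟩
    have node_mem : τ n ∈ Icc (τ 0) (τ (n + 1)) := ⟨first_le, last_le⟩
    have head : ∀ {r}, r ∈ Icc (τ 0) (τ n) → |u r - u (τ 0)| ≤ ∫ s in (τ 0)..r, w s :=
      ih (hτ.mono (Iic_subset_Iic.2 n.le_succ)) (fun i hi => hu i (hi.trans n.lt_succ_self))
        (integrable_of_mem zero_mem node_mem) fun r hr => hle r ⟨hr.1, hr.2.trans last_le⟩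
    rcases le_total t (τ n) with htn | htn
    · exact head ⟨ht.1, htn⟩
    have piece := (hu n n.lt_succ_self).mono (Icc_subset_Icc_right ht.2)
    have tail := norm_sub_le_integral_of_norm_deriv_le_of_le htn piece.continuousOn
      ((piece.differentiableOn one_ne_zero).mono Ioo_subset_Icc_self)
      (Filter.Eventually.of_forall fun s hs =>
        hle s ⟨first_le.trans hs.1.le, hs.2.le.trans ht.2⟩) (integrable_of_mem node_mem ht)
    rw [← intervalIntegral.integral_add_adjacent_intervals (integrable_of_mem zero_mem node_mem)
      (integrable_of_mem node_mem ht)]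
    linarith [abs_sub_le (u t) (u (τ n)) (u (τ 0)), head ⟨first_le, le_rfl⟩,
      (Real.norm_eq_abs _).symm.trans_le tail]

namespace PiecewiseC1

variable {E F : Type*} [NormedAddCommGroup E] [NormedSpace ℝ E] [NormedAddCommGroup F]
  [NormedSpace ℝ F]

theorem fst {β : ℝ → E × F} (h : PiecewiseC1 β) : PiecewiseC1 fun t => (β t).1 := by
  obtain ⟨n, τ, h₀, h₁, hτ, hβ⟩ := h
  exact ⟨n, τ, h₀, h₁, hτ, fun i hi => (hβ i hi).fst⟩

theorem snd {β : ℝ → E × F} (h : PiecewiseC1 β) : PiecewiseC1 fun t => (β t).2 := by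
  obtain ⟨n, τ, h₀, h₁, hτ, hβ⟩ := h
  exact ⟨n, τ, h₀, h₁, hτ, fun i hi => (hβ i hi).snd⟩

theorem abs_sub_le_integral {u w : ℝ → ℝ} (hu : PiecewiseC1 u)
    (hw : IntervalIntegrable w volume 0 1) (hle : ∀ t ∈ Icc (0 : ℝ) 1, |deriv u t| ≤ w t) {t : ℝ}
    (ht : t ∈ Icc (0 : ℝ) 1) : |u t - u 0| ≤ ∫ s in (0 : ℝ)..t, w s := by
  obtain ⟨n, τ, h₀, h₁, hτ, hu⟩ := hu
  have monotone : MonotoneOn τ (Iic n) :=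
    monotoneOn_of_le_add_one ordConnected_Iic fun i _ _ hi => hτ i hi
  have := abs_sub_le_integral_of_pieces monotone hu (by rwa [h₀, h₁]) (by rwa [h₀, h₁])
    (by rwa [h₀, h₁] : t ∈ Icc (τ 0) (τ n))
  rwa [h₀] at this

theorem intervalIntegrable_solSpeed (h : PiecewiseC1 γ) :
    IntervalIntegrable (solSpeed γ) volume 0 1 := by
  obtain ⟨n, τ, h₀, h₁, hτ, hγ⟩ := h
  rw [← h₀, ← h₁]
  exact IntervalIntegrable.trans_iterate fun i hi =>
    _root_.intervalIntegrable_solSpeed (hτ i hi) (hγ i hi)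

theorem abs_height_sub_le (h : PiecewiseC1 γ) {t : ℝ} (ht : t ∈ Icc (0 : ℝ) 1) :
    |(γ t).2.2 - (γ 0).2.2| ≤ solLength γ :=
  (h.snd.snd.abs_sub_le_integral h.intervalIntegrable_solSpeed
    (fun t _ => abs_deriv_height_le_solSpeed γ t) ht).trans
    (intervalIntegral.integral_mono_interval le_rfl ht.1 ht.2
      (Filter.Eventually.of_forall (solSpeed_nonneg γ)) h.intervalIntegrable_solSpeed)

theorem abs_sub_le_exp {u c : ℝ → ℝ} {b : ℝ} (h : PiecewiseC1 γ) (hu : PiecewiseC1 u)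
    (hle : ∀ t, |deriv u t| ≤ Real.exp (c t) * solSpeed γ t)
    (hc : ∀ t ∈ Icc (0 : ℝ) 1, c t ≤ b) : |u 0 - u 1| ≤ Real.exp (b + solLength γ) := by
  have integral_le := hu.abs_sub_le_integral (h.intervalIntegrable_solSpeed.const_mul (Real.exp b))
    (fun t ht => (hle t).trans (mul_le_mul_of_nonneg_right (Real.exp_le_exp.2 (hc t ht))
      (solSpeed_nonneg γ t))) (right_mem_Icc.2 zero_le_one)
  rw [intervalIntegral.integral_const_mul, ← solLength_eq, abs_sub_comm] at integral_le
  rw [Real.exp_add]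
  refine integral_le.trans (mul_le_mul_of_nonneg_left ?_ (Real.exp_pos b).le)
  linarith [Real.add_one_le_exp (solLength γ)]

theorem modelDist_le_solLength (h : PiecewiseC1 γ) :
    modelDist (γ 0) (γ 1) ≤ 6 * solLength γ + 8 := by
  have length_nonneg := solLength_nonneg γ
  have level_near : ∀ t ∈ Icc (0 : ℝ) 1,
      -(solLength γ / 2) ≤ level (γ t) - level (γ 0) ∧
        level (γ t) - level (γ 0) ≤ solLength γ / 2 := fun t ht => by
    have := abs_le.1 (h.abs_height_sub_le ht)
    exact ⟨by rw [level, level]; linarith, by rw [level, level]; linarith⟩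
  have ends := level_near 1 (right_mem_Icc.2 zero_le_one)
  have x_near := h.abs_sub_le_exp h.fst (abs_deriv_fst_le_solSpeed γ)
    (b := level (γ 0) + solLength γ / 2) fun t ht => by linarith [level_near t ht]
  have y_near := h.abs_sub_le_exp h.snd.fst (abs_deriv_snd_le_solSpeed γ)
    (b := -level (γ 0) + solLength γ / 2) fun t ht => by linarith [level_near t ht]
  have up := upJoin_le_of_abs_le (by linarith) (by linarith) x_near
  have down := le_downJoin_of_abs_le (p := γ 0) (q := γ 1)
    (h := -(-level (γ 0) + solLength γ / 2 + solLength γ)) (by linarith) (by linarith)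
    (by rwa [neg_neg])
  rw [modelDist]
  linarith [abs_nonneg (level (γ 0) - level (γ 1))]

end PiecewiseC1

end Length

section LegPath

open MeasureTheory

variable {p q : ℝ³} {H L m : ℝ}

/-- The function rising linearly from `0` to `1` on `[k/5, (k+1)/5]`, which parametrizes the leg
of index `k` of a five-leg path. -/
def ramp (k : ℕ) (t : ℝ) : ℝ := max 0 (min 1 (5 * t - k))

theorem ramp_of_le {k : ℕ} {t : ℝ} (h : 5 * t ≤ k) : ramp k t = 0 :=
  max_eq_left ((min_le_right _ _).trans (by linarith))

theorem ramp_of_ge {k : ℕ} {t : ℝ} (h : k + 1 ≤ 5 * t) : ramp k t = 1 := by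
  rw [ramp, min_eq_left (by linarith), max_eq_right zero_le_one]

theorem ramp_of_mem {k : ℕ} {t : ℝ} (h : k ≤ 5 * t) (h' : 5 * t ≤ k + 1) :
    ramp k t = 5 * t - k := by
  rw [ramp, min_eq_right (by linarith), max_eq_right (by linarith)]

theorem ramp_eqOn (i k : ℕ) : EqOn (ramp k)
    (fun t => if i < k then 0 else if i = k then 5 * t - k else 1)
    (Icc ((i : ℝ) / 5) (((i + 1 : ℕ) : ℝ) / 5)) := by
  rintro t ⟨ht, ht'⟩
  push_cast at ht'
  rcases lt_trichotomy i k with h | rfl | h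
  · have : (i : ℝ) + 1 ≤ k := by exact_mod_cast h
    simp only [if_pos h]
    exact ramp_of_le (by linarith)
  · simp only [lt_irrefl, if_false, if_true]
    exact ramp_of_mem (by linarith) (by linarith)
  · have : (k : ℝ) + 1 ≤ i := by exact_mod_cast h
    simp only [if_neg h.not_gt, if_neg h.ne']
    exact ramp_of_ge (by linarith)

theorem contDiffOn_ramp (i k : ℕ) :
    ContDiffOn ℝ 1 (ramp k) (Icc ((i : ℝ) / 5) (((i + 1 : ℕ) : ℝ) / 5)) := by
  refine ContDiffOn.congr ?_ (ramp_eqOn i k)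
  split_ifs <;> fun_prop

theorem hasDerivAt_ramp (i k : ℕ) {t : ℝ} (h : t ∈ Ioo ((i : ℝ) / 5) (((i + 1 : ℕ) : ℝ) / 5)) :
    HasDerivAt (ramp k) (if i = k then 5 else 0) t := by
  refine HasDerivAt.congr_of_eventuallyEq ?_
    ((ramp_eqOn i k).eventuallyEq_of_mem (Icc_mem_nhds h.1 h.2))
  rcases lt_trichotomy i k with h | rfl | h
  · simpa only [if_pos h, if_neg h.ne] using hasDerivAt_const t (0 : ℝ)
  · simpa using ((hasDerivAt_id t).const_mul (5 : ℝ)).sub_const (i : ℝ)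
  · simpa only [if_neg h.not_gt, if_neg h.ne'] using hasDerivAt_const t (1 : ℝ)

/-- A path from `p` to `q` moving in turn along the vertical, first, vertical, second and vertical
directions, with horizontal legs at the heights `H` and `L`. -/
def legPath (p q : ℝ³) (H L : ℝ) (t : ℝ) : ℝ³ :=
  (p.1 + (q.1 - p.1) * ramp 1 t, p.2.1 + (q.2.1 - p.2.1) * ramp 3 t,
    p.2.2 + (H - p.2.2) * ramp 0 t + (L - H) * ramp 2 t + (q.2.2 - L) * ramp 4 t)

theorem legPath_zero (p q : ℝ³) (H L : ℝ) : legPath p q H L 0 = p := by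
  have : ∀ k, ramp k 0 = 0 := fun k => ramp_of_le (by simp)
  simp [legPath, this]

theorem legPath_one (p q : ℝ³) (H L : ℝ) : legPath p q H L 1 = q := by
  have : ∀ k ≤ 4, ramp k 1 = 1 := fun k hk => ramp_of_ge (by
    have : (k : ℝ) ≤ 4 := by exact_mod_cast hk
    linarith)
  simp [legPath, this]

theorem piecewiseC1_legPath (p q : ℝ³) (H L : ℝ) : PiecewiseC1 (legPath p q H L) := by
  refine ⟨5, fun i => (i : ℝ) / 5, by simp, by simp, fun i _ => ?_, fun i _ => ?_⟩
  · push_cast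
    linarith
  · have hramp := contDiffOn_ramp i
    unfold legPath
    fun_prop

theorem solSpeed_legPath_le (hm : 0 ≤ m) (h₀ : |H - p.2.2| ≤ m) (h₂ : |L - H| ≤ m)
    (h₄ : |q.2.2 - L| ≤ m) (h₁ : |q.1 - p.1| ≤ Real.exp (H / 2) * m)
    (h₃ : |q.2.1 - p.2.1| ≤ Real.exp (-L / 2) * m) {i : ℕ} (hi : i < 5) {t : ℝ}
    (ht : t ∈ Ioo ((i : ℝ) / 5) (((i + 1 : ℕ) : ℝ) / 5)) :
    solSpeed (legPath p q H L) t ≤ 5 * m := by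
  have hderiv := fun k => hasDerivAt_ramp i k ht
  have hvalue := fun k => ramp_eqOn i k (Ioo_subset_Icc_self ht)
  have x_deriv : deriv (fun s => (legPath p q H L s).1) t = _ :=
    (((hderiv 1).const_mul (q.1 - p.1)).const_add p.1).deriv
  have y_deriv : deriv (fun s => (legPath p q H L s).2.1) t = _ :=
    (((hderiv 3).const_mul (q.2.1 - p.2.1)).const_add p.2.1).deriv
  have z_deriv : deriv (fun s => (legPath p q H L s).2.2) t = _ :=
    (((((hderiv 0).const_mul (H - p.2.2)).const_add p.2.2).add
      ((hderiv 2).const_mul (L - H))).add ((hderiv 4).const_mul (q.2.2 - L))).deriv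
  have sq_le : ∀ {a}, |a| ≤ m → a ^ 2 ≤ m ^ 2 := fun h => sq_le_sq' (abs_le.1 h).1 (abs_le.1 h).2
  have leg₀ := sq_le h₀
  have leg₁ := (exp_neg_mul_sq_le_sq_iff hm).2 h₁
  have leg₂ := sq_le h₂
  have leg₃ := (exp_neg_mul_sq_le_sq_iff hm).2 h₃
  have leg₄ := sq_le h₄
  rw [neg_neg] at leg₃
  refine abs_le_of_sq_le_sq (?_ : _ ≤ (5 * m) ^ 2) (by linarith) |>.trans' (le_abs_self _)
  rw [solSpeed_sq, x_deriv, y_deriv, z_deriv]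
  simp only [legPath, hvalue]
  -- On each leg exactly one of the five ramps has nonzero derivative.
  interval_cases i <;> norm_num <;> linarith

theorem exists_mem_Ioo_fifth {t : ℝ} (ht : t ∈ Ioc (0 : ℝ) 1)
    (hne : t ∉ range fun i : ℕ => (i : ℝ) / 5) :
    ∃ i : ℕ, i < 5 ∧ t ∈ Ioo ((i : ℝ) / 5) (((i + 1 : ℕ) : ℝ) / 5) := by
  have ne_five_mul : ∀ i : ℕ, (i : ℝ) ≠ 5 * t := fun i hi =>
    hne ⟨i, by simp only [hi, mul_div_cancel_left₀ t (by norm_num : (5 : ℝ) ≠ 0)]⟩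
  have floor_lt := (Nat.floor_le (by linarith [ht.1] : 0 ≤ 5 * t)).lt_of_ne (ne_five_mul _)
  have lt_floor := Nat.lt_floor_add_one (5 * t)
  refine ⟨⌊5 * t⌋₊, ?_, by linarith, by push_cast; linarith⟩
  have : (⌊5 * t⌋₊ : ℝ) < 5 := by linarith [ht.2]
  exact_mod_cast this

theorem solLength_legPath_le (hm : 0 ≤ m) (h₀ : |H - p.2.2| ≤ m) (h₂ : |L - H| ≤ m)
    (h₄ : |q.2.2 - L| ≤ m) (h₁ : |q.1 - p.1| ≤ Real.exp (H / 2) * m)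
    (h₃ : |q.2.1 - p.2.1| ≤ Real.exp (-L / 2) * m) : solLength (legPath p q H L) ≤ 5 * m := by
  have ae_le : ∀ᵐ t : ℝ, t ∈ uIoc (0 : ℝ) 1 → ‖solSpeed (legPath p q H L) t‖ ≤ 5 * m := by
    filter_upwards [(countable_range fun i : ℕ => (i : ℝ) / 5).ae_notMem volume] with t hne ht
    rw [uIoc_of_le zero_le_one] at ht
    obtain ⟨i, hi, ht⟩ := exists_mem_Ioo_fifth ht hne
    rw [Real.norm_eq_abs, abs_of_nonneg (solSpeed_nonneg _ _)]
    exact solSpeed_legPath_le hm h₀ h₂ h₄ h₁ h₃ hi ht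
  have := intervalIntegral.norm_integral_le_of_norm_le_const_ae ae_le
  rw [sub_zero, abs_one, mul_one] at this
  exact (le_abs_self _).trans this

end LegPath

section Comparison

variable {K C : ℝ} {φ : ℝ³ → ℝ³}

theorem exists_path_le (p q : ℝ³) : ∃ γ : ℝ → ℝ³,
    γ 0 = p ∧ γ 1 = q ∧ PiecewiseC1 γ ∧ solLength γ ≤ 10 * modelDist p q + 5 := by
  refine ⟨legPath p q (2 * upJoin p q) (2 * downJoin p q), legPath_zero _ _ _ _,
    legPath_one _ _ _ _, piecewiseC1_legPath _ _ _ _, ?_⟩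
  have dist_nonneg := modelDist_nonneg p q
  have up_le := upJoin_sub_level_le_modelDist p q
  have le_down := level_sub_downJoin_le_modelDist q p
  rw [modelDist_comm, downJoin_comm] at le_down
  have up_down := upJoin_sub_downJoin_le_modelDist p q
  have level_le := level_le_upJoin_left p q
  have down_le := downJoin_le_level_left p q
  have down_le' := downJoin_le_level_right p q
  have p_height : p.2.2 = 2 * level p := (mul_div_cancel₀ _ two_ne_zero).symm
  have q_height : q.2.2 = 2 * level q := (mul_div_cancel₀ _ two_ne_zero).symm
  refine (solLength_legPath_le (m := 2 * modelDist p q + 1) (by linarith) ?_ ?_ ?_ ?_ ?_).trans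
    (by linarith)
  · rw [p_height, abs_of_nonneg (by linarith)]; linarith
  · rw [abs_of_nonpos (by linarith)]; linarith
  · rw [q_height, abs_of_nonneg (by linarith)]; linarith
  · rw [mul_div_cancel_left₀ _ two_ne_zero, abs_sub_comm]
    refine le_trans ?_ (le_mul_of_one_le_right (Real.exp_pos _).le (by linarith))
    exact exp_upJoin p q ▸ le_add_of_nonneg_right (by positivity)
  · rw [neg_div, mul_div_cancel_left₀ _ two_ne_zero, abs_sub_comm]
    refine le_trans ?_ (le_mul_of_one_le_right (Real.exp_pos _).le (by linarith))
    exact exp_neg_downJoin p q ▸ le_add_of_nonneg_right (by positivity)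

theorem dSol_le_modelDist (p q : ℝ³) : dSol p q ≤ 10 * modelDist p q + 5 := by
  obtain ⟨γ, h₀, h₁, hγ, hle⟩ := exists_path_le p q
  refine le_trans (csInf_le ⟨0, ?_⟩ ⟨γ, h₀, h₁, hγ, rfl⟩) hle
  rintro _ ⟨γ', -, -, -, rfl⟩
  exact solLength_nonneg γ'

theorem modelDist_le_dSol (p q : ℝ³) : modelDist p q ≤ 6 * dSol p q + 8 := by
  suffices (modelDist p q - 8) / 6 ≤ dSol p q by linarith
  obtain ⟨γ, h₀, h₁, hγ, -⟩ := exists_path_le p q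
  refine le_csInf ⟨_, γ, h₀, h₁, hγ, rfl⟩ ?_
  rintro _ ⟨γ', rfl, rfl, hγ', rfl⟩
  linarith [hγ'.modelDist_le_solLength]

theorem IsQIE.modelQIE (hK : 1 ≤ K) (hC : 0 ≤ C) (h : IsQIE dSol dSol K C φ) :
    ModelQIE (60 * K) (K * (6 * C + 38) + 6 * C + 38) φ := by
  have hK₀ : 0 ≤ K := zero_le_one.trans hK
  intro p q
  have lower : dSol p q ≤ K * (dSol (φ p) (φ q) + C) := by
    rw [← inv_mul_le_iff₀ (by linarith), inv_eq_one_div]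
    linarith [(h p q).1]
  have upper := (h p q).2
  have hKC : 0 ≤ K * C := mul_nonneg hK₀ hC
  constructor
  · linarith [modelDist_le_dSol (φ p) (φ q), mul_le_mul_of_nonneg_left (dSol_le_modelDist p q) hK₀]
  · linarith [modelDist_le_dSol p q,
      mul_le_mul_of_nonneg_left (dSol_le_modelDist (φ p) (φ q)) hK₀]

theorem IsQI.exists_standard_form (hK : 1 ≤ K) (hC : 0 ≤ C) (h : IsQI dSol dSol K C φ) :
    ∃ f g : ℝ → ℝ, IsBilip f ∧ IsBilip g ∧ ∃ D,
      ((∀ x y z : ℝ, modelDist (φ (x, y, z)) (f x, g y, z) ≤ D) ∨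
       (∀ x y z : ℝ, modelDist (φ (x, y, z)) (f y, g x, -z) ≤ D)) := by
  have hKC : 0 ≤ K * (6 * C + 38) := by positivity
  refine (h.1.modelQIE hK hC).exists_standard_form (by linarith) (by linarith)
    (D := 6 * C + 8) fun q => (h.2 q).imp fun p hp => ?_
  linarith [modelDist_le_dSol (φ p) q]

end Comparison

/-- **Theorem (Eskin–Fisher–Whyte).** Any quasi-isometry of `Sol` is at bounded distance from a
map of the form `(x,y,z) ↦ (f x, g y, z)` or `(x,y,z) ↦ (f y, g x, -z)` with `f, g`
bilipschitz homeomorphisms of `ℝ`. -/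
theorem sol_qi_standard_form :
    ∀ (φ : ℝ × ℝ × ℝ → ℝ × ℝ × ℝ) (K C : ℝ), 1 ≤ K → 0 ≤ C → IsQI dSol dSol K C φ →
      ∃ f g : ℝ → ℝ, IsBilip f ∧ IsBilip g ∧ ∃ D : ℝ, 0 ≤ D ∧
        ((∀ x y z : ℝ, dSol (φ (x, y, z)) (f x, g y, z) ≤ D) ∨
         (∀ x y z : ℝ, dSol (φ (x, y, z)) (f y, g x, -z) ≤ D)) := by
  intro φ K C hK hC h
  obtain ⟨f, g, hf, hg, D, hD⟩ := h.exists_standard_form hK hC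
  have dSol_le : ∀ p q, modelDist p q ≤ D → dSol p q ≤ 10 * |D| + 5 := fun p q hpq =>
    (dSol_le_modelDist p q).trans (by linarith [le_abs_self D])
  exact ⟨f, g, hf, hg, 10 * |D| + 5, by positivity,
    hD.imp (fun h x y z => dSol_le _ _ (h x y z)) fun h x y z => dSol_le _ _ (h x y z)⟩

end
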